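/- arXiv:1604.08053 — 3 statements merged into one kernel-verified Lean document; each statement's English description precedes it below -/
import Mathlib

section
/- Let G be a bridgeless cubic graph and f ∈ E(G). Then for every value a with 1 ≤ a ≤ 5, the all-positive signed graph (G, 𝟙) admits a nowhere-zero 6-flow (D, φ) with φ(f) = a. -/
open Finset SimpleGraph

attribute [local instance] Classical.propDecidable

variable {V : Type}

/-- `σ` is a valid `±1` signature on the edges of `G`. -/
def IsSignature (G : SimpleGraph V) (σ : Sym2 V → ℤ) : Prop :=
  ∀ e ∈ G.edgeSet, σ e = 1 ∨ σ e = -1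

/-- The set of negative edges of the signed graph `(G, σ)`. -/
def NegEdges (G : SimpleGraph V) (σ : Sym2 V → ℤ) : Set (Sym2 V) :=
  {e | e ∈ G.edgeSet ∧ σ e = -1}

/-- A bidirected orientation of the signed graph `(G, σ)`: `τ v e = 1` means that the
half-edge of `e` at `v` points towards `v`, and `τ v e = -1` that it points away from `v`.
On a positive edge the two half-edges are directed consistently, while on a negative edge
both half-edges point outwards (extroverted) or both point inwards (introverted). -/
def IsOrientation (G : SimpleGraph V) (σ : Sym2 V → ℤ) (τ : V → Sym2 V → ℤ) : Prop :=
  (∀ v e, τ v e = 1 ∨ τ v e = -1) ∧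
  ∀ u v, G.Adj u v → τ u s(u, v) * τ v s(u, v) = - σ s(u, v)

/-- `(τ, φ)` is an integer-valued flow on the signed graph `(G, σ)`:
Kirchhoff's law holds at every vertex. -/
def IsFlow [Fintype V] (G : SimpleGraph V) (σ : Sym2 V → ℤ)
    (τ : V → Sym2 V → ℤ) (φ : Sym2 V → ℤ) : Prop :=
  IsOrientation G σ τ ∧
    ∀ v : V, (∑ w : V, if G.Adj v w then τ v s(v, w) * φ s(v, w) else 0) = 0

/-- `(τ, φ)` is a nowhere-zero `k`-flow on `(G, σ)`. -/
def IsNZFlow [Fintype V] (G : SimpleGraph V) (σ : Sym2 V → ℤ) (k : ℤ)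
    (τ : V → Sym2 V → ℤ) (φ : Sym2 V → ℤ) : Prop :=
  IsFlow G σ τ φ ∧ ∀ e ∈ G.edgeSet, 0 < |φ e| ∧ |φ e| < k

/-- A signed graph is flow-admissible if it admits a nowhere-zero `k`-flow for some `k`. -/
def FlowAdmissible [Fintype V] (G : SimpleGraph V) (σ : Sym2 V → ℤ) : Prop :=
  ∃ (k : ℤ) (τ : V → Sym2 V → ℤ) (φ : Sym2 V → ℤ), IsNZFlow G σ k τ φ

/-- The flow number `F(G, σ)`: the least `k` admitting a nowhere-zero `k`-flow. -/
noncomputable def flowNumber [Fintype V] (G : SimpleGraph V) (σ : Sym2 V → ℤ) : ℕ :=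
  sInf {k : ℕ | ∃ τ φ, IsNZFlow G σ (k : ℤ) τ φ}

/-- An edge-cut of `G`: the set of edges crossing a nontrivial vertex partition. -/
def IsEdgeCut (G : SimpleGraph V) (X : Set (Sym2 V)) : Prop :=
  ∃ S : Set V, S.Nonempty ∧ Sᶜ.Nonempty ∧
    X = {e | e ∈ G.edgeSet ∧ ∃ a ∈ S, ∃ b ∈ Sᶜ, e = s(a, b)}

/-- The all-positive signature. -/
def allPos : Sym2 V → ℤ := fun _ => 1

/-- `G` is cubic (3-regular). -/
def CubicGraph (G : SimpleGraph V) : Prop := ∀ v : V, (G.neighborSet v).ncard = 3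

/-- `G` has no bridge. -/
def Bridgeless (G : SimpleGraph V) : Prop := ∀ e ∈ G.edgeSet, ¬ G.IsBridge e

/-- A walk is directed (with respect to the orientation `τ` of `(G, σ)`) if every dart of
the walk traverses a positive edge in the direction of its orientation. -/
def IsDirectedWalk {G : SimpleGraph V} (σ : Sym2 V → ℤ) (τ : V → Sym2 V → ℤ) {u v : V}
    (p : G.Walk u v) : Prop :=
  ∀ d ∈ p.darts, σ s(d.toProd.1, d.toProd.2) = 1 ∧
    τ d.toProd.2 s(d.toProd.1, d.toProd.2) = 1

/-- `M` is a perfect matching (1-factor) of `G`. -/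
def IsPM (G : SimpleGraph V) (M : Set (Sym2 V)) : Prop :=
  M ⊆ G.edgeSet ∧ ∀ v : V, ∃! e, e ∈ M ∧ v ∈ e

/-- `c` is a proper 3-edge-coloring of `G`. -/
def IsProper3EdgeColoring (G : SimpleGraph V) (c : Sym2 V → Fin 3) : Prop :=
  ∀ e₁ ∈ G.edgeSet, ∀ e₂ ∈ G.edgeSet, e₁ ≠ e₂ → (∃ w, w ∈ e₁ ∧ w ∈ e₂) → c e₁ ≠ c e₂



namespace SixFlow

set_option linter.unusedSectionVars false

/-- Divergence (out minus in) of an edge function at a vertex. -/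
noncomputable def dv {V E : Type} [Fintype E] {A : Type} [AddCommGroup A] (s t : E → V) (g : E → A)
    (v : V) : A :=
  ∑ e, ((if s e = v then g e else 0) - (if t e = v then g e else 0))

/-- Edges crossing `S`. -/
noncomputable def cut {V E : Type} [Fintype E] (s t : E → V) (S : Finset V) : Finset E :=
  univ.filter (fun e => ¬ (s e ∈ S ↔ t e ∈ S))

section
variable {V E : Type} [Fintype V] [Fintype E] {A : Type} [AddCommGroup A] (s t : E → V)

lemma dv_add (g h : E → A) (v : V) : dv s t (fun e => g e + h e) v = dv s t g v + dv s t h v := by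
  unfold dv
  rw [← Finset.sum_add_distrib]
  refine Finset.sum_congr rfl fun e _ => ?_
  rw [show ∀ a b c d : A, a - b + (c - d) = (a + c) - (b + d) from fun a b c d => by abel]
  split_ifs <;> simp

lemma dv_fsum {ι : Type} (I : Finset ι) (g : ι → E → A) (v : V) :
    dv s t (fun e => ∑ i ∈ I, g i e) v = ∑ i ∈ I, dv s t (g i) v := by
  unfold dv
  rw [Finset.sum_comm]
  refine Finset.sum_congr rfl fun e _ => ?_
  rw [Finset.sum_sub_distrib]
  split_ifs <;> simp

lemma dv_single (e : E) (x : A) (v : V) : dv s t (fun e' => if e' = e then x else 0) v =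
    (if s e = v then x else 0) - (if t e = v then x else 0) := by
  unfold dv
  rw [Finset.sum_eq_single e]
  · simp
  · intro b _ hb; simp [hb]
  · simp

lemma dv_sum (g : E → A) (S : Finset V) : ∑ v ∈ S, dv s t g v =
    ∑ e, ((if s e ∈ S then g e else 0) - (if t e ∈ S then g e else 0)) := by
  unfold dv
  rw [Finset.sum_comm]
  refine Finset.sum_congr rfl fun e _ => ?_
  rw [Finset.sum_sub_distrib]
  simp

lemma dv_total (g : E → A) : ∑ v, dv s t g v = 0 := by
  rw [dv_sum]; simp

lemma dv_zero_of (g : E → A) (v : V) (h : ∀ e, (s e = v ∨ t e = v) → g e = 0) : dv s t g v = 0 := by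
  unfold dv
  refine Finset.sum_eq_zero fun e _ => ?_
  have := h e
  split_ifs <;> simp_all

lemma dv_congr (g g' : E → A) (v : V) (h : ∀ e, (s e = v ∨ t e = v) → g e = g' e) :
    dv s t g v = dv s t g' v := by
  unfold dv
  refine Finset.sum_congr rfl fun e _ => ?_
  have := h e
  split_ifs <;> simp_all

lemma aug (al : E → ℤ → Prop) (k : ℤ) (g : E → ℤ) (hg : ∀ e, al e (g e)) (u : V) :
    ∃ S : Finset V, u ∈ S ∧
      (∀ z ∈ S, ∃ g' : E → ℤ, (∀ e, al e (g' e)) ∧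
        ∀ v, dv s t g' v = dv s t g v + (if v = u then k else 0) - (if v = z then k else 0)) ∧
      (∀ e, s e ∈ S → t e ∉ S → ¬ al e (g e + k)) ∧
      (∀ e, t e ∈ S → s e ∉ S → ¬ al e (g e - k)) := by
  let good : Finset V → Prop := fun S => u ∈ S ∧ ∀ z ∈ S, ∃ g' : E → ℤ, (∀ e, al e (g' e)) ∧
        (∀ v, dv s t g' v = dv s t g v + (if v = u then k else 0) - (if v = z then k else 0)) ∧
        ∀ e, (s e ∉ S ∨ t e ∉ S) → g' e = g e
  have h0 : (univ.filter good).Nonempty := by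
    refine ⟨{u}, ?_⟩
    simp only [mem_filter, mem_univ, true_and]
    refine ⟨by simp, ?_⟩
    intro z hz
    rw [mem_singleton] at hz
    subst hz
    exact ⟨g, hg, by intro v; ring, fun _ _ => rfl⟩
  obtain ⟨S, hS, hmax⟩ := Finset.exists_max_image _ (fun S => S.card) h0
  simp only [mem_filter, mem_univ, true_and] at hS hmax
  have key : ∀ y z : V, ∀ e x, z ∈ S → y ∉ S → (s e ∉ S ∨ t e ∉ S) → (s e = z ∨ s e = y) →
      (t e = z ∨ t e = y) →
      (∀ v, (if s e = v then x else 0) - (if t e = v then x else 0) =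
        (if v = z then k else 0) - (if v = y then k else 0)) → ¬ al e (g e + x) := by
    intro y z e x hz hy hout hs ht hx hal
    have : good (insert y S) := by
      refine ⟨mem_insert_of_mem hS.1, ?_⟩
      intro w hw
      rw [mem_insert] at hw
      rcases hw with rfl | hw
      · obtain ⟨g', h1, h2, h3⟩ := hS.2 z hz
        refine ⟨fun e' => g' e' + if e' = e then x else 0, ?_, ?_, ?_⟩
        · intro e'
          by_cases h : e' = e
          · subst h
            simp only [if_true]
            rw [h3 _ hout]; exact hal
          · simpa [h] using h1 e'
        · intro v
          rw [dv_add, dv_single, h2, hx]; ring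
        · intro e' he'
          have hne : e' ≠ e := by
            rintro rfl
            simp only [mem_insert, not_or] at he'
            rcases hs with h | h <;> rcases ht with h' | h' <;> simp_all
          simp only [hne, if_false, add_zero]
          apply h3
          simp only [mem_insert, not_or] at he'
          tauto
      · obtain ⟨g', h1, h2, h3⟩ := hS.2 w hw
        refine ⟨g', h1, h2, ?_⟩
        intro e' he'
        apply h3
        simp only [mem_insert, not_or] at he'
        tauto
    have := hmax _ this
    rw [card_insert_of_notMem hy] at this
    omega
  refine ⟨S, hS.1, ?_, ?_, ?_⟩
  · intro z hz
    obtain ⟨g', h1, h2, h3⟩ := hS.2 z hz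
    exact ⟨g', h1, h2⟩
  · intro e h1 h2
    refine key (t e) (s e) e k h1 h2 (Or.inr h2) (Or.inl rfl) (Or.inr rfl) ?_
    intro v
    simp only [eq_comm]
  · intro e h1 h2
    rw [sub_eq_add_neg]
    refine key (s e) (t e) e (-k) h1 h2 (Or.inl h2) (Or.inr rfl) (Or.inl rfl) ?_
    intro v
    simp only [@eq_comm _ v]
    split_ifs <;> simp

lemma menger (F : Finset E) (u v : V) (k : ℕ)
    (h : ∀ S : Finset V, u ∈ S → v ∉ S → k ≤ (F ∩ cut s t S).card) :
    ∃ g : E → ℤ, (∀ e, |g e| ≤ 1 ∧ (e ∉ F → g e = 0)) ∧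
      ∀ w, dv s t g w = (if w = u then (k : ℤ) else 0) - (if w = v then (k : ℤ) else 0) := by
  induction k with
  | zero =>
    refine ⟨fun _ => 0, by simp, ?_⟩
    intro w; simp [dv]
  | succ k ih =>
    obtain ⟨g, hg, hd⟩ := ih (fun S h1 h2 => by have := h S h1 h2; omega)
    obtain ⟨S, hu, h1, h2, h3⟩ := aug s t (fun e x => |x| ≤ 1 ∧ (e ∉ F → x = 0)) 1 g hg u
    by_cases hv : v ∈ S
    · obtain ⟨g', h4, h5⟩ := h1 v hv
      refine ⟨g', h4, ?_⟩
      intro w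
      rw [h5, hd]
      push_cast
      split_ifs <;> ring
    · exfalso
      have := h S hu hv
      have e1 : ∑ w ∈ S, dv s t g w = k := by
        simp only [hd, Finset.sum_sub_distrib]
        simp [hu, hv]
      rw [dv_sum] at e1
      have e2 : ∑ e, ((if s e ∈ S then g e else 0) - (if t e ∈ S then g e else 0)) =
          ∑ e, if e ∈ F ∩ cut s t S then (1 : ℤ) else 0 := by
        refine Finset.sum_congr rfl fun e _ => ?_
        simp only [mem_inter, cut, mem_filter, mem_univ, true_and]
        have g1 := hg e
        have g2 := h2 e
        have g3 := h3 e
        rw [abs_le] at g1 g2 g3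
        by_cases hF : e ∈ F <;> by_cases hs : s e ∈ S <;> by_cases ht : t e ∈ S <;>
          simp [hF, hs, ht] at g1 g2 g3 ⊢
        · by_contra hne
          have : g e ≤ 0 := by omega
          have := g2 (by omega)
          omega
        · by_contra hne
          have : 0 ≤ g e := by omega
          have := g3 (by omega)
          omega
        · exact g1.2
        · exact g1.2
      rw [e2, Finset.sum_ite_mem] at e1
      simp at e1
      omega

end

section
variable {V E : Type} [Fintype V] [Fintype E] (s t : E → V)

lemma conn (C : Finset E) (p : V) : ∃ K : Finset V, p ∈ K ∧ (∀ e ∈ C, (s e ∈ K ↔ t e ∈ K)) ∧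
    (∀ T : Finset V, p ∈ T → (∀ e ∈ C, (s e ∈ T ↔ t e ∈ T)) → K ⊆ T) ∧
    (∀ b : V → ZMod 3, (∀ v, v ∉ K → b v = 0) → ∑ v, b v = 0 →
      ∃ γ : E → ZMod 3, (∀ e, γ e ≠ 0 → e ∈ C ∧ s e ∈ K) ∧ ∀ v, dv s t γ v = b v) := by
  let cl : Finset V → Prop := fun T => p ∈ T ∧ ∀ e ∈ C, (s e ∈ T ↔ t e ∈ T)
  let K : Finset V := univ.filter (fun z => ∀ T, cl T → z ∈ T)
  have hK : ∀ z, z ∈ K ↔ ∀ T, cl T → z ∈ T := by simp [K]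
  have hpK : p ∈ K := by rw [hK]; intro T hT; exact hT.1
  have hcK : ∀ e ∈ C, (s e ∈ K ↔ t e ∈ K) := by
    intro e he
    rw [hK, hK]
    exact forall₂_congr fun T hT => hT.2 e he
  have hmin : ∀ T : Finset V, p ∈ T → (∀ e ∈ C, (s e ∈ T ↔ t e ∈ T)) → K ⊆ T := by
    intro T h1 h2 z hz
    exact (hK z).1 hz T ⟨h1, h2⟩
  refine ⟨K, hpK, hcK, hmin, ?_⟩
  let R : Finset V := univ.filter (fun z => z ∈ K ∧ ∀ x : ZMod 3,
    ∃ γ : E → ZMod 3, (∀ e, γ e ≠ 0 → e ∈ C ∧ s e ∈ K) ∧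
      ∀ v, dv s t γ v = (if z = v then x else 0) - (if p = v then x else 0))
  have hR : ∀ z, z ∈ R ↔ (z ∈ K ∧ ∀ x : ZMod 3,
    ∃ γ : E → ZMod 3, (∀ e, γ e ≠ 0 → e ∈ C ∧ s e ∈ K) ∧
      ∀ v, dv s t γ v = (if z = v then x else 0) - (if p = v then x else 0)) := by simp [R]
  have hKR : K ⊆ R := by
    apply hmin
    · rw [hR]
      refine ⟨hpK, fun x => ⟨fun _ => 0, by simp, by simp [dv]⟩⟩
    · intro e he
      rw [hR, hR]
      constructor
      · rintro ⟨h1, h2⟩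
        refine ⟨(hcK e he).1 h1, fun x => ?_⟩
        obtain ⟨γ, h3, h4⟩ := h2 x
        refine ⟨fun e' => γ e' + if e' = e then -x else 0, ?_, ?_⟩
        · intro e' h
          by_cases hh : e' = e
          · subst hh; exact ⟨he, h1⟩
          · simp only [hh, if_false, add_zero] at h
            exact h3 _ h
        · intro v
          rw [dv_add, dv_single, h4]
          split_ifs <;> ring
      · rintro ⟨h1, h2⟩
        have h1' := (hcK e he).2 h1
        refine ⟨h1', fun x => ?_⟩
        obtain ⟨γ, h3, h4⟩ := h2 x
        refine ⟨fun e' => γ e' + if e' = e then x else 0, ?_, ?_⟩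
        · intro e' h
          by_cases hh : e' = e
          · subst hh; exact ⟨he, h1'⟩
          · simp only [hh, if_false, add_zero] at h
            exact h3 _ h
        · intro v
          rw [dv_add, dv_single, h4]
          split_ifs <;> ring
  intro b hb hsum
  have hz : ∀ z, ∃ γ : E → ZMod 3, (∀ e, γ e ≠ 0 → e ∈ C ∧ s e ∈ K) ∧
      ∀ v, dv s t γ v = (if z = v then b z else 0) - (if p = v then b z else 0) := by
    intro z
    by_cases h : z ∈ K
    · exact ((hR z).1 (hKR h)).2 (b z)
    · refine ⟨fun _ => 0, by simp, ?_⟩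
      intro v; simp [dv, hb z h]
  choose γ h1 h2 using hz
  refine ⟨fun e => ∑ z, γ z e, ?_, ?_⟩
  · intro e he
    obtain ⟨z, _, hz⟩ := Finset.exists_ne_zero_of_sum_ne_zero he
    exact h1 z e hz
  · intro v
    rw [dv_fsum]
    simp only [h2, Finset.sum_sub_distrib]
    by_cases hpv : p = v <;> simp [hpv, hsum]

/-- indicator mod 2 -/
noncomputable def ind (X : Finset E) : E → ZMod 2 := fun e => if e ∈ X then 1 else 0

lemma dv_ind_restrict (C : Finset E) (K : Finset V) (hc : ∀ e ∈ C, (s e ∈ K ↔ t e ∈ K)) (v : V) :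
    dv s t (ind (C.filter (fun e => s e ∈ K))) v = if v ∈ K then dv s t (ind C) v else 0 := by
  by_cases hv : v ∈ K
  · rw [if_pos hv]
    apply dv_congr
    intro e he
    simp only [ind, mem_filter]
    by_cases hC : e ∈ C
    · have : s e ∈ K := by
        rcases he with h | h
        · rwa [h]
        · rw [hc e hC, h]; exact hv
      simp [hC, this]
    · simp [hC]
  · rw [if_neg hv]
    apply dv_zero_of
    intro e he
    simp only [ind, mem_filter]
    rw [if_neg]
    rintro ⟨h1, h2⟩
    rcases he with h | h
    · rw [h] at h2; exact hv h2
    · rw [hc e h1, h] at h2; exact hv h2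

/-- From an integral flow to a connecting even set. -/
lemma menger2 (F : Finset E) (u v : V) (k : ℕ) (hk : 0 < k)
    (h : ∀ S : Finset V, u ∈ S → v ∉ S → k ≤ (F ∩ cut s t S).card) :
    ∃ C : Finset E, C ⊆ F ∧ (∀ S : Finset V, u ∈ S → (∀ e ∈ C, (s e ∈ S ↔ t e ∈ S)) → v ∈ S) ∧
      ∀ w, dv s t (ind C) w = (if w = u then (k : ZMod 2) else 0) -
        (if w = v then (k : ZMod 2) else 0) := by
  obtain ⟨g, h1, h2⟩ := menger s t F u v k h
  refine ⟨univ.filter (fun e => g e ≠ 0), ?_, ?_, ?_⟩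
  · intro e he
    simp only [mem_filter, mem_univ, true_and] at he
    by_contra hF
    exact he ((h1 e).2 hF)
  · intro S hu hS
    by_contra hv
    have e1 : ∑ w ∈ S, dv s t g w = k := by
      simp only [h2, Finset.sum_sub_distrib]
      simp [hu, hv]
    rw [dv_sum, Finset.sum_eq_zero] at e1
    · omega
    · intro e _
      by_cases hg : g e = 0
      · simp [hg]
      · have := hS e (by simp [hg])
        simp [this]
  · intro w
    have e1 : dv s t (ind (univ.filter (fun e => g e ≠ 0))) w = ((dv s t g w : ℤ) : ZMod 2) := by
      unfold dv
      push_cast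
      refine Finset.sum_congr rfl fun e _ => ?_
      have e2 : ind (univ.filter (fun e => g e ≠ 0)) e = ((g e : ℤ) : ZMod 2) := by
        have := (h1 e).1
        rw [abs_le] at this
        have h3 : g e = -1 ∨ g e = 0 ∨ g e = 1 := by omega
        rcases h3 with h | h | h <;> simp [ind, h]
      rw [e2]
    rw [e1, h2]
    push_cast
    rfl

/-- state of the growing process -/
def St (bε : V → ZMod 2) (H : Finset V) (X : Finset E) : Prop :=
  (∀ e ∈ X, s e ∈ H ∧ t e ∈ H) ∧ (∀ v, dv s t (ind X) v = bε v) ∧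
  ∀ b : V → ZMod 3, (∀ v, v ∉ H → b v = 0) → ∑ v, b v = 0 →
    ∃ β : E → ZMod 3, (∀ e, β e ≠ 0 → s e ∈ H ∧ t e ∈ H) ∧ (∀ v, dv s t β v = b v) ∧
      ∀ e, s e ∈ H → t e ∈ H → e ∉ X → β e ≠ 0

lemma St_init (u v : V) (k : ℕ) (hk : 0 < k)
    (h : ∀ S : Finset V, u ∈ S → v ∉ S → k ≤ (cut s t S).card) :
    ∃ H X, St s t (fun w => (if w = u then (k : ZMod 2) else 0) -
        (if w = v then (k : ZMod 2) else 0)) H X ∧ u ∈ H ∧ v ∈ H := by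
  obtain ⟨C, -, h1, h2⟩ := menger2 s t univ u v k hk (by simpa using h)
  obtain ⟨K, hu, hc, -, hs⟩ := conn s t C u
  have hv := h1 K hu hc
  refine ⟨K, C.filter (fun e => s e ∈ K), ⟨?_, ?_, ?_⟩, hu, hv⟩
  · intro e he
    rw [mem_filter] at he
    exact ⟨he.2, (hc e he.1).1 he.2⟩
  · intro w
    rw [dv_ind_restrict s t C K hc, h2]
    by_cases hw : w ∈ K
    · simp [hw]
    · have h3 : w ≠ u := by rintro rfl; exact hw hu
      have h4 : w ≠ v := by rintro rfl; exact hw hv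
      simp [hw, h3, h4]
  · intro b hb hsum
    let γ0 : E → ZMod 3 := fun e => if s e ∈ K ∧ t e ∈ K ∧ e ∉ C then 1 else 0
    obtain ⟨γ, h3, h4⟩ := hs (fun w => b w - dv s t γ0 w) (by
      intro w hw
      rw [hb w hw, dv_zero_of, sub_zero]
      intro e he
      simp only [γ0]
      rw [if_neg]
      rintro ⟨h5, h6, -⟩
      rcases he with h | h
      · rw [h] at h5; exact hw h5
      · rw [h] at h6; exact hw h6) (by
      rw [Finset.sum_sub_distrib, hsum, dv_total, sub_zero])
    refine ⟨fun e => γ0 e + γ e, ?_, ?_, ?_⟩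
    · intro e he
      by_cases hγ : γ e = 0
      · simp only [hγ, add_zero, γ0] at he
        rw [ite_ne_right_iff] at he
        exact ⟨he.1.1, he.1.2.1⟩
      · have := h3 e hγ
        exact ⟨this.2, (hc e this.1).1 this.2⟩
    · intro w
      rw [dv_add, h4]; ring
    · intro e h5 h6 h7
      have h8 : e ∉ C := by
        intro h8; exact h7 (by simp [h8, h5])
      have h9 : γ e = 0 := by
        by_contra h9; exact h8 (h3 e h9).1
      simp [γ0, h5, h6, h8, h9]

lemma zmod3_aux : ∀ σ₁ σ₂ r : ZMod 3, σ₁ ≠ 0 → σ₂ ≠ 0 →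
    ∃ x₁ x₂ : ZMod 3, x₁ ≠ 0 ∧ x₂ ≠ 0 ∧ σ₁ * x₁ + σ₂ * x₂ = r := by
  decide

lemma St_step (bε : V → ZMod 2) (H : Finset V) (X : Finset E) (hSt : St s t bε H X)
    (C : Finset E) (K : Finset V) (hc : ∀ e ∈ C, (s e ∈ K ↔ t e ∈ K))
    (hs : ∀ b : V → ZMod 3, (∀ v, v ∉ K → b v = 0) → ∑ v, b v = 0 →
      ∃ γ : E → ZMod 3, (∀ e, γ e ≠ 0 → e ∈ C ∧ s e ∈ K) ∧ ∀ v, dv s t γ v = b v)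
    (heven : ∀ v, dv s t (ind C) v = 0) (hdisj : ∀ v, v ∈ K → v ∉ H)
    (e₁ e₂ : E) (hne : e₁ ≠ e₂) (h₁ : (s e₁ ∈ K ∧ t e₁ ∈ H) ∨ (s e₁ ∈ H ∧ t e₁ ∈ K))
    (h₂ : (s e₂ ∈ K ∧ t e₂ ∈ H) ∨ (s e₂ ∈ H ∧ t e₂ ∈ K)) :
    St s t bε (H ∪ K) (X ∪ C.filter (fun e => s e ∈ K)) := by
  obtain ⟨hX, hpar, hsol⟩ := hSt
  have hd' : ∀ v, v ∈ H → v ∉ K := fun v h h' => hdisj v h' h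
  refine ⟨?_, ?_, ?_⟩
  · intro e he
    simp only [mem_union, mem_filter] at he ⊢
    rcases he with he | he
    · exact ⟨Or.inl (hX e he).1, Or.inl (hX e he).2⟩
    · exact ⟨Or.inr he.2, Or.inr ((hc e he.1).1 he.2)⟩
  · intro v
    have e1 : ind (X ∪ C.filter (fun e => s e ∈ K)) =
        fun e => ind X e + ind (C.filter (fun e => s e ∈ K)) e := by
      funext e
      simp only [ind, mem_union, mem_filter]
      by_cases h : e ∈ X
      · have := hd' _ (hX e h).1
        simp [h, this]
      · simp [h]
    rw [e1, dv_add, hpar, dv_ind_restrict s t C K hc, heven]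
    simp
  · intro b hb hsum
    let γ0 : E → ZMod 3 := fun e => if (s e ∈ H ∪ K ∧ t e ∈ H ∪ K) ∧ ¬ (s e ∈ H ∧ t e ∈ H) ∧
      e ∉ C ∧ e ≠ e₁ ∧ e ≠ e₂ then 1 else 0
    have hσ : ∀ e, ((s e ∈ K ∧ t e ∈ H) ∨ (s e ∈ H ∧ t e ∈ K)) → ∃ σ : ZMod 3, σ ≠ 0 ∧
        ∀ x, ∑ v ∈ K, dv s t (fun e' => if e' = e then x else 0) v = σ * x := by
      intro e he
      rcases he with ⟨h1, h2⟩ | ⟨h1, h2⟩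
      · refine ⟨1, by decide, fun x => ?_⟩
        simp only [dv_single, Finset.sum_sub_distrib]
        simp [h1, hd' _ h2]
      · refine ⟨-1, by decide, fun x => ?_⟩
        simp only [dv_single, Finset.sum_sub_distrib]
        simp [h2, hd' _ h1]
    obtain ⟨σ₁, hσ₁, hs₁⟩ := hσ e₁ h₁
    obtain ⟨σ₂, hσ₂, hs₂⟩ := hσ e₂ h₂
    obtain ⟨x₁, x₂, hx₁, hx₂, hx⟩ := zmod3_aux σ₁ σ₂ (∑ v ∈ K, (b v - dv s t γ0 v)) hσ₁ hσ₂
    let γ1 : E → ZMod 3 := fun e => γ0 e + ((if e = e₁ then x₁ else 0) + (if e = e₂ then x₂ else 0))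
    have hγ1d : ∀ v, dv s t γ1 v = dv s t γ0 v + (dv s t (fun e => if e = e₁ then x₁ else 0) v +
        dv s t (fun e => if e = e₂ then x₂ else 0) v) := by
      intro v
      simp only [γ1]
      rw [dv_add, dv_add]
    have hγ1K : ∑ v ∈ K, (b v - dv s t γ1 v) = 0 := by
      simp only [hγ1d]
      simp only [Finset.sum_sub_distrib, Finset.sum_add_distrib] at hx ⊢
      rw [hs₁, hs₂, hx]; ring
    have hγ1H : ∀ e, γ1 e ≠ 0 → (s e ∈ H ∪ K ∧ t e ∈ H ∪ K) := by
      intro e he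
      by_contra hcon
      have n1 : e ≠ e₁ := by
        rintro rfl; simp only [mem_union] at hcon; tauto
      have n2 : e ≠ e₂ := by
        rintro rfl; simp only [mem_union] at hcon; tauto
      apply he
      simp only [γ1, γ0, n1, n2, hcon]
      simp
    obtain ⟨γ2, h3, h4⟩ := hs (fun v => if v ∈ K then b v - dv s t γ1 v else 0)
      (by intro v hv; simp [hv]) (by rw [Finset.sum_ite_mem, univ_inter]; exact hγ1K)
    obtain ⟨β, h5, h6, h7⟩ := hsol (fun v => b v - dv s t γ1 v - dv s t γ2 v) (by
      intro v hv
      rw [h4]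
      by_cases hvK : v ∈ K
      · simp [hvK]
      · have hv' : v ∉ H ∪ K := by simp [hv, hvK]
        rw [hb v hv', dv_zero_of s t γ1]
        · simp [hvK]
        · intro e he
          by_contra hne
          have := hγ1H e hne
          rcases he with h | h
          · rw [h] at this; exact hv' this.1
          · rw [h] at this; exact hv' this.2) (by
      rw [Finset.sum_sub_distrib, Finset.sum_sub_distrib, hsum, dv_total, dv_total]; simp)
    refine ⟨fun e => (γ1 e + γ2 e) + β e, ?_, ?_, ?_⟩
    · intro e he
      by_cases n1 : γ1 e = 0
      · by_cases n2 : γ2 e = 0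
        · have : β e ≠ 0 := by simpa [n1, n2] using he
          have := h5 e this
          simp [this]
        · have := h3 e n2
          simp [this.2, (hc e this.1).1 this.2]
      · exact hγ1H e n1
    · intro v
      rw [dv_add, dv_add, h6]; ring
    · intro e hs' ht' hX'
      simp only [mem_union, mem_filter, not_or] at hX'
      have n2 : γ2 e = 0 := by
        by_contra n2; exact hX'.2 (h3 e n2)
      by_cases hH : s e ∈ H ∧ t e ∈ H
      · have n1 : e ≠ e₁ := by
          rintro rfl
          rcases h₁ with h | h
          · exact hd' _ hH.1 h.1
          · exact hd' _ hH.2 h.2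
        have n2' : e ≠ e₂ := by
          rintro rfl
          rcases h₂ with h | h
          · exact hd' _ hH.1 h.1
          · exact hd' _ hH.2 h.2
        have n1 : γ1 e = 0 := by
          simp [γ1, γ0, n1, n2', hH]
        simpa [n1, n2] using h7 e hH.1 hH.2 hX'.1
      · have n3 : β e = 0 := by
          by_contra n3; exact hH (h5 e n3)
        have n4 : e ∉ C := by
          intro n4
          have a1 := hc e n4
          have a2 : s e ∉ K := fun h => hX'.2 ⟨n4, h⟩
          have a3 : t e ∉ K := fun h => a2 (a1.2 h)
          simp only [mem_union] at hs' ht'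
          tauto
        simp only [n2, n3, add_zero, γ1]
        by_cases m1 : e = e₁
        · subst m1
          simpa [γ0, hne] using hx₁
        · by_cases m2 : e = e₂
          · subst m2
            simpa [γ0, m1] using hx₂
          · have h1 : γ0 e = 1 := if_pos ⟨⟨hs', ht'⟩, hH, n4, m1, m2⟩
            rw [h1]; simp [m1, m2]

lemma count4 (P Q R T : Finset E) (h : ∀ e, (if e ∈ P then 1 else 0) + (if e ∈ Q then 1 else 0) ≤
    (if e ∈ R then 1 else 0) + 2 * (if e ∈ T then 1 else 0)) :
    P.card + Q.card ≤ R.card + 2 * T.card := by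
  have hc : ∀ A : Finset E, A.card = ∑ e, if e ∈ A then 1 else 0 := by intro A; simp
  rw [hc P, hc Q, hc R, hc T]
  simp only [Finset.mul_sum, ← Finset.sum_add_distrib]
  exact Finset.sum_le_sum fun e _ => h e

lemma aux_prop (a1 a2 a3 a4 a5 a6 : Prop) :
    (if ((a1 ∧ a3) ∧ ¬ (a2 ∧ a4) ∧ ¬ a6) ∨ ((a2 ∧ a4) ∧ ¬ (a1 ∧ a3) ∧ ¬ a5) then 1 else 0) +
    (if ((a1 ∧ ¬ a3) ∧ ¬ (a2 ∧ ¬ a4) ∧ ¬ a6) ∨ ((a2 ∧ ¬ a4) ∧ ¬ (a1 ∧ ¬ a3) ∧ ¬ a5) then 1 else 0) ≤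
    (if (a1 ∧ ¬ a2 ∧ ¬ a6) ∨ (a2 ∧ ¬ a1 ∧ ¬ a5) then 1 else 0) +
      2 * (if (a1 ∧ a2) ∧ ¬ (a3 ↔ a4) then 1 else 0) := by
  by_cases a1 <;> by_cases a2 <;> by_cases a3 <;> by_cases a4 <;> by_cases a5 <;> by_cases a6 <;>
    simp [*]

lemma core (u v : V) (k : ℕ) (hk : 0 < k) (hk2 : k ≤ 2)
    (h2 : ∀ S : Finset V, S.Nonempty → S ≠ univ → ¬ (u ∈ S ↔ v ∈ S) → 2 ≤ (cut s t S).card)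
    (h3 : ∀ S : Finset V, S.Nonempty → S ≠ univ → (u ∈ S ↔ v ∈ S) → 3 ≤ (cut s t S).card)
    (c : ZMod 3) :
    ∃ (α : E → ZMod 2) (β : E → ZMod 3),
      (∀ w, dv s t α w = (if w = u then (k : ZMod 2) else 0) - (if w = v then (k : ZMod 2) else 0)) ∧
      (∀ w, dv s t β w = (if w = u then c else 0) - (if w = v then c else 0)) ∧
      ∀ e, α e ≠ 0 ∨ β e ≠ 0 := by
  set bε : V → ZMod 2 := fun w => (if w = u then (k : ZMod 2) else 0) -
        (if w = v then (k : ZMod 2) else 0) with hbε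
  obtain ⟨H0, X0, hSt0, hu0, hv0⟩ := St_init s t u v k hk (by
    intro S hu hv
    have := h2 S ⟨u, hu⟩ (by rintro rfl; simp at hv) (by simp [hu, hv])
    omega)
  let good : Finset (Finset V) := univ.filter (fun H => (∃ X, St s t bε H X) ∧ u ∈ H ∧ v ∈ H)
  have hne : good.Nonempty := ⟨H0, by simp only [good, mem_filter, mem_univ, true_and]; exact ⟨⟨X0, hSt0⟩, hu0, hv0⟩⟩
  obtain ⟨H, hH, hmax⟩ := Finset.exists_max_image good (fun S => S.card) hne
  simp only [good, mem_filter, mem_univ, true_and] at hH hmax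
  obtain ⟨⟨X, hSt⟩, hu, hv⟩ := hH
  have huniv : H = univ := by
    by_contra hHne
    -- choose minimal B
    let m : Finset V → Finset E := fun B => univ.filter (fun e =>
      (s e ∈ B ∧ t e ∉ B ∧ t e ∉ H) ∨ (t e ∈ B ∧ s e ∉ B ∧ s e ∉ H))
    let cand : Finset (Finset V) := univ.filter (fun B => B.Nonempty ∧ (∀ w ∈ B, w ∉ H) ∧ (m B).card ≤ 1)
    have hcand : cand.Nonempty := by
      refine ⟨Hᶜ, ?_⟩
      simp only [cand, mem_filter, mem_univ, true_and]
      refine ⟨?_, by simp, ?_⟩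
      · rw [nonempty_iff_ne_empty]
        intro h; apply hHne; simpa using h
      · have : m Hᶜ = ∅ := by
          ext e; simp [m]
        rw [this]; simp
    obtain ⟨B, hB, hBmin⟩ := Finset.exists_min_image cand (fun S => S.card) hcand
    simp only [cand, mem_filter, mem_univ, true_and] at hB hBmin
    obtain ⟨hBne, hBH, hBm⟩ := hB
    -- edges to H
    let d : Finset E := univ.filter (fun e => (s e ∈ B ∧ t e ∈ H) ∨ (s e ∈ H ∧ t e ∈ B))
    have hd : 2 ≤ d.card := by
      have c3 := h3 B hBne (by
        rintro rfl; exact hBH u (mem_univ _) hu) (by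
        have a1 : u ∉ B := fun h => hBH u h hu
        have a2 : v ∉ B := fun h => hBH v h hv
        simp [a1, a2])
      have hsub : cut s t B ⊆ m B ∪ d := by
        intro e he
        simp only [cut, m, d, mem_union, mem_filter, mem_univ, true_and] at he ⊢
        tauto
      have := (card_le_card hsub).trans (card_union_le _ _)
      omega
    obtain ⟨e₁, he₁, e₂, he₂, hne12⟩ := Finset.one_lt_card.1 hd
    have hend : ∀ e ∈ d, ∃ p ∈ B, ∀ K : Finset V, p ∈ K →
        ((s e ∈ K ∧ t e ∈ H) ∨ (s e ∈ H ∧ t e ∈ K)) := by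
      intro e he
      simp only [d, mem_filter, mem_univ, true_and] at he
      rcases he with he | he
      · exact ⟨s e, he.1, fun K hK => Or.inl ⟨hK, he.2⟩⟩
      · exact ⟨t e, he.2, fun K hK => Or.inr ⟨he.1, hK⟩⟩
    obtain ⟨p, hp, hp'⟩ := hend e₁ he₁
    obtain ⟨q, hq, hq'⟩ := hend e₂ he₂
    let F : Finset E := univ.filter (fun e => s e ∈ B ∧ t e ∈ B)
    obtain ⟨C, hCF, hC1, hC2⟩ := menger2 s t F p q 2 (by norm_num) (by
      intro S hpS hqS
      by_contra hlt
      -- S ∩ B and B \ S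
      have hx : 2 ≤ (m (B ∩ S)).card := by
        by_contra hcon
        have := hBmin (B ∩ S) ⟨⟨p, by simp [hp, hpS]⟩, fun w hw => hBH w (mem_inter.1 hw).1, by omega⟩
        have h' : B ∩ S ⊂ B := by
          refine ⟨inter_subset_left, fun hh => hqS (mem_inter.1 (hh hq)).2⟩
        have := card_lt_card h'
        omega
      have hy : 2 ≤ (m (B \ S)).card := by
        by_contra hcon
        have := hBmin (B \ S) ⟨⟨q, by simp [hq, hqS]⟩, fun w hw => hBH w (mem_sdiff.1 hw).1, by omega⟩
        have h' : B \ S ⊂ B := by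
          refine ⟨sdiff_subset, fun hh => (mem_sdiff.1 (hh hp)).2 hpS⟩
        have := card_lt_card h'
        omega
      have hsum : (m (B ∩ S)).card + (m (B \ S)).card ≤
          (m B).card + 2 * (F ∩ cut s t S).card := by
        apply count4
        intro e
        simp only [m, F, cut, mem_filter, mem_univ, true_and, mem_inter, mem_sdiff]
        convert aux_prop (s e ∈ B) (t e ∈ B) (s e ∈ S) (t e ∈ S) (s e ∈ H) (t e ∈ H)
      omega)
    obtain ⟨K, hpK, hcK, hKmin, hKs⟩ := conn s t C p
    have hqK := hC1 K hpK hcK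
    have hKB : K ⊆ B := by
      apply hKmin B hp
      intro e he
      have := hCF he
      simp only [F, mem_filter, mem_univ, true_and] at this
      simp [this]
    have hnew := St_step s t bε H X hSt C K hcK hKs (by
      intro w; rw [hC2]
      have : ((2 : ℕ) : ZMod 2) = 0 := by decide
      rw [this]; simp) (fun w hw => hBH w (hKB hw)) e₁ e₂ hne12 (hp' K hpK) (hq' K hqK)
    have := hmax (H ∪ K) ⟨⟨_, hnew⟩, by simp [hu], by simp [hv]⟩
    have hss : H ⊂ H ∪ K := by
      refine ⟨subset_union_left, fun hh => hBH p hp (hh (by simp [hpK]))⟩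
    have := card_lt_card hss
    omega
  subst huniv
  obtain ⟨-, hpar, hsol⟩ := hSt
  obtain ⟨β, -, h5, h6⟩ := hsol (fun w => (if w = u then c else 0) - (if w = v then c else 0))
    (by simp) (by simp)
  refine ⟨ind X, β, hpar, h5, ?_⟩
  intro e
  by_cases he : e ∈ X
  · left; simp [ind, he]
  · right; exact h6 e (mem_univ _) (mem_univ _) he

end

section
variable {V E : Type} [Fintype V] [Fintype E] (s t : E → V)

lemma dv_split {A : Type} [AddCommGroup A] (f : E) (g : E → A) (v : V) : dv s t g v =
    ((if s f = v then g f else 0) - (if t f = v then g f else 0)) +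
      dv (fun e : {e // e ≠ f} => s e) (fun e : {e // e ≠ f} => t e) (fun e => g e) v := by
  unfold dv
  rw [Fintype.sum_eq_add_sum_subtype_ne _ f]

lemma dv_cast (n : ℕ) (g : E → ℤ) (v : V) :
    ((dv s t g v : ℤ) : ZMod n) = dv s t (fun e => ((g e : ℤ) : ZMod n)) v := by
  unfold dv
  push_cast
  rfl

lemma cut_sub (f : E) (S : Finset V) : (cut s t S).erase f =
    (cut (fun e : {e // e ≠ f} => s e) (fun e : {e // e ≠ f} => t e) S).map
      (Function.Embedding.subtype _) := by
  ext e
  simp [cut, and_comm]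

lemma six_dvd (x : ℤ) : 6 ∣ x ↔ ((x : ZMod 2) = 0 ∧ (x : ZMod 3) = 0) := by
  rw [ZMod.intCast_zmod_eq_zero_iff_dvd, ZMod.intCast_zmod_eq_zero_iff_dvd]
  push_cast
  omega

lemma modflow (f : E) (h : ∀ S : Finset V, S.Nonempty → S ≠ univ → 3 ≤ (cut s t S).card) (a : ℤ) :
    ∃ φ : E → ℤ, (∀ v, 6 ∣ dv s t φ v) ∧ φ f = a ∧ ∀ e, e ≠ f → ¬ 6 ∣ φ e := by
  obtain ⟨k, hk0, hk2, hk⟩ : ∃ k : ℕ, 0 < k ∧ k ≤ 2 ∧ ((k : ℕ) : ZMod 2) = ((a : ℤ) : ZMod 2) := by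
    rcases Int.even_or_odd a with ha | ha
    · refine ⟨2, by norm_num, le_rfl, ?_⟩
      rw [(ZMod.intCast_zmod_eq_zero_iff_dvd a 2).2 (by exact_mod_cast ha.two_dvd)]
      decide
    · obtain ⟨b, rfl⟩ := ha
      refine ⟨1, by norm_num, by norm_num, ?_⟩
      have : (2 : ZMod 2) = 0 := by decide
      push_cast
      rw [this]; simp
  have hcard : ∀ S : Finset V, ((cut s t S).erase f).card =
      (cut (fun e : {e // e ≠ f} => s e) (fun e : {e // e ≠ f} => t e) S).card := by
    intro S; rw [cut_sub, card_map]
  obtain ⟨α, β, h1, h2, h3⟩ := core (fun e : {e // e ≠ f} => s e) (fun e : {e // e ≠ f} => t e)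
    (s f) (t f) k hk0 hk2 (by
      intro S hS hS' _
      rw [← hcard]
      have := h S hS hS'
      have := pred_card_le_card_erase (s := cut s t S) (a := f)
      omega) (by
      intro S hS hS' hf
      rw [← hcard, erase_eq_of_notMem]
      · exact h S hS hS'
      · simp [cut, hf]) (((-a : ℤ)) : ZMod 3)
  let φ : E → ℤ := fun e => if h : e = f then a else 3 * ((α ⟨e, h⟩).val : ℤ) + 4 * ((β ⟨e, h⟩).val : ℤ)
  have hφf : φ f = a := by simp [φ]
  have hφ : ∀ e : {e // e ≠ f}, φ e = 3 * ((α e).val : ℤ) + 4 * ((β e).val : ℤ) := by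
    intro e; simp [φ, e.2]
  have c2 : ∀ e : {e // e ≠ f}, ((φ e : ℤ) : ZMod 2) = α e := by
    intro e
    rw [hφ]
    push_cast
    rw [ZMod.natCast_zmod_val]
    have a1 : (3 : ZMod 2) = 1 := by decide
    have a2 : (4 : ZMod 2) = 0 := by decide
    rw [a1, a2]; ring
  have c3 : ∀ e : {e // e ≠ f}, ((φ e : ℤ) : ZMod 3) = β e := by
    intro e
    rw [hφ]
    push_cast
    rw [ZMod.natCast_zmod_val]
    have a1 : (3 : ZMod 3) = 0 := by decide
    have a2 : (4 : ZMod 3) = 1 := by decide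
    rw [a1, a2]; ring
  refine ⟨φ, ?_, hφf, ?_⟩
  · intro v
    rw [six_dvd]
    constructor
    · rw [dv_cast, dv_split s t f]
      simp only [c2, h1, hφf, hk, @eq_comm _ v]
      generalize ((a : ℤ) : ZMod 2) = x
      split_ifs <;> revert x <;> decide
    · rw [dv_cast, dv_split s t f]
      simp only [c3, h2, hφf, @eq_comm _ v]
      push_cast
      split_ifs <;> ring
  · intro e he hd
    rw [six_dvd] at hd
    have b2 := c2 ⟨e, he⟩
    have b3 := c3 ⟨e, he⟩
    simp only [hd.1, hd.2] at b2 b3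
    rcases h3 ⟨e, he⟩ with h | h
    · exact h b2.symm
    · exact h b3.symm

lemma tutte (f : E) (a : ℤ) (ha : 1 ≤ a) (ha' : a ≤ 5) (φ0 : E → ℤ) (hd : ∀ v, 6 ∣ dv s t φ0 v)
    (hf : φ0 f = a) (hnz : ∀ e, e ≠ f → ¬ 6 ∣ φ0 e) :
    ∃ φ : E → ℤ, (∀ v, dv s t φ v = 0) ∧ φ f = a ∧ ∀ e, 0 < |φ e| ∧ |φ e| < 6 := by
  let al : E → ℤ → Prop := fun e x => 6 ∣ x - φ0 e ∧ (-6 < x ∧ x < 6) ∧ (e = f → x = a)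
  have hnz' : ∀ e, ¬ 6 ∣ φ0 e := by
    intro e
    by_cases h : e = f
    · rw [h, hf]; omega
    · exact hnz e h
  have main : ∀ N : ℕ, ∀ g : E → ℤ, (∀ e, al e (g e)) → ∑ v, (dv s t g v).natAbs = N →
      ∃ φ : E → ℤ, (∀ v, dv s t φ v = 0) ∧ φ f = a ∧ ∀ e, 0 < |φ e| ∧ |φ e| < 6 := by
    intro N
    induction N using Nat.strong_induction_on with
    | _ N ih =>
    intro g hg hN
    by_cases hz : ∀ v, dv s t g v = 0
    · refine ⟨g, hz, (hg f).2.2 rfl, fun e => ?_⟩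
      have h1 := hg e
      have h2 := hnz' e
      simp only [al] at h1
      rw [abs_pos, abs_lt]
      refine ⟨?_, h1.2.1⟩
      omega
    have hd6 : ∀ v, 6 ∣ dv s t g v := by
      intro v
      have h1 : dv s t g v = dv s t (fun e => g e - φ0 e) v + dv s t φ0 v := by
        rw [← dv_add]; simp
      rw [h1]
      refine dvd_add ?_ (hd v)
      unfold dv
      refine Finset.dvd_sum fun e _ => ?_
      have := (hg e).1
      split_ifs <;> simp [this, (dvd_sub_comm).1 this]
    push Not at hz
    obtain ⟨u, -, hu⟩ := Finset.exists_pos_of_sum_zero_of_exists_nonzero (s := univ)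
      (fun v => dv s t g v) (dv_total s t g) (by simpa using hz)
    have hu6 : 6 ≤ dv s t g u := by have := hd6 u; omega
    obtain ⟨S, huS, h1, h2, h3⟩ := aug s t al (-6) g hg u
    by_cases hneg : ∃ z ∈ S, dv s t g z < 0
    · obtain ⟨z, hzS, hz0⟩ := hneg
      obtain ⟨g', h4, h5⟩ := h1 z hzS
      have hz6 : dv s t g z ≤ -6 := by have := hd6 z; omega
      have huz : u ≠ z := by rintro rfl; omega
      refine ih (∑ v, (dv s t g' v).natAbs) ?_ g' h4 rfl
      rw [← hN]
      apply Finset.sum_lt_sum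
      · intro v _
        rw [h5]
        by_cases hvu : v = u
        · subst hvu; simp [huz]; omega
        · by_cases hvz : v = z
          · subst hvz; simp [hvu]; omega
          · simp [hvu, hvz]
      · refine ⟨u, mem_univ _, ?_⟩
        rw [h5]
        simp [huz]; omega
    · exfalso
      push Not at hneg
      have l1 : dv s t g u ≤ ∑ v ∈ S, dv s t g v := Finset.single_le_sum hneg huS
      rw [dv_sum] at l1
      have l2 : ∑ e, ((if s e ∈ S then g e else 0) - (if t e ∈ S then g e else 0)) ≤
          ∑ e, if e = f then 5 else 0 := by
        refine Finset.sum_le_sum fun e _ => ?_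
        have k1 := hg e
        have k2 := h2 e
        have k3 := h3 e
        simp only [al] at k1 k2 k3
        by_cases hef : e = f
        · have := k1.2.2 hef
          rw [this, if_pos hef]
          split_ifs <;> omega
        · simp only [hef, false_imp_iff, and_true, if_false] at k1 k2 k3 ⊢
          by_cases hs : s e ∈ S <;> by_cases ht : t e ∈ S
          · simp [hs, ht]
          · have := k2 hs ht
            simp [hs, ht]; omega
          · have := k3 ht hs
            simp [hs, ht]; omega
          · simp [hs, ht]
      rw [Finset.sum_ite_eq' univ f, if_pos (mem_univ f)] at l2
      omega
  refine main _ (fun e => if e = f then a else φ0 e % 6) ?_ rfl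
  intro e
  simp only [al]
  by_cases h : e = f
  · subst h; simp [hf]; omega
  · simp [h]; omega

lemma dv_map {W : Type} [Fintype W] (p : V → W) (φ : E → ℤ) (w : W) (S : Finset V)
    (hS : ∀ v, v ∈ S ↔ p v = w) :
    dv (fun e => p (s e)) (fun e => p (t e)) φ w = ∑ v ∈ S, dv s t φ v := by
  rw [dv_sum]; simp [dv, hS]

end

lemma reduction {E : Type} [Fintype E] (f : E) (a : ℤ) (ha : 1 ≤ a) (ha' : a ≤ 5) (n : ℕ) :
    ∀ (V : Type) [Fintype V], Fintype.card V = n → ∀ s t : E → V,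
      (∀ S : Finset V, (cut s t S).card ≠ 1) →
      ∃ φ : E → ℤ, (∀ v, dv s t φ v = 0) ∧ φ f = a ∧ ∀ e, 0 < |φ e| ∧ |φ e| < 6 := by
  induction n with
  | zero =>
    intro V _ hV s t _
    exact ((Fintype.card_eq_zero_iff.1 hV).false (s f)).elim
  | succ n ih =>
    intro V _ hV s t hcut
    by_cases h3 : ∀ S : Finset V, S.Nonempty → S ≠ univ → 3 ≤ (cut s t S).card
    · obtain ⟨φ, h1, h2, h4⟩ := modflow s t f h3 a
      exact tutte s t f a ha ha' φ h1 h2 h4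
    -- gluing
    have glue : ∀ x y : V, x ≠ y → ∃ φ : E → ℤ, (∀ v, v ≠ x → v ≠ y → dv s t φ v = 0) ∧
        dv s t φ x + dv s t φ y = 0 ∧ φ f = a ∧ ∀ e, 0 < |φ e| ∧ |φ e| < 6 := by
      intro x y hxy
      let p : V → {w // w ≠ y} := fun w => if h : w = y then ⟨x, hxy⟩ else ⟨w, h⟩
      have hp : ∀ w z, (p w = z ↔ (w = y ∧ z.1 = x) ∨ (w ≠ y ∧ w = z.1)) := by
        intro w z
        by_cases h : w = y
        · simp [p, h, Subtype.ext_iff, eq_comm]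
        · simp [p, h, Subtype.ext_iff]
      obtain ⟨φ, h1, h2, h4⟩ := ih {w // w ≠ y} (by
        rw [Fintype.card_subtype_compl, hV]; simp) (fun e => p (s e)) (fun e => p (t e)) (by
        intro T
        have : cut (fun e => p (s e)) (fun e => p (t e)) T =
            cut s t (univ.filter (fun v => p v ∈ T)) := by
          ext e; simp [cut]
        rw [this]
        exact hcut _)
      refine ⟨φ, ?_, ?_, h2, h4⟩
      · intro v hx hy
        have := h1 ⟨v, hy⟩
        rw [dv_map s t p φ _ {v} (by
          intro w
          simp only [hp, mem_singleton]
          constructor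
          · rintro rfl
            exact Or.inr ⟨hy, rfl⟩
          · rintro (h | h)
            · exact absurd h.2 hx
            · exact h.2), sum_singleton] at this
        exact this
      · have := h1 ⟨x, hxy⟩
        rw [dv_map s t p φ _ {x, y} (by
          intro w
          simp only [hp, mem_singleton, mem_insert]
          constructor
          · rintro (rfl | rfl)
            · exact Or.inr ⟨hxy, rfl⟩
            · exact Or.inl ⟨rfl, trivial⟩
          · rintro (h | h)
            · exact Or.inr h.1
            · exact Or.inl h.2), sum_pair hxy] at this
        exact this
    push Not at h3
    obtain ⟨S, hS, hSu, hlt⟩ := h3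
    have hc1 := hcut S
    have hcc : (cut s t S).card = 0 ∨ (cut s t S).card = 2 := by omega
    rcases hcc with h0 | h2
    · obtain ⟨x, hx⟩ := hS
      obtain ⟨y, hy⟩ : ∃ y, y ∉ S := by
        by_contra hcon
        push Not at hcon
        exact hSu (by ext; simp [hcon])
      have hxy : x ≠ y := by rintro rfl; exact hy hx
      obtain ⟨φ, g1, g2, g3, g4⟩ := glue x y hxy
      have hx0 : dv s t φ x = 0 := by
        have e1 : ∑ v ∈ S, dv s t φ v = dv s t φ x := by
          apply Finset.sum_eq_single_of_mem x hx
          intro b hb hbx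
          exact g1 b hbx (by rintro rfl; exact hy hb)
        rw [← e1, dv_sum]
        refine Finset.sum_eq_zero fun e _ => ?_
        have he : e ∉ cut s t S := by rw [card_eq_zero.1 h0]; simp
        simp only [cut, mem_filter, mem_univ, true_and, not_not] at he
        simp [he]
      refine ⟨φ, ?_, g3, g4⟩
      intro v
      by_cases hvx : v = x
      · rw [hvx, hx0]
      · by_cases hvy : v = y
        · rw [hvy]; omega
        · exact g1 v hvx hvy
    · obtain ⟨e, e', hee, hcut2, hef⟩ : ∃ e e', e ≠ e' ∧ cut s t S = {e, e'} ∧ e ≠ f := by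
        obtain ⟨e, e', hee, h⟩ := card_eq_two.1 h2
        by_cases hef : e = f
        · exact ⟨e', e, hee.symm, by rw [h, pair_comm], by rintro rfl; exact hee hef⟩
        · exact ⟨e, e', hee, h, hef⟩
      have hmem : ∀ e'', ¬ (s e'' ∈ S ↔ t e'' ∈ S) ↔ (e'' = e ∨ e'' = e') := by
        intro e''
        have : e'' ∈ cut s t S ↔ e'' ∈ ({e, e'} : Finset E) := by rw [hcut2]
        simpa [cut] using this
      have hxy : s e ≠ t e := by
        intro h
        exact (hmem e).2 (Or.inl rfl) (by rw [h])
      obtain ⟨φ', g1, g2, g3, g4⟩ := glue (s e) (t e) hxy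
      let φ : E → ℤ := fun e'' => φ' e'' + if e'' = e then - dv s t φ' (s e) else 0
      have hφ : ∀ e'', e'' ≠ e → φ e'' = φ' e'' := by intro e'' h; simp [φ, h]
      have hd : ∀ v, dv s t φ v = 0 := by
        intro v
        simp only [φ]
        rw [dv_add, dv_single]
        by_cases hvx : s e = v
        · subst hvx
          simp [hxy.symm]
        · by_cases hvy : t e = v
          · subst hvy; simp [hvx]; omega
          · simp [hvx, hvy, g1 v (Ne.symm hvx) (Ne.symm hvy)]
      have habs : |φ e| = |φ e'| := by
        have e1 : ∑ v ∈ S, dv s t φ v = 0 := Finset.sum_eq_zero fun v _ => hd v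
        rw [dv_sum] at e1
        rw [← Finset.sum_subset (subset_univ {e, e'}) (by
          intro e'' _ h
          have := (hmem e'').not.2 (by simpa using h)
          rw [not_not] at this
          simp [this]), sum_pair hee] at e1
        have m1 := (hmem e).2 (Or.inl rfl)
        have m2 := (hmem e').2 (Or.inr rfl)
        rw [abs_eq_abs]
        by_cases a1 : s e ∈ S <;> by_cases a2 : t e ∈ S <;> by_cases a3 : s e' ∈ S <;>
          by_cases a4 : t e' ∈ S <;> simp [a1, a2, a3, a4] at m1 m2 e1 <;> omega
      refine ⟨φ, hd, by rw [hφ f hef.symm, g3], ?_⟩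
      intro e''
      by_cases h : e'' = e
      · rw [h, habs, hφ e' hee.symm]; exact g4 e'
      · rw [hφ e'' h]; exact g4 e''

end SixFlow

/-- A bridgeless cubic graph admits a nowhere-zero 6-flow with any
prescribed value `a ∈ {1, …, 5}` on a prescribed edge. -/
theorem stmt10 [Fintype V] (G : SimpleGraph V) (hcubic : CubicGraph G) (hbl : Bridgeless G)
    (f : Sym2 V) (hf : f ∈ G.edgeSet) (a : ℤ) (ha : 1 ≤ a) (ha' : a ≤ 5) :
    ∃ τ φ, IsNZFlow G allPos 6 τ φ ∧ φ f = a := by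
  classical
  choose P hP using fun e : Sym2 V => (show ∃ p : V × V, s(p.1, p.2) = e from
    Sym2.ind (fun x y => ⟨(x, y), rfl⟩) e)
  let _ : Fintype G.edgeSet := Fintype.ofFinite _
  let S : G.edgeSet → V := fun e => (P e.1).1
  let T : G.edgeSet → V := fun e => (P e.1).2
  have hST : ∀ e : G.edgeSet, s(S e, T e) = e.1 := fun e => hP e.1
  have hne : ∀ e : G.edgeSet, S e ≠ T e := by
    intro e
    have := e.2
    rw [← hST e, mem_edgeSet] at this
    exact this.ne
  obtain ⟨φ, h1, h2, h3⟩ := SixFlow.reduction (⟨f, hf⟩ : G.edgeSet) a ha ha' _ V rfl S T (by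
    intro W hW
    obtain ⟨e, he⟩ := card_eq_one.1 hW
    have hmem : ∀ e' : G.edgeSet, ¬ (S e' ∈ W ↔ T e' ∈ W) ↔ e' = e := by
      intro e'
      have : e' ∈ SixFlow.cut S T W ↔ e' ∈ ({e} : Finset G.edgeSet) := by rw [he]
      simpa [SixFlow.cut] using this
    apply hbl e.1 e.2
    rw [← hST e, isBridge_iff]
    rintro ⟨w⟩
    apply (hmem e).2 rfl
    have key : ∀ x y : V, (G.deleteEdges {s(S e, T e)}).Walk x y → (x ∈ W ↔ y ∈ W) := by
      intro x y w
      induction w with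
      | nil => rfl
      | @cons x z y hadj _ ih =>
        rw [← ih]
        rw [deleteEdges_adj, hST e] at hadj
        let e' : G.edgeSet := ⟨s(x, z), hadj.1⟩
        have hne' : e' ≠ e := by
          intro h
          apply hadj.2
          rw [← h]; simp [e']
        have h4 := (hmem e').not.2 hne'
        rw [not_not] at h4
        have h5 := hST e'
        have h7 : e'.1 = s(x, z) := rfl
        rw [h7] at h5
        clear_value e'
        rw [Sym2.eq_iff] at h5
        rcases h5 with ⟨h5, h6⟩ | ⟨h5, h6⟩
        · rw [← h5, ← h6]; exact h4
        · rw [← h5, ← h6]; exact h4.symm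
    exact key _ _ w)
  refine ⟨fun v e => if v = (P e).1 then -1 else 1,
    fun e => if h : e ∈ G.edgeSet then φ ⟨e, h⟩ else 0, ⟨⟨⟨?_, ?_⟩, ?_⟩, ?_⟩, ?_⟩
  · intro v e
    by_cases h : v = (P e).1 <;> simp [h]
  · intro u v huv
    have h4 := hP s(u, v)
    have h5 := huv.ne
    simp only [Sym2.eq_iff] at h4
    beta_reduce
    rcases h4 with ⟨h4, h6⟩ | ⟨h4, h6⟩
    · rw [h4]; simp [h5.symm, allPos]
    · rw [h4]; simp [h5, allPos]
  · intro v
    have e1 : ∑ e : G.edgeSet, (if v ∈ e.1 then (if v = (P e.1).1 then -1 else 1) * φ e else 0) =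
        - SixFlow.dv S T φ v := by
      unfold SixFlow.dv
      rw [← Finset.sum_neg_distrib]
      refine Finset.sum_congr rfl fun e _ => ?_
      have h4 : v ∈ e.1 ↔ v = S e ∨ v = T e := by
        rw [← hST e]; simp
      have h5 := hne e
      change (if v ∈ e.1 then (if v = S e then -1 else 1) * φ e else 0) = _
      rw [if_congr h4 rfl rfl]
      by_cases h6 : v = S e
      · subst h6; simp [h5.symm]
      · by_cases h7 : v = T e
        · subst h7; simp [h5, h5.symm]
        · simp [h6, h7, Ne.symm h6, Ne.symm h7]
    rw [h1, neg_zero] at e1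
    refine Eq.trans ?_ e1
    rw [← Finset.sum_filter, ← Finset.sum_filter]
    refine Finset.sum_bij (fun w hw => ⟨s(v, w), (G.mem_edgeSet).2 (mem_filter.1 hw).2⟩) ?_ ?_ ?_ ?_
    · intro w hw; simp
    · intro w hw w' hw' h
      exact Sym2.congr_right.1 (congrArg Subtype.val h)
    · rintro ⟨e, he⟩ h
      rw [mem_filter] at h
      obtain ⟨w, rfl⟩ := h.2
      exact ⟨w, by simpa using he, rfl⟩
    · intro w hw
      have h4 : s(v, w) ∈ G.edgeSet := (G.mem_edgeSet).2 (mem_filter.1 hw).2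
      beta_reduce
      rw [dif_pos h4]
  · intro e he
    simpa [he] using h3 ⟨e, he⟩
  · simpa [hf] using h2
end

section
/- Let (G, σ) be a flow-admissible signed cubic graph with exactly two negative edges n₁ and n₂. If G contains a bridge, then (G, σ) admits a nowhere-zero 6-flow (D, φ) with φ(n₁) = φ(n₂) = 1. -/
open Finset SimpleGraph

attribute [local instance] Classical.propDecidable

variable {V : Type}

set_option linter.unusedSectionVars false

section Multi
variable {E : Type} [Fintype V] [Fintype E]

/-- net out-flow of a vertex set -/
noncomputable def cs (s t : E → V) (f : E → ℤ) (X : Set V) : ℤ :=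
  ∑ e, ((if s e ∈ X then f e else 0) - (if t e ∈ X then f e else 0))

noncomputable def psum (p : V → ℤ) (X : Set V) : ℤ := ∑ w, if w ∈ X then p w else 0

noncomputable def wt (s t : E → V) (l h : E → ℤ) (X : Set V) : ℤ :=
  ∑ e, ((if s e ∈ X ∧ t e ∉ X then l e else 0) - (if t e ∈ X ∧ s e ∉ X then h e else 0))

noncomputable def dd (s t : E → V) (X : Set V) : ℕ :=
  (univ.filter (fun e => ¬ (s e ∈ X ↔ t e ∈ X))).card

noncomputable def din (s t : E → V) (A B : Set V) : ℕ :=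
  (univ.filter (fun e => (s e ∈ A ∧ t e ∈ A) ∧ ¬ (s e ∈ B ↔ t e ∈ B))).card

theorem cs_union (s t : E → V) (f : E → ℤ) (X Y : Set V) :
    cs s t f (X ∪ Y) + cs s t f (X ∩ Y) = cs s t f X + cs s t f Y := by
  unfold cs
  rw [← sum_add_distrib, ← sum_add_distrib]
  apply sum_congr rfl
  intro e _
  by_cases h1 : s e ∈ X <;> by_cases h2 : s e ∈ Y <;> by_cases h3 : t e ∈ X <;>
    by_cases h4 : t e ∈ Y <;> simp [h1, h2, h3, h4]

theorem psum_union (p : V → ℤ) (X Y : Set V) :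
    psum p (X ∪ Y) + psum p (X ∩ Y) = psum p X + psum p Y := by
  unfold psum
  rw [← sum_add_distrib, ← sum_add_distrib]
  apply sum_congr rfl
  intro e _
  by_cases h1 : e ∈ X <;> by_cases h2 : e ∈ Y <;> simp [h1, h2]

theorem cs_empty (s t : E → V) (f : E → ℤ) : cs s t f ∅ = 0 := by simp [cs]
theorem cs_univ (s t : E → V) (f : E → ℤ) : cs s t f Set.univ = 0 := by simp [cs]
theorem psum_empty (p : V → ℤ) : psum p ∅ = 0 := by simp [psum]

theorem cs_add (s t : E → V) (f g : E → ℤ) (X : Set V) :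
    cs s t (fun e => f e + g e) X = cs s t f X + cs s t g X := by
  unfold cs
  rw [← sum_add_distrib]
  apply sum_congr rfl
  intro e _
  split_ifs <;> ring

theorem cs_smul (s t : E → V) (c : ℤ) (g : E → ℤ) (X : Set V) :
    cs s t (fun e => c * g e) X = c * cs s t g X := by
  unfold cs
  rw [mul_sum]
  apply sum_congr rfl
  intro e _
  split_ifs <;> ring

theorem psum_add (f g : V → ℤ) (X : Set V) :
    psum (fun e => f e + g e) X = psum f X + psum g X := by
  unfold psum
  rw [← sum_add_distrib]
  apply sum_congr rfl
  intro e _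
  split_ifs <;> ring

theorem psum_single (p : V → ℤ) (w : V) : psum p {w} = p w := by
  simp [psum]

theorem cs_eq_psum (s t : E → V) (f : E → ℤ) (X : Set V) :
    cs s t f X = psum (fun w => cs s t f {w}) X := by
  unfold cs psum
  trans ∑ w, ∑ e, ((if s e = w then (if w ∈ X then f e else 0) else 0) - (if t e = w then (if w ∈ X then f e else 0) else 0))
  · rw [sum_comm]
    apply sum_congr rfl
    intro e _
    rw [sum_sub_distrib]
    simp
  · apply sum_congr rfl
    intro w _
    by_cases h : w ∈ X <;> simp [h]

theorem psum_univ_compl (p : V → ℤ) (X : Set V) :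
    psum p X + psum p Xᶜ = ∑ w, p w := by
  unfold psum
  rw [← sum_add_distrib]
  apply sum_congr rfl
  intro e _
  by_cases h : e ∈ X <;> simp [h]

theorem cs_compl (s t : E → V) (f : E → ℤ) (X : Set V) :
    cs s t f X + cs s t f Xᶜ = 0 := by
  have := cs_union s t f X Xᶜ
  rw [Set.union_compl_self, Set.inter_compl_self, cs_univ, cs_empty] at this
  linarith

theorem wt_super (s t : E → V) (l h : E → ℤ) (e₀ : E) (hlh : ∀ e, l e ≤ h e)
    (h0 : l e₀ < h e₀) (X Y : Set V) :
    wt s t l (Function.update h e₀ (h e₀ - 1)) X + wt s t (Function.update l e₀ (l e₀ + 1)) h Y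
      ≤ wt s t l h (X ∪ Y) + wt s t l h (X ∩ Y) + 1 := by
  have h1 : (1 : ℤ) = ∑ e : E, if e = e₀ then 1 else 0 := by simp
  rw [h1]
  unfold wt
  rw [← sum_add_distrib, ← sum_add_distrib, ← sum_add_distrib]
  apply sum_le_sum
  intro e _
  have := hlh e
  by_cases he : e = e₀
  · subst he
    simp only [Function.update_self]
    by_cases h1 : s e ∈ X <;> by_cases h2 : s e ∈ Y <;> by_cases h3 : t e ∈ X <;>
      by_cases h4 : t e ∈ Y <;> simp [h1, h2, h3, h4] <;> omega
  · simp only [Function.update_of_ne he]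
    by_cases h1 : s e ∈ X <;> by_cases h2 : s e ∈ Y <;> by_cases h3 : t e ∈ X <;>
      by_cases h4 : t e ∈ Y <;> simp [h1, h2, h3, h4, he] <;> omega

theorem hoffman_aux (s t : E → V) (p : V → ℤ) (hp : ∑ w, p w = 0) : ∀ n : ℕ, ∀ l h : E → ℤ,
    (∀ e, l e ≤ h e) → ∑ e, (h e - l e) = n → (∀ X, wt s t l h X ≤ psum p X) →
    ∃ f : E → ℤ, (∀ e, l e ≤ f e ∧ f e ≤ h e) ∧ ∀ X, cs s t f X = psum p X := by
  intro n
  induction n with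
  | zero =>
    intro l h hlh hs hw
    have heq : ∀ e, h e - l e = 0 := by
      have := (sum_eq_zero_iff_of_nonneg (s := univ) (f := fun e => h e - l e)
        (fun e _ => by have := hlh e; simp; omega)).1 (by simpa using hs)
      intro e
      exact this e (mem_univ e)
    have hwc : ∀ X, wt s t l h X = cs s t l X := by
      intro X
      unfold wt cs
      apply sum_congr rfl
      intro e _
      have := heq e
      by_cases h1 : s e ∈ X <;> by_cases h3 : t e ∈ X <;> simp [h1, h3] <;> omega
    refine ⟨l, fun e => ⟨le_rfl, hlh e⟩, fun X => ?_⟩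
    have h1 := hw X
    have h2 := hw Xᶜ
    rw [hwc] at h1 h2
    have h3 := cs_compl s t l X
    have h4 := psum_univ_compl p X
    omega
  | succ n ih =>
    intro l h hlh hs hw
    have : ∃ e₀, l e₀ < h e₀ := by
      by_contra hcon
      push Not at hcon
      have : ∑ e, (h e - l e) ≤ 0 := sum_nonpos (fun e _ => by have := hcon e; omega)
      push_cast at hs
      omega
    obtain ⟨e₀, h0⟩ := this
    by_cases c1 : ∀ X, wt s t l (Function.update h e₀ (h e₀ - 1)) X ≤ psum p X
    · obtain ⟨f, hf, hf2⟩ := ih l (Function.update h e₀ (h e₀ - 1)) (by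
        intro e
        by_cases he : e = e₀
        · subst he; simp; omega
        · simp [he, hlh e]) (by
        have : ∀ e, Function.update h e₀ (h e₀ - 1) e - l e = (h e - l e) - if e = e₀ then 1 else 0 := by
          intro e
          by_cases he : e = e₀
          · subst he; simp; ring
          · simp [he]
        rw [sum_congr rfl (fun e _ => this e), sum_sub_distrib, hs]
        simp) c1
      refine ⟨f, fun e => ⟨(hf e).1, le_trans (hf e).2 ?_⟩, hf2⟩
      by_cases he : e = e₀
      · subst he; simp
      · simp [he]
    by_cases c2 : ∀ X, wt s t (Function.update l e₀ (l e₀ + 1)) h X ≤ psum p X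
    · obtain ⟨f, hf, hf2⟩ := ih (Function.update l e₀ (l e₀ + 1)) h (by
        intro e
        by_cases he : e = e₀
        · subst he; simp; omega
        · simp [he, hlh e]) (by
        have : ∀ e, h e - Function.update l e₀ (l e₀ + 1) e = (h e - l e) - if e = e₀ then 1 else 0 := by
          intro e
          by_cases he : e = e₀
          · subst he; simp; ring
          · simp [he]
        rw [sum_congr rfl (fun e _ => this e), sum_sub_distrib, hs]
        simp) c2
      refine ⟨f, fun e => ⟨le_trans ?_ (hf e).1, (hf e).2⟩, hf2⟩
      by_cases he : e = e₀
      · subst he; simp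
      · simp [he]
    · push Not at c1 c2
      obtain ⟨X, hX⟩ := c1
      obtain ⟨Y, hY⟩ := c2
      have := wt_super s t l h e₀ hlh h0 X Y
      have h1 := hw (X ∪ Y)
      have h2 := hw (X ∩ Y)
      have h3 := psum_union p X Y
      omega

theorem hoffman (s t : E → V) (p : V → ℤ) (hp : ∑ w, p w = 0) (l h : E → ℤ)
    (hlh : ∀ e, l e ≤ h e) (hw : ∀ X, wt s t l h X ≤ psum p X) :
    ∃ f : E → ℤ, (∀ e, l e ≤ f e ∧ f e ≤ h e) ∧ ∀ X, cs s t f X = psum p X := by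
  refine hoffman_aux s t p hp (∑ e, (h e - l e)).toNat l h hlh ?_ hw
  rw [Int.toNat_of_nonneg]
  exact sum_nonneg (fun e _ => by have := hlh e; omega)


noncomputable def pp (u v x : V) : V → ℤ := fun w =>
  (if w = u then 1 else 0) + (if w = v then 1 else 0) - (if w = x then 2 else 0)

theorem psum_pp (u v x : V) (X : Set V) : psum (pp u v x) X =
    (if u ∈ X then 1 else 0) + (if v ∈ X then 1 else 0) - (if x ∈ X then 2 else 0) := by
  have : ∀ w, (if w ∈ X then pp u v x w else 0) =
      (if w = u then (if w ∈ X then 1 else 0) else 0) + (if w = v then (if w ∈ X then 1 else 0) else 0)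
       - (if w = x then (if w ∈ X then 2 else 0) else 0) := by
    intro w
    unfold pp
    by_cases h : w ∈ X <;> simp [h]
  unfold psum
  rw [sum_congr rfl (fun w _ => this w), sum_sub_distrib, sum_add_distrib]
  simp

theorem sum_pp (u v x : V) : ∑ w, pp u v x w = 0 := by
  have := psum_pp u v x Set.univ
  simpa [psum] using this

theorem psum_inter (q : V → ℤ) (X Z : Set V) (hq : ∀ w, w ∉ X → q w = 0) :
    psum q Z = psum q (Z ∩ X) := by
  unfold psum
  apply sum_congr rfl
  intro w _
  by_cases h : w ∈ X
  · simp [h]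
  · simp [h, hq w h]

theorem fixlem (s t : E → V) (X : Set V) (F : Set E) (hF : ∀ e ∈ F, s e ∈ X ∧ t e ∈ X)
    (hconn : ∀ B ⊆ X, B.Nonempty → B ≠ X → ∃ e ∈ F, ¬ (s e ∈ B ↔ t e ∈ B))
    (q : V → ℤ) (hq : ∀ w, w ∉ X → q w = 0) (hq0 : ∑ w, q w = 0) :
    ∃ ψ : E → ℤ, (∀ e, e ∉ F → ψ e = 0) ∧ ∀ Z, cs s t ψ Z = psum q Z := by
  set N : ℤ := ∑ w, |q w| with hN
  have hN0 : 0 ≤ N := sum_nonneg (fun w _ => abs_nonneg _)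
  obtain ⟨f, hf, hf2⟩ := hoffman s t q hq0 (fun e => if e ∈ F then -N else 0)
    (fun e => if e ∈ F then N else 0) (by intro e; beta_reduce; split_ifs <;> omega) (by
    intro Z
    have hterm : ∀ e : E, ((if s e ∈ Z ∧ t e ∉ Z then (if e ∈ F then -N else 0) else 0) -
        (if t e ∈ Z ∧ s e ∉ Z then (if e ∈ F then N else 0) else 0)) ≤ 0 := by
      intro e; split_ifs <;> omega
    by_cases hc : ∃ e ∈ F, ¬ (s e ∈ Z ↔ t e ∈ Z)
    · obtain ⟨e, heF, hez⟩ := hc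
      have h1 : wt s t (fun e => if e ∈ F then -N else 0) (fun e => if e ∈ F then N else 0) Z ≤ -N := by
        unfold wt
        rw [← add_sum_erase _ _ (mem_univ e)]
        have h2 := sum_nonpos (s := univ.erase e) (fun e _ => hterm e)
        have h3 : ((if s e ∈ Z ∧ t e ∉ Z then (if e ∈ F then -N else 0) else 0) -
          (if t e ∈ Z ∧ s e ∉ Z then (if e ∈ F then N else 0) else 0)) = -N := by
          by_cases a1 : s e ∈ Z <;> by_cases a2 : t e ∈ Z <;> simp_all
        linarith
      have h2 : -N ≤ psum q Z := by
        rw [hN, ← sum_neg_distrib]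
        unfold psum
        apply sum_le_sum
        intro w _
        have := neg_abs_le (q w)
        have := abs_nonneg (q w)
        split_ifs <;> omega
      exact h1.trans h2
    · push Not at hc
      have h0 : psum q Z = 0 := by
        rw [psum_inter q X Z hq]
        by_cases hB : (Z ∩ X).Nonempty
        · by_cases hB2 : Z ∩ X = X
          · rw [hB2]
            have := psum_inter q X Set.univ hq
            rw [Set.univ_inter] at this
            rw [← this]
            simpa [psum] using hq0
          · obtain ⟨e, he, hne⟩ := hconn _ Set.inter_subset_right hB hB2
            have := hc e he
            have := hF e he
            simp_all
        · rw [Set.not_nonempty_iff_eq_empty.1 hB]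
          exact psum_empty q
      rw [h0]
      exact sum_nonpos (fun e _ => hterm e))
  refine ⟨f, fun e he => ?_, hf2⟩
  have := hf e
  simp only [he, if_false] at this
  omega

theorem twolem (s t : E → V) (A : Set V)
    (hA : ∀ B ⊆ A, B.Nonempty → B ≠ A →
      2 ≤ din s t A B)
    (u v x : V) (hu : u ∈ A) (hv : v ∈ A) (hx : x ∈ A) :
    ∃ X ⊆ A, x ∈ X ∧ u ∈ X ∧ v ∈ X ∧ ∃ F : E → ℤ, (∀ e, F e = -1 ∨ F e = 0 ∨ F e = 1) ∧
      (∀ e, F e ≠ 0 → s e ∈ X ∧ t e ∈ X) ∧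
      (∀ B ⊆ X, B.Nonempty → B ≠ X → ∃ e, F e ≠ 0 ∧ ¬ (s e ∈ B ↔ t e ∈ B)) ∧
      ∀ Z, cs s t F Z = psum (pp u v x) Z := by
  obtain ⟨f, hf, hf2⟩ := hoffman s t (pp u v x) (sum_pp u v x)
    (fun e => if s e ∈ A ∧ t e ∈ A then -1 else 0) (fun e => if s e ∈ A ∧ t e ∈ A then 1 else 0)
    (by intro e; beta_reduce; split_ifs <;> omega) (by
    intro Z
    have h1 : wt s t (fun e => if s e ∈ A ∧ t e ∈ A then -1 else 0)
      (fun e => if s e ∈ A ∧ t e ∈ A then 1 else 0) Z =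
      - (din s t A (Z ∩ A) : ℤ) := by
      unfold din
      rw [card_filter]
      push_cast
      rw [← sum_neg_distrib]
      unfold wt
      apply sum_congr rfl
      intro e _
      by_cases a1 : s e ∈ Z <;> by_cases a2 : t e ∈ Z <;> by_cases a3 : s e ∈ A <;>
        by_cases a4 : t e ∈ A <;> simp [a1, a2, a3, a4]
    rw [h1, psum_pp]
    have hiu : u ∈ Z ↔ u ∈ Z ∩ A := by simp [hu]
    have hiv : v ∈ Z ↔ v ∈ Z ∩ A := by simp [hv]
    have hix : x ∈ Z ↔ x ∈ Z ∩ A := by simp [hx]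
    by_cases hB : (Z ∩ A).Nonempty
    · by_cases hB2 : Z ∩ A = A
      · rw [hB2] at hiu hiv hix
        simp [hiu, hiv, hix, hu, hv, hx]
      · have := hA _ Set.inter_subset_right hB hB2
        split_ifs <;> omega
    · rw [Set.not_nonempty_iff_eq_empty.1 hB] at hiu hiv hix
      simp at hiu hiv hix
      simp [hiu, hiv, hix])
  have hfA : ∀ e, f e ≠ 0 → s e ∈ A ∧ t e ∈ A := by
    intro e he
    by_contra hc
    have := hf e
    simp only [hc, if_false] at this
    omega
  have hfv : ∀ e, f e = -1 ∨ f e = 0 ∨ f e = 1 := by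
    intro e
    have := hf e
    by_cases hc : s e ∈ A ∧ t e ∈ A
    · simp only [hc] at this
      simp at this
      omega
    · simp only [hc] at this
      simp at this
      omega
  obtain ⟨X, hX⟩ := exists_minimal_of_wellFoundedLT
    (fun X : Set V => x ∈ X ∧ X ⊆ A ∧ ∀ e, f e ≠ 0 → (s e ∈ X ↔ t e ∈ X))
    ⟨A, hx, subset_rfl, fun e he => by simp [hfA e he]⟩
  obtain ⟨⟨hxX, hXA, hXc⟩, hmin⟩ := hX
  have hcsX : cs s t f X = 0 := by
    unfold cs
    apply sum_eq_zero
    intro e _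
    by_cases h0 : f e = 0
    · simp [h0]
    · have := hXc e h0
      by_cases a : s e ∈ X <;> simp_all
  rw [hf2, psum_pp] at hcsX
  have huX : u ∈ X := by
    by_contra hc
    simp [hc, hxX] at hcsX
    split_ifs at hcsX <;> omega
  have hvX : v ∈ X := by
    by_contra hc
    simp [hc, hxX] at hcsX
    split_ifs at hcsX <;> omega
  refine ⟨X, hXA, hxX, huX, hvX, fun e => if s e ∈ X then f e else 0, ?_, ?_, ?_, ?_⟩
  · intro e
    have := hfv e
    simp only []
    split_ifs <;> omega
  · intro e he
    by_cases a : s e ∈ X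
    · simp only [a, if_true] at he
      exact ⟨a, (hXc e he).1 a⟩
    · simp [a] at he
  · intro B hBX hBne hBX2
    by_contra hc
    push Not at hc
    have hc' : ∀ e, f e ≠ 0 → (s e ∈ B ↔ t e ∈ B) := by
      intro e he
      by_cases a : s e ∈ X
      · exact hc e (by simpa [a] using he)
      · have h2 : t e ∉ X := fun h => a ((hXc e he).2 h)
        exact ⟨fun h => absurd (hBX h) a, fun h => absurd (hBX h) h2⟩
    by_cases hxB : x ∈ B
    · exact hBX2 (subset_antisymm hBX (hmin ⟨hxB, hBX.trans hXA, hc'⟩ hBX))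
    · have := hmin (y := X \ B) ⟨⟨hxX, hxB⟩, Set.sdiff_subset.trans hXA, fun e he => by
        simp [hc' e he, hXc e he]⟩ Set.sdiff_subset
      obtain ⟨y, hy⟩ := hBne
      exact (this (hBX hy)).2 hy
  · intro Z
    have hz : psum (pp u v x) Z = psum (pp u v x) (Z ∩ X) := by
      rw [psum_pp, psum_pp]
      simp [huX, hvX, hxX]
    rw [hz, ← hf2]
    unfold cs
    apply sum_congr rfl
    intro e _
    by_cases h0 : f e = 0
    · simp [h0]
    · have := hXc e h0
      by_cases a : s e ∈ X
      · have b := this.1 a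
        simp [a, b]
      · have b : t e ∉ X := fun h => a (this.2 h)
        simp [a, b]


theorem psum_smul (c : ℤ) (f : V → ℤ) (X : Set V) :
    psum (fun w => c * f w) X = c * psum f X := by
  unfold psum
  rw [mul_sum]
  apply sum_congr rfl
  intro e _
  split_ifs <;> ring

theorem psum_sub (f g : V → ℤ) (X : Set V) :
    psum (fun e => f e - g e) X = psum f X - psum g X := by
  unfold psum
  rw [← sum_sub_distrib]
  apply sum_congr rfl
  intro e _
  split_ifs <;> ring

theorem cs_zero_of (s t : E → V) (f : E → ℤ) (X : Set V)
    (h : ∀ e, f e ≠ 0 → (s e ∈ X ↔ t e ∈ X)) : cs s t f X = 0 := by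
  unfold cs
  apply sum_eq_zero
  intro e _
  by_cases h0 : f e = 0
  · simp [h0]
  · have := h e h0
    by_cases a : s e ∈ X
    · simp [a, this.1 a]
    · simp [a, show t e ∉ X from fun h => a (this.2 h)]

theorem cs_single (s t : E → V) (e₁ : E) (k : ℤ) (X : Set V) :
    cs s t (fun e => if e = e₁ then k else 0) X =
      ((if s e₁ ∈ X then 1 else 0) - (if t e₁ ∈ X then 1 else 0)) * k := by
  unfold cs
  rw [sum_eq_single e₁]
  · simp
    split_ifs <;> ring
  · intro b _ hb
    simp [hb]
  · simp

theorem tutte (s t : E → V) (p : V → ℤ) (hp0 : ∑ w, p w = 0) (hp : ∀ X, psum p X ≤ 5)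
    (r : E → ℤ) (hr : ∀ e, 1 ≤ r e ∧ r e ≤ 5) (hd : ∀ w, 6 ∣ cs s t r {w} - p w) :
    ∃ f : E → ℤ, (∀ e, f e ≠ 0 ∧ |f e| < 6) ∧ ∀ X, cs s t f X = psum p X := by
  choose q hq using hd
  have hsum : ∀ X, 6 * psum q X = cs s t r X - psum p X := by
    intro X
    rw [cs_eq_psum, ← psum_smul, ← psum_sub]
    congr 1
    funext w
    exact (hq w).symm
  have hq0 : ∑ w, q w = 0 := by
    have := hsum Set.univ
    rw [cs_univ] at this
    simp only [psum, Set.mem_univ, if_true] at this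
    omega
  obtain ⟨y, hy, hy2⟩ := hoffman s t q hq0 (fun _ => 0) (fun _ => 1) (by intro e; norm_num) (by
    intro X
    have h1 : 5 * wt s t (fun _ => 0) (fun _ => 1) X ≤ cs s t r X := by
      unfold wt cs
      rw [mul_sum]
      apply sum_le_sum
      intro e _
      have := hr e
      by_cases a1 : s e ∈ X <;> by_cases a2 : t e ∈ X <;> simp [a1, a2] <;> omega
    have h2 : wt s t (fun _ => 0) (fun _ => 1) X ≤ 0 := by
      unfold wt
      apply sum_nonpos
      intro e _
      by_cases a1 : s e ∈ X <;> by_cases a2 : t e ∈ X <;> simp [a1, a2]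
    have := hsum X
    have := hp X
    omega)
  refine ⟨fun e => r e + (-6) * y e, ?_, ?_⟩
  · intro e
    have := hr e
    have := hy e
    beta_reduce
    rw [abs_lt]
    omega
  · intro X
    rw [cs_add, cs_smul, hy2]
    have := hsum X
    omega

def FInv (s t : E → V) (q : V → ℤ) (Y : Set V) (F φ : E → ℤ) : Prop :=
  (∀ e, s e ∈ Y → t e ∈ Y → φ e = 0) ∧ (∀ e, s e ∈ Y ∨ t e ∈ Y → F e = 0) ∧
  (∀ e, ¬ (s e ∈ Y ∧ t e ∈ Y) → ¬ (2 ∣ F e) ∨ ¬ (3 ∣ φ e)) ∧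
  (∀ w, 2 ∣ cs s t F {w}) ∧ ∀ w, w ∉ Y → 3 ∣ cs s t φ {w} - q w

theorem extendlem (s t : E → V) (q : V → ℤ) (Y X : Set V) (hdisj : ∀ w ∈ X, w ∉ Y)
    (FX : E → ℤ) (hFv : ∀ e, FX e = -1 ∨ FX e = 0 ∨ FX e = 1)
    (hFs : ∀ e, FX e ≠ 0 → s e ∈ X ∧ t e ∈ X)
    (hconn : ∀ B ⊆ X, B.Nonempty → B ≠ X → ∃ e, FX e ≠ 0 ∧ ¬ (s e ∈ B ↔ t e ∈ B))
    (F φ : E → ℤ) (hI : FInv s t q (Y ∪ X) F φ) (c : E → ℤ)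
    (hc1 : ∀ e, c e ≠ 0 → s e ∈ Y ∪ X ∧ t e ∈ Y ∪ X)
    (hc2 : ∀ e, s e ∈ Y → t e ∈ Y → c e = 0)
    (hc3 : ∀ e, s e ∈ Y ∪ X → t e ∈ Y ∪ X → ¬ (s e ∈ Y ∧ t e ∈ Y) → ¬ (3 ∣ c e))
    (hsum : 3 ∣ psum q X - cs s t φ X - cs s t c X) (x : V) (hx : x ∈ X) :
    ∃ φ' : E → ℤ, (∀ e, s e ∈ Y → t e ∈ Y → φ' e = 0) ∧
      (∀ e, s e ∈ Y ∨ t e ∈ Y → F e + FX e = 0) ∧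
      (∀ e, ¬ (s e ∈ Y ∧ t e ∈ Y) → ¬ (2 ∣ F e + FX e) ∨ ¬ (3 ∣ φ' e)) ∧
      ∀ w, w ∉ Y → 3 ∣ cs s t φ' {w} - q w := by
  obtain ⟨I1, I2, I3, I4, I5⟩ := hI
  obtain ⟨m, hm⟩ := hsum
  set q1 : V → ℤ := fun w => (if w ∈ X then q w - cs s t φ {w} - cs s t c {w} else 0) -
    (if w = x then 3 * m else 0) with hq1
  have hqX : ∀ w, w ∉ X → q1 w = 0 := by
    intro w hw
    have : w ≠ x := fun h => hw (h ▸ hx)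
    simp [hq1, hw, this]
  have hq0 : ∑ w, q1 w = 0 := by
    rw [hq1, sum_sub_distrib]
    have : ∑ w, (if w ∈ X then q w - cs s t φ {w} - cs s t c {w} else 0) =
        psum q X - cs s t φ X - cs s t c X := by
      rw [cs_eq_psum s t φ X, cs_eq_psum s t c X, ← psum_sub, ← psum_sub]
      rfl
    rw [this, hm]
    simp
  obtain ⟨ψ, hψ1, hψ2⟩ := fixlem s t X {e | FX e ≠ 0} (fun e he => hFs e he) hconn q1 hqX hq0
  have hψ0 : ∀ e, FX e = 0 → ψ e = 0 := fun e he => hψ1 e (by simp [he])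
  refine ⟨fun e => (φ e + c e) + ψ e, ?_, ?_, ?_, ?_⟩
  · intro e h1 h2
    have hF : FX e = 0 := by
      by_contra h
      exact hdisj _ (hFs e h).1 h1
    simp [I1 e (Or.inl h1) (Or.inl h2), hc2 e h1 h2, hψ0 e hF]
  · intro e he
    have hF : FX e = 0 := by
      by_contra h
      rcases he with he | he
      · exact hdisj _ (hFs e h).1 he
      · exact hdisj _ (hFs e h).2 he
    rw [hF, I2 e (he.imp Or.inl Or.inl)]
    rfl
  · intro e he
    by_cases hin : s e ∈ Y ∪ X ∧ t e ∈ Y ∪ X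
    · beta_reduce
      rw [I2 e (Or.inl hin.1), I1 e hin.1 hin.2]
      by_cases hF : FX e = 0
      · right
        have := hc3 e hin.1 hin.2 he
        rw [hψ0 e hF]
        simpa using this
      · left
        rcases hFv e with h | h | h
        · rw [h]; norm_num
        · exact absurd h hF
        · rw [h]; norm_num
    · have hF : FX e = 0 := by
        by_contra h
        exact hin ⟨Or.inr (hFs e h).1, Or.inr (hFs e h).2⟩
      have hc0 : c e = 0 := by
        by_contra h
        exact hin (hc1 e h)
      have := I3 e hin
      simp only [hF, hc0, hψ0 e hF, add_zero]
      exact this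
  · intro w hw
    rw [cs_add, cs_add, hψ2, psum_single]
    by_cases hwX : w ∈ X
    · by_cases hwx : w = x
      · simp only [hq1, hwX, hwx, hx, if_true]
        exact ⟨-m, by ring⟩
      · simp only [hq1, hwX, hwx, if_true, if_false]
        exact ⟨0, by ring⟩
    · rw [hqX w hwX, cs_zero_of s t c {w}]
      · simpa using I5 w (by simp [hw, hwX])
      · intro e he
        have := hc1 e he
        have h1 : s e ≠ w := by
          rintro rfl
          rcases this.1 with h | h
          · exact hw h
          · exact hwX h
        have h2 : t e ≠ w := by
          rintro rfl
          rcases this.2 with h | h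
          · exact hw h
          · exact hwX h
        simp [h1, h2]

theorem din_sub (s t : E → V) (Z A B : Set V) (hAZ : A ⊆ Z) (hBA : B ⊆ A) :
    din s t Z B + din s t Z (A \ B) ≤ 2 * din s t A B + din s t Z A := by
  unfold din
  rw [card_filter, card_filter, card_filter, card_filter, mul_sum, ← sum_add_distrib,
    ← sum_add_distrib]
  apply sum_le_sum
  intro e _
  have h1 := @hAZ (s e)
  have h2 := @hAZ (t e)
  have h3 := @hBA (s e)
  have h4 := @hBA (t e)
  by_cases a1 : s e ∈ B <;> by_cases a2 : t e ∈ B <;> by_cases a3 : s e ∈ A <;>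
    by_cases a4 : t e ∈ A <;> by_cases a5 : s e ∈ Z <;> by_cases a6 : t e ∈ Z <;> simp_all

theorem din_self (s t : E → V) (Z : Set V) : din s t Z Z = 0 := by
  unfold din
  rw [card_eq_zero, filter_eq_empty_iff]
  intro e _
  tauto

noncomputable def kk (s t : E → V) (Y A : Set V) : ℕ :=
  (univ.filter (fun e => ¬ (s e ∈ A ↔ t e ∈ A) ∧ (s e ∈ Y ∨ t e ∈ Y))).card

theorem dd_le (s t : E → V) (Y A : Set V) (hAY : A ⊆ Yᶜ) :
    dd s t A ≤ din s t Yᶜ A + kk s t Y A := by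
  unfold dd din kk
  rw [card_filter, card_filter, card_filter, ← sum_add_distrib]
  apply sum_le_sum
  intro e _
  have h1 := @hAY (s e)
  have h2 := @hAY (t e)
  by_cases a1 : s e ∈ A <;> by_cases a2 : t e ∈ A <;> by_cases a3 : s e ∈ Y <;>
    by_cases a4 : t e ∈ Y <;> simp_all

theorem sgnlem (K g₁ g₂ : ℤ) (h1 : g₁ = 1 ∨ g₁ = -1) (h2 : g₂ = 1 ∨ g₂ = -1) :
    ∃ a b : ℤ, (a = 1 ∨ a = -1) ∧ (b = 1 ∨ b = -1) ∧ 3 ∣ K - g₁ * a - g₂ * b := by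
  have : K % 3 = 0 ∨ K % 3 = 1 ∨ K % 3 = 2 := by omega
  rcases this with h | h | h
  · exact ⟨g₁, -g₂, h1, by omega, by rcases h1 with rfl | rfl <;> rcases h2 with rfl | rfl <;> omega⟩
  · exact ⟨-g₁, -g₂, by omega, by omega, by rcases h1 with rfl | rfl <;> rcases h2 with rfl | rfl <;> omega⟩
  · exact ⟨g₁, g₂, h1, h2, by rcases h1 with rfl | rfl <;> rcases h2 with rfl | rfl <;> omega⟩

set_option maxHeartbeats 2000000 in
theorem steplem (s t : E → V) (q : V → ℤ) : ∀ n : ℕ, ∀ Y : Set V, (Yᶜ).ncard = n →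
    (∀ B : Set V, B ⊆ Yᶜ → B.Nonempty → 3 ≤ dd s t B) →
    ∃ F φ : E → ℤ, FInv s t q Y F φ := by
  intro n
  induction n using Nat.strong_induction_on with
  | _ n ih =>
  intro Y hn hY
  by_cases hne : (Yᶜ).Nonempty
  swap
  · rw [Set.not_nonempty_iff_eq_empty, Set.compl_empty_iff] at hne
    refine ⟨fun _ => 0, fun _ => 0, ?_⟩
    subst hne
    refine ⟨by simp, by simp, by simp, by simp [cs], by simp⟩
  obtain ⟨A, ⟨hAne, hAY, hA1⟩, hmin⟩ := exists_minimal_of_wellFoundedLT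
    (fun A : Set V => A.Nonempty ∧ A ⊆ Yᶜ ∧ din s t Yᶜ A ≤ 1)
    ⟨Yᶜ, hne, subset_rfl, by
      have := din_self s t Yᶜ
      omega⟩
  have hmin' : ∀ B : Set V, B.Nonempty → B ⊆ A → B ≠ A → 2 ≤ din s t Yᶜ B := by
    intro B h1 h2 h3
    by_contra h
    exact h3 (subset_antisymm h2 (hmin ⟨h1, h2.trans hAY, by omega⟩ h2))
  have hA2 : ∀ B ⊆ A, B.Nonempty → B ≠ A → 2 ≤ din s t A B := by
    intro B h1 h2 h3
    have k1 := hmin' B h2 h1 h3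
    have k2 := hmin' (A \ B) (by
      rw [Set.nonempty_iff_ne_empty]
      intro h
      rw [Set.sdiff_eq_empty] at h
      exact h3 (subset_antisymm h1 h)) Set.sdiff_subset (by
      intro h
      obtain ⟨y, hy⟩ := h2
      have : y ∈ A \ B := by rw [h]; exact h1 hy
      exact this.2 hy)
    have := din_sub s t Yᶜ A B hAY h1
    omega
  have hK : 2 ≤ (univ.filter (fun e => ¬ (s e ∈ A ↔ t e ∈ A) ∧ (s e ∈ Y ∨ t e ∈ Y))).card := by
    have h3 := hY A hAY hAne
    have := dd_le s t Y A hAY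
    unfold kk at this
    omega
  obtain ⟨e₁, he₁, e₂, he₂, hne12⟩ := one_lt_card.1 hK
  have hend : ∀ e ∈ (univ.filter (fun e => ¬ (s e ∈ A ↔ t e ∈ A) ∧ (s e ∈ Y ∨ t e ∈ Y))),
      (s e ∈ A ∧ t e ∈ Y) ∨ (s e ∈ Y ∧ t e ∈ A) := by
    intro e he
    simp only [mem_filter, mem_univ, true_and] at he
    have h1 := @hAY (s e)
    have h2 := @hAY (t e)
    simp only [Set.mem_compl_iff] at h1 h2
    tauto
  have hend1 := hend e₁ he₁
  have hend2 := hend e₂ he₂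
  obtain ⟨X, hXA, hx1, hx2, -, FX, hFv, hFs, hconn, hcsF⟩ := twolem s t A hA2
    (if s e₂ ∈ A then s e₂ else t e₂) (if s e₂ ∈ A then s e₂ else t e₂)
    (if s e₁ ∈ A then s e₁ else t e₁) (by split_ifs <;> tauto) (by split_ifs <;> tauto)
    (by split_ifs <;> tauto)
  have hdisj : ∀ w ∈ X, w ∉ Y := fun w hw => hAY (hXA hw)
  have hnA : ∀ w ∈ Y, w ∉ A := fun w hw h => hAY h hw
  have hnX : ∀ w ∈ Y, w ∉ X := fun w hw h => hAY (hXA h) hw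
  have hX1 : (s e₁ ∈ X ∧ t e₁ ∈ Y) ∨ (s e₁ ∈ Y ∧ t e₁ ∈ X) := by
    rcases hend1 with h | h
    · left; simpa [h.1, h.2] using hx1
    · right; simpa [hnA _ h.1, h.1] using hx1
  have hX2 : (s e₂ ∈ X ∧ t e₂ ∈ Y) ∨ (s e₂ ∈ Y ∧ t e₂ ∈ X) := by
    rcases hend2 with h | h
    · left; simpa [h.1, h.2] using hx2
    · right; simpa [hnA _ h.1, h.1] using hx2
  have hlt : ((Y ∪ X)ᶜ).ncard < n := by
    rw [← hn]
    apply Set.ncard_lt_ncard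
    · refine ⟨by intro w; simp; tauto, ?_⟩
      intro h
      have := h (hAY (hXA hx1))
      exact this (Or.inr hx1)
    · exact Set.toFinite _
  obtain ⟨F, φ, hI⟩ := ih _ hlt (Y ∪ X) rfl (fun B hB hB2 => hY B (by
    intro w hw
    have := hB hw
    simp at this
    exact this.1) hB2)
  set base : E → ℤ := fun e => if (s e ∈ Y ∪ X ∧ t e ∈ Y ∪ X) ∧ ¬ (s e ∈ Y ∧ t e ∈ Y) ∧ e ≠ e₁ ∧ e ≠ e₂
    then 1 else 0 with hbase
  obtain ⟨a, b, ha, hb, hab⟩ := sgnlem (psum q X - cs s t φ X - cs s t base X)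
    ((if s e₁ ∈ X then 1 else 0) - (if t e₁ ∈ X then 1 else 0))
    ((if s e₂ ∈ X then 1 else 0) - (if t e₂ ∈ X then 1 else 0))
    (by rcases hX1 with h | h
        · simp [h.1, hnX _ h.2]
        · simp [h.2, hnX _ h.1])
    (by rcases hX2 with h | h
        · simp [h.1, hnX _ h.2]
        · simp [h.2, hnX _ h.1])
  set c : E → ℤ := fun e => (base e + (if e = e₁ then a else 0)) + (if e = e₂ then b else 0) with hc
  have hb1 : base e₁ = 0 := by simp [hbase]
  have hb2 : base e₂ = 0 := by simp [hbase]
  have hc_1 : c e₁ = a := by simp [hc, hb1, hne12]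
  have hc_2 : c e₂ = b := by simp [hc, hb2, hne12.symm]
  have hc_o : ∀ e, e ≠ e₁ → e ≠ e₂ → c e = base e := by
    intro e h1 h2
    simp [hc, h1, h2]
  obtain ⟨φ', p1, p2, p3, p4⟩ := extendlem s t q Y X hdisj FX hFv hFs hconn F φ hI c
    (by
      intro e he
      by_cases h1 : e = e₁
      · subst h1
        simp only [Set.mem_union]; tauto
      by_cases h2 : e = e₂
      · subst h2
        simp only [Set.mem_union]; tauto
      rw [hc_o e h1 h2, hbase] at he
      simp only [ne_eq, ite_eq_right_iff, not_forall] at he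
      exact he.1.1)
    (by
      intro e k1 k2
      have h1 : e ≠ e₁ := by
        rintro rfl
        rcases hX1 with h | h
        · exact hnX _ k1 h.1
        · exact hnX _ k2 h.2
      have h2 : e ≠ e₂ := by
        rintro rfl
        rcases hX2 with h | h
        · exact hnX _ k1 h.1
        · exact hnX _ k2 h.2
      rw [hc_o e h1 h2, hbase]
      simp [k1, k2])
    (by
      intro e k1 k2 k3
      by_cases h1 : e = e₁
      · subst h1
        rw [hc_1]; omega
      by_cases h2 : e = e₂
      · subst h2
        rw [hc_2]; omega
      have hb1 : base e = 1 := if_pos ⟨⟨k1, k2⟩, k3, h1, h2⟩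
      rw [hc_o e h1 h2, hb1]
      norm_num)
    (by
      rw [hc, cs_add, cs_add, cs_single, cs_single]
      obtain ⟨k, hk⟩ := hab
      exact ⟨k, by rw [← hk]; ring⟩)
    _ hx1
  refine ⟨fun e => F e + FX e, φ', p1, p2, p3, ?_, p4⟩
  intro w
  rw [cs_add, hcsF, psum_single]
  apply dvd_add (hI.2.2.2.1 w)
  unfold pp
  split_ifs <;> norm_num

theorem caseC (s t : E → V) (u v x : V)
    (h2 : ∀ X : Set V, X.Nonempty → X ≠ Set.univ →
      2 ≤ dd s t X ∧ (dd s t X = 2 → psum (pp u v x) X ≠ 0)) :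
    ∃ f : E → ℤ, (∀ e, f e ≠ 0 ∧ |f e| < 6) ∧ ∀ X, cs s t f X = psum (pp u v x) X := by
  obtain ⟨X, -, hxX, huX, hvX, FX, hFv, hFs, hconn, hcsF⟩ := twolem s t Set.univ (by
    intro B _ h3 h4
    have := (h2 B h3 h4).1
    simpa [din, dd] using this) u v x trivial trivial trivial
  obtain ⟨F, φ, hI⟩ := steplem s t (pp u v x) _ X rfl (by
    intro B hB hB2
    have hu : u ∉ B := fun h => hB h huX
    have hv : v ∉ B := fun h => hB h hvX
    have hx : x ∉ B := fun h => hB h hxX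
    have := h2 B hB2 (fun h => hu (h ▸ trivial))
    rw [psum_pp] at this
    simp [hu, hv, hx] at this
    omega)
  set c : E → ℤ := fun e => if s e ∈ X ∧ t e ∈ X then 1 else 0 with hc
  have hI' : FInv s t (pp u v x) (∅ ∪ X) F φ := by rwa [Set.empty_union]
  obtain ⟨φ', p1, p2, p3, p4⟩ := extendlem s t (pp u v x) ∅ X (by simp) FX hFv hFs hconn F φ hI' c
    (by intro e he; simpa [hc] using he) (by simp) (by
      intro e h3 h4 _
      rw [Set.empty_union] at h3 h4
      simp [hc, h3, h4]) (by
      have k1 : cs s t c X = 0 := cs_zero_of _ _ _ _ (by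
        intro e he
        have : s e ∈ X ∧ t e ∈ X := by simpa [hc] using he
        simp [this])
      have k2 := cs_compl s t φ X
      have k3 : 3 ∣ cs s t φ Xᶜ := by
        rw [cs_eq_psum]
        unfold psum
        apply dvd_sum
        intro w _
        by_cases hw : w ∈ X
        · simp [hw]
        · have := hI.2.2.2.2 w hw
          have k4 : pp u v x w = 0 := by
            have h1 : w ≠ u := fun h => hw (h ▸ huX)
            have h2 : w ≠ v := fun h => hw (h ▸ hvX)
            have h3 : w ≠ x := fun h => hw (h ▸ hxX)
            simp [pp, h1, h2, h3]
          rw [k4] at this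
          simpa [hw] using this
      rw [psum_pp, k1]
      simp [huX, hvX, hxX]
      omega) x hxX
  obtain ⟨f, hf1, hf2⟩ := tutte s t (pp u v x) (sum_pp u v x) (by
    intro X
    rw [psum_pp]
    split_ifs <;> norm_num) (fun e => (3 * (F e + FX e) + 4 * φ' e) % 6) (by
      intro e
      have := p3 e (by simp)
      beta_reduce
      omega) (by
      intro w
      have q1 := p4 w (by simp)
      have q2 : 2 ∣ cs s t (fun e => F e + FX e) {w} - pp u v x w := by
        rw [cs_add, hcsF, psum_single]
        simpa using hI.2.2.2.1 w
      set r0 : E → ℤ := fun e => 3 * (F e + FX e) + 4 * φ' e with hr0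
      have q3 : (fun e => (3 * (F e + FX e) + 4 * φ' e) % 6) = fun e => r0 e + (-6) * (r0 e / 6) := by
        funext e
        have := Int.emod_add_mul_ediv (r0 e) 6
        simp only [hr0] at this ⊢
        omega
      rw [q3, cs_add, cs_smul]
      have q4 : cs s t r0 {w} = 3 * cs s t (fun e => F e + FX e) {w} + 4 * cs s t φ' {w} := by
        rw [hr0, cs_add, cs_smul s t 3 (fun e => F e + FX e), cs_smul]
      rw [q4]
      omega)
  exact ⟨f, hf1, hf2⟩


theorem finish (s t : E → V) (p : V → ℤ) (hp : ∑ w, p w = 0) (f : E → ℤ) (a b : V)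
    (h : ∀ X : Set V, (a ∈ X ↔ b ∈ X) → cs s t f X = psum p X) (A : Set V)
    (ha : a ∈ A) (hb : b ∉ A) (hA : cs s t f A = psum p A) :
    ∀ X, cs s t f X = psum p X := by
  have hsing : ∀ X : Set V, a ∈ X → b ∉ X →
      cs s t f X - psum p X = cs s t f {a} - psum p {a} := by
    intro X h1 h2
    have k1 := cs_union s t f {a} (X \ {a})
    have k2 := psum_union p {a} (X \ {a})
    have e1 : {a} ∪ X \ {a} = X := by
      ext w; by_cases hw : w = a <;> simp [hw, h1]
    have e2 : {a} ∩ (X \ {a}) = (∅ : Set V) := by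
      ext w; simp
    rw [e1, e2] at k1 k2
    rw [cs_empty] at k1
    rw [psum_empty] at k2
    have := h (X \ {a}) (by simp [h2])
    omega
  have hs1 : ∀ X : Set V, a ∈ X → b ∉ X → cs s t f X = psum p X := by
    intro X h1 h2
    have := hsing X h1 h2
    have := hsing A ha hb
    omega
  intro X
  by_cases h1 : a ∈ X <;> by_cases h2 : b ∈ X
  · exact h X (by simp [h1, h2])
  · exact hs1 X h1 h2
  · have k1 := hs1 Xᶜ h1 (by simpa using h2)
    have k2 := cs_compl s t f X
    have k3 := psum_univ_compl p X
    omega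
  · exact h X (by simp [h1, h2])

theorem finish' (s t : E → V) (p : V → ℤ) (hp : ∑ w, p w = 0) (f : E → ℤ) (a b : V)
    (h : ∀ X : Set V, (a ∈ X ↔ b ∈ X) → cs s t f X = psum p X) (A : Set V)
    (hab : ¬ (a ∈ A ↔ b ∈ A)) (hA : cs s t f A = psum p A) :
    ∀ X, cs s t f X = psum p X := by
  by_cases h1 : a ∈ A
  · exact finish s t p hp f a b h A h1 (by tauto) hA
  · exact finish s t p hp f b a (fun X hX => h X hX.symm) A (by tauto) h1 hA

theorem uncontract (s t : E → V) (p : V → ℤ) (hp : ∑ w, p w = 0) (f : E → ℤ) (e₀ : E)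
    (h : ∀ X : Set V, (s e₀ ∈ X ↔ t e₀ ∈ X) → cs s t f X = psum p X) (A : Set V)
    (hA : ¬ (s e₀ ∈ A ↔ t e₀ ∈ A)) :
    ∃ k : ℤ, (k = psum p A - cs s t (fun e => if e = e₀ then 0 else f e) A ∨
      k = -(psum p A - cs s t (fun e => if e = e₀ then 0 else f e) A)) ∧
      ∀ X, cs s t (fun e => if e = e₀ then k else f e) X = psum p X := by
  have hk : ∀ k X, cs s t (fun e => if e = e₀ then k else f e) X =
      cs s t (fun e => if e = e₀ then 0 else f e) X +
      ((if s e₀ ∈ X then 1 else 0) - (if t e₀ ∈ X then 1 else 0)) * k := by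
    intro k X
    rw [← cs_single, ← cs_add]
    congr 1
    funext e
    split_ifs <;> simp
  have hk2 : ∀ k X, (s e₀ ∈ X ↔ t e₀ ∈ X) →
      cs s t (fun e => if e = e₀ then k else f e) X = cs s t f X := by
    intro k X hX
    have e1 : f = fun e => if e = e₀ then f e₀ else f e := by
      funext e
      split_ifs with h
      · rw [h]
      · rfl
    conv_rhs => rw [e1]
    rw [hk, hk (f e₀)]
    by_cases h1 : s e₀ ∈ X
    · simp [h1, hX.1 h1]
    · simp [h1, show t e₀ ∉ X from fun h => h1 (hX.2 h)]
  set C := cs s t (fun e => if e = e₀ then 0 else f e) A with hC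
  by_cases h1 : s e₀ ∈ A
  · have h2 : t e₀ ∉ A := by tauto
    refine ⟨psum p A - C, Or.inl rfl, finish' s t p hp _ (s e₀) (t e₀) (fun X hX => ?_) A hA ?_⟩
    · rw [hk2 _ _ hX, h X hX]
    · rw [hk, ← hC]
      simp [h1, h2]
  · have h2 : t e₀ ∈ A := by tauto
    refine ⟨-(psum p A - C), Or.inr rfl, finish' s t p hp _ (s e₀) (t e₀) (fun X hX => ?_) A hA ?_⟩
    · rw [hk2 _ _ hX, h X hX]
    · rw [hk, ← hC]
      simp [h1, h2]

end Multi

theorem mainY : ∀ n : ℕ, ∀ (V E : Type) [Fintype V] [Fintype E] (s t : E → V) (u v x : V),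
    Fintype.card V = n → (∀ X : Set V, dd s t X = 0 → psum (pp u v x) X = 0) →
    (∀ X : Set V, dd s t X = 1 → psum (pp u v x) X ≠ 0) →
    ∃ f : E → ℤ, (∀ e, f e ≠ 0 ∧ |f e| < 6) ∧ ∀ X, cs s t f X = psum (pp u v x) X := by
  intro n
  induction n using Nat.strong_induction_on with
  | _ n ih =>
  intro V E _ _ s t u v x hn h0 h1
  have contract : ∀ a b : V, a ≠ b → ∃ f : E → ℤ, (∀ e, f e ≠ 0 ∧ |f e| < 6) ∧
      ∀ X : Set V, (a ∈ X ↔ b ∈ X) → cs s t f X = psum (pp u v x) X := by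
    intro a b hab
    set π : V → {w : V // w ≠ b} := fun w => if h : w = b then ⟨a, hab⟩ else ⟨w, h⟩ with hπ
    have hdd : ∀ X' : Set {w : V // w ≠ b}, dd (fun e => π (s e)) (fun e => π (t e)) X' = dd s t (π ⁻¹' X') := by
      intro X'
      rfl
    have hcs : ∀ f, ∀ X' : Set {w : V // w ≠ b}, cs (fun e => π (s e)) (fun e => π (t e)) f X' = cs s t f (π ⁻¹' X') := by
      intro f X'
      rfl
    have hps : ∀ X' : Set {w : V // w ≠ b}, psum (pp (π u) (π v) (π x)) X' = psum (pp u v x) (π ⁻¹' X') := by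
      intro X'
      rw [psum_pp, psum_pp]
      rfl
    obtain ⟨f, hf1, hf2⟩ := ih (Fintype.card {w : V // w ≠ b}) (by
        rw [← hn]
        exact Fintype.card_subtype_lt (x := b) (by simp)) {w : V // w ≠ b} E
      (fun e => π (s e)) (fun e => π (t e)) (π u) (π v) (π x) rfl
      (fun X' hX => by rw [hps]; exact h0 _ (by rw [← hdd]; exact hX))
      (fun X' hX => by rw [hps]; exact h1 _ (by rw [← hdd]; exact hX))
    refine ⟨f, hf1, fun X hX => ?_⟩
    have hX' : X = π ⁻¹' {w | w.1 ∈ X} := by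
      ext w
      by_cases hw : w = b
      · simp [hπ, hw, hX]
      · simp [hπ, hw]
    rw [hX', ← hcs, ← hps, hf2]
  by_cases c0 : ∃ A : Set V, A.Nonempty ∧ A ≠ Set.univ ∧ dd s t A = 0
  · obtain ⟨A, ⟨a, ha⟩, hA, hd⟩ := c0
    obtain ⟨b, hb⟩ := (Set.ne_univ_iff_exists_notMem A).1 hA
    obtain ⟨f, hf1, hf2⟩ := contract a b (fun h => hb (h ▸ ha))
    refine ⟨f, hf1, finish s t _ (sum_pp u v x) f a b hf2 A ha hb ?_⟩
    rw [h0 A hd]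
    apply cs_zero_of
    intro e _
    unfold dd at hd
    rw [card_eq_zero, filter_eq_empty_iff] at hd
    simpa using hd (mem_univ e)
  by_cases c1 : ∃ A : Set V, dd s t A = 1
  · obtain ⟨A, hd⟩ := c1
    have hpA := h1 A hd
    unfold dd at hd
    obtain ⟨e₀, he⟩ := card_eq_one.1 hd
    have hmem : ∀ e, ¬ (s e ∈ A ↔ t e ∈ A) ↔ e = e₀ := by
      intro e
      have := Finset.ext_iff.1 he e
      simpa using this
    have hcr := (hmem e₀).2 rfl
    obtain ⟨f, hf1, hf2⟩ := contract (s e₀) (t e₀) (fun h => hcr (by rw [h]))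
    obtain ⟨k, hk, hk2⟩ := uncontract s t _ (sum_pp u v x) f e₀ hf2 A hcr
    refine ⟨_, ?_, hk2⟩
    have hz : cs s t (fun e => if e = e₀ then 0 else f e) A = 0 := by
      apply cs_zero_of
      intro e h
      by_contra hc
      rw [hmem] at hc
      simp [hc] at h
    rw [hz] at hk
    intro e
    beta_reduce
    split_ifs
    · rw [abs_lt]
      have hpA' := psum_pp u v x A
      have : -2 ≤ psum (pp u v x) A ∧ psum (pp u v x) A ≤ 2 := by
        rw [hpA']
        split_ifs <;> norm_num
      omega
    · exact hf1 e
  by_cases c2 : ∃ A : Set V, dd s t A = 2 ∧ psum (pp u v x) A = 0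
  · obtain ⟨A, hd, hpA⟩ := c2
    unfold dd at hd
    obtain ⟨e₀, e₁, hne, he⟩ := card_eq_two.1 hd
    have hmem : ∀ e, ¬ (s e ∈ A ↔ t e ∈ A) ↔ (e = e₀ ∨ e = e₁) := by
      intro e
      have := Finset.ext_iff.1 he e
      simpa using this
    have hcr := (hmem e₀).2 (Or.inl rfl)
    have hcr1 := (hmem e₁).2 (Or.inr rfl)
    obtain ⟨f, hf1, hf2⟩ := contract (s e₀) (t e₀) (fun h => hcr (by rw [h]))
    obtain ⟨k, hk, hk2⟩ := uncontract s t _ (sum_pp u v x) f e₀ hf2 A hcr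
    refine ⟨_, ?_, hk2⟩
    have hz : cs s t (fun e => if e = e₀ then 0 else f e) A =
        ((if s e₁ ∈ A then 1 else 0) - (if t e₁ ∈ A then 1 else 0)) * f e₁ := by
      have e1 : (fun e => if e = e₀ then 0 else f e) =
          fun e => (if e = e₀ ∨ e = e₁ then 0 else f e) + (if e = e₁ then f e₁ else 0) := by
        funext e
        by_cases k1 : e = e₁
        · subst k1
          simp [hne.symm]
        · simp [k1]
      rw [e1, cs_add, cs_single, cs_zero_of, zero_add]
      intro e h
      by_contra hc
      rw [hmem] at hc
      simp [hc] at h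
    have hz2 : cs s t (fun e => if e = e₀ then 0 else f e) A = f e₁ ∨
        cs s t (fun e => if e = e₀ then 0 else f e) A = - f e₁ := by
      rw [hz]
      by_cases k1 : s e₁ ∈ A <;> by_cases k2 : t e₁ ∈ A <;> simp [k1, k2] <;> tauto
    rw [hpA] at hk
    intro e
    beta_reduce
    split_ifs
    · have := hf1 e₁
      rw [abs_lt] at this ⊢
      omega
    · exact hf1 e
  apply caseC
  intro X hX hX2
  have k0 : dd s t X ≠ 0 := fun h => c0 ⟨X, hX, hX2, h⟩
  have k1 : dd s t X ≠ 1 := fun h => c1 ⟨X, h⟩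
  exact ⟨by omega, fun h h' => c2 ⟨X, h, h'⟩⟩


section App
variable [Fintype V]

theorem ksum (G : SimpleGraph V) (S T : Sym2 V → V) (hST : ∀ e, e = s(S e, T e))
    (v : V) (g : Sym2 V → ℤ) :
    (∑ w : V, if G.Adj v w then g s(v, w) else 0) =
      ∑ e : Sym2 V, if e ∈ G.edgeSet then
        ((if S e = v then g e else 0) + (if T e = v then g e else 0)) else 0 := by
  have h1 : ∀ e : Sym2 V, (if e ∈ G.edgeSet then
        ((if S e = v then g e else 0) + (if T e = v then g e else 0)) else 0) =
        if (e ∈ G.edgeSet ∧ v ∈ e) then g e else 0 := by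
    intro e
    by_cases he : e ∈ G.edgeSet
    · have hne : S e ≠ T e := by
        have := he
        rw [hST e, mem_edgeSet] at this
        exact this.ne
      have hv : v ∈ e ↔ (v = S e ∨ v = T e) := by
        conv_lhs => rw [hST e]
        exact Sym2.mem_iff
      simp only [he, hv, true_and, if_true]
      by_cases k1 : S e = v
      · have k2 : T e ≠ v := fun h => hne (k1.trans h.symm)
        simp [k1, k2]
      · by_cases k2 : T e = v
        · simp [k1, k2]
        · have k1' : v ≠ S e := fun h => k1 h.symm
          have k2' : v ≠ T e := fun h => k2 h.symm
          simp [k1, k2, k1', k2']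
    · simp [he]
  rw [sum_congr rfl (fun e _ => h1 e), ← sum_filter, ← sum_filter]
  refine sum_bij (fun w _ => s(v, w)) ?_ ?_ ?_ ?_
  · intro w hw
    simp at hw ⊢
    exact hw
  · intro w _ w' _ h
    exact Sym2.congr_right.1 h
  · intro e he
    simp only [mem_filter, mem_univ, true_and] at he
    obtain ⟨w, rfl⟩ := Sym2.mem_iff_exists.1 he.2
    refine ⟨w, ?_, rfl⟩
    simpa using he.1
  · intro w _
    rfl

/-- contribution of an edge to the Kirchhoff sum over a vertex set -/
noncomputable def KK (G : SimpleGraph V) (S T : Sym2 V → V) (τ : V → Sym2 V → ℤ) (φ : Sym2 V → ℤ)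
    (X : Set V) (e : Sym2 V) : ℤ :=
  if e ∈ G.edgeSet then ((if S e ∈ X then τ (S e) e * φ e else 0)
    + (if T e ∈ X then τ (T e) e * φ e else 0)) else 0

theorem kset (G : SimpleGraph V) (S T : Sym2 V → V) (hST : ∀ e, e = s(S e, T e))
    (τ : V → Sym2 V → ℤ) (φ : Sym2 V → ℤ)
    (hk : ∀ v : V, (∑ w : V, if G.Adj v w then τ v s(v, w) * φ s(v, w) else 0) = 0)
    (X : Set V) : ∑ e, KK G S T τ φ X e = 0 := by
  have h0 : ∑ v : V, ∑ e : Sym2 V, (if v ∈ X then (if e ∈ G.edgeSet then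
        ((if S e = v then τ v e * φ e else 0) + (if T e = v then τ v e * φ e else 0)) else 0)
        else 0) = 0 := by
    apply sum_eq_zero
    intro v _
    by_cases hv : v ∈ X
    · simp only [hv, if_true]
      rw [← ksum G S T hST v (fun e => τ v e * φ e)]
      exact hk v
    · simp [hv]
  rw [sum_comm] at h0
  rw [← h0]
  apply sum_congr rfl
  intro e _
  unfold KK
  by_cases he : e ∈ G.edgeSet
  · simp only [he, if_true]
    have h2 : ∀ z : V, (∑ v : V, if v ∈ X then (if z = v then τ v e * φ e else 0) else 0)
        = if z ∈ X then τ z e * φ e else 0 := by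
      intro z
      rw [sum_eq_single z]
      · simp
      · intro v _ hv
        simp [hv.symm]
      · simp
    rw [← h2, ← h2, ← sum_add_distrib]
    apply sum_congr rfl
    intro v _
    split_ifs <;> simp
  · simp [he]

theorem orient_st {G : SimpleGraph V} {σ : Sym2 V → ℤ} {S T : Sym2 V → V}
    (hST : ∀ e, e = s(S e, T e)) {τ : V → Sym2 V → ℤ} (ho : IsOrientation G σ τ) (e : Sym2 V)
    (he : e ∈ G.edgeSet) : τ (S e) e * τ (T e) e = - σ e := by
  have h := he
  rw [hST e, mem_edgeSet] at h
  have := ho.2 _ _ h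
  rwa [← hST e] at this

theorem KK_pos {G : SimpleGraph V} {σ : Sym2 V → ℤ} {S T : Sym2 V → V}
    (hST : ∀ e, e = s(S e, T e)) {τ : V → Sym2 V → ℤ} (ho : IsOrientation G σ τ)
    (φ : Sym2 V → ℤ) (X : Set V) (e : Sym2 V) (hp : e ∈ G.edgeSet → S e ∈ X → T e ∈ X → σ e = 1)
    (hx : e ∈ G.edgeSet → (S e ∈ X ↔ T e ∈ X)) : KK G S T τ φ X e = 0 := by
  unfold KK
  by_cases he : e ∈ G.edgeSet
  · have h1 := hx he
    by_cases hs : S e ∈ X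
    · have ht := h1.1 hs
      have h2 := hp he hs ht
      have h3 := orient_st hST ho e he
      simp only [he, hs, ht, if_true]
      rcases ho.1 (S e) e with k1 | k1 <;> rcases ho.1 (T e) e with k2 | k2 <;>
        rw [k1, k2, h2] at h3 <;> rw [k1, k2] <;> first | (exfalso; omega) | ring
    · have ht : T e ∉ X := fun h => hs (h1.2 h)
      simp [hs, ht]
  · simp [he]

theorem KK_cross {G : SimpleGraph V} {σ : Sym2 V → ℤ} {S T : Sym2 V → V}
    {τ : V → Sym2 V → ℤ} (ho : IsOrientation G σ τ)
    (φ : Sym2 V → ℤ) (X : Set V) (e : Sym2 V) (he : e ∈ G.edgeSet)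
    (hx : ¬ (S e ∈ X ↔ T e ∈ X)) (h0 : φ e ≠ 0) : KK G S T τ φ X e ≠ 0 := by
  unfold KK
  by_cases hs : S e ∈ X
  · have ht : T e ∉ X := by tauto
    rcases ho.1 (S e) e with k1 | k1 <;> simp [he, hs, ht, k1, h0]
  · have ht : T e ∈ X := by tauto
    rcases ho.1 (T e) e with k1 | k1 <;> simp [he, hs, ht, k1, h0]

theorem negInside {G : SimpleGraph V} {σ : Sym2 V → ℤ} {S T : Sym2 V → V}
    (hσ : IsSignature G σ)
    (hST : ∀ e, e = s(S e, T e)) {τ : V → Sym2 V → ℤ} {φ : Sym2 V → ℤ} {k : ℤ}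
    (hf : IsNZFlow G σ k τ φ) (A : Set V) (b : Sym2 V) (hb : b ∈ G.edgeSet)
    (hbA : ¬ (S b ∈ A ↔ T b ∈ A)) (hA : ∀ e ∈ G.edgeSet, ¬ (S e ∈ A ↔ T e ∈ A) → e = b) :
    ∃ e ∈ G.edgeSet, σ e = -1 ∧ S e ∈ A ∧ T e ∈ A := by
  by_contra hc
  push Not at hc
  have h1 := kset G S T hST τ φ hf.1.2 A
  rw [sum_eq_single b] at h1
  · exact KK_cross hf.1.1 φ A b hb hbA (abs_pos.1 (hf.2 b hb).1) h1
  · intro e _ hne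
    apply KK_pos hST hf.1.1
    · intro he hs ht
      rcases hσ e he with h | h
      · exact h
      · exact absurd ht (hc e he h hs)
    · intro he
      by_contra h
      exact hne (hA e he h)
  · simp

theorem sideLemma {G : SimpleGraph V} {σ : Sym2 V → ℤ} {S T : Sym2 V → V}
    (hST : ∀ e, e = s(S e, T e)) {τ : V → Sym2 V → ℤ} {φ : Sym2 V → ℤ} {k : ℤ}
    (hf : IsNZFlow G σ k τ φ) (A : Set V) (b : Sym2 V) (x : V) (hx : x ∈ A)
    (hbx : ∀ y, y ∈ b → y ∈ A → y = x)
    (hA : ∀ e ∈ G.edgeSet, ¬ (S e ∈ A ↔ T e ∈ A) → e = b)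
    (n : Sym2 V) (hn : n ∈ G.edgeSet) (hnσ : σ n = -1) (hnS : S n ∈ A) (hnT : T n ∈ A)
    (hn1 : ∀ e ∈ G.edgeSet, S e ∈ A → T e ∈ A → e ≠ n → σ e = 1) :
    ∃ f : Sym2 V → ℤ, (∀ e, f e ≠ 0 ∧ |f e| < 6) ∧
      ∀ X, cs (fun e => if e ∈ G.edgeSet ∧ S e ∈ A ∧ T e ∈ A ∧ e ≠ n then S e else x)
        (fun e => if e ∈ G.edgeSet ∧ S e ∈ A ∧ T e ∈ A ∧ e ≠ n then T e else x) f X =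
        psum (pp (S n) (T n) x) X := by
  set s1 : Sym2 V → V := fun e => if e ∈ G.edgeSet ∧ S e ∈ A ∧ T e ∈ A ∧ e ≠ n then S e else x
    with hs1
  set t1 : Sym2 V → V := fun e => if e ∈ G.edgeSet ∧ S e ∈ A ∧ T e ∈ A ∧ e ≠ n then T e else x
    with ht1
  have hcr : ∀ C : Set V, C ⊆ A → x ∉ C → ∀ e ∈ G.edgeSet, e ≠ n → (s1 e ∈ C ↔ t1 e ∈ C) →
      (S e ∈ C ↔ T e ∈ C) := by
    intro C hCA hxC e he hen h
    by_cases hS : S e ∈ A <;> by_cases hT : T e ∈ A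
    · have hc : e ∈ G.edgeSet ∧ S e ∈ A ∧ T e ∈ A ∧ e ≠ n := ⟨he, hS, hT, hen⟩
      simpa only [hs1, ht1, if_pos hc] using h
    · have hb := hA e he (by tauto)
      have hSx : S e = x := hbx _ (by rw [← hb]; have := Sym2.mem_mk_left (S e) (T e); rwa [← hST e] at this) hS
      have h1 : S e ∉ C := by rw [hSx]; exact hxC
      have h2 : T e ∉ C := fun h => hT (hCA h)
      tauto
    · have hb := hA e he (by tauto)
      have hTx : T e = x := hbx _ (by rw [← hb]; have := Sym2.mem_mk_right (S e) (T e); rwa [← hST e] at this) hT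
      have h1 : T e ∉ C := by rw [hTx]; exact hxC
      have h2 : S e ∉ C := fun h => hS (hCA h)
      tauto
    · have h1 : T e ∉ C := fun h => hT (hCA h)
      have h2 : S e ∉ C := fun h => hS (hCA h)
      tauto
  have kC0 : ∀ C : Set V, C ⊆ A → x ∉ C → (∀ e, (s1 e ∈ C ↔ t1 e ∈ C)) →
      S n ∉ C ∧ T n ∉ C := by
    intro C hCA hxC h
    have h1 := kset G S T hST τ φ hf.1.2 C
    have hφ : φ n ≠ 0 := abs_pos.1 (hf.2 n hn).1
    rw [sum_eq_single n] at h1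
    · by_cases hc : S n ∈ C ↔ T n ∈ C
      · by_cases hS : S n ∈ C
        · exfalso
          have hT := hc.1 hS
          have ho := orient_st hST hf.1.1 n hn
          rw [hnσ] at ho
          unfold KK at h1
          simp only [hn, hS, hT, if_true] at h1
          rcases hf.1.1.1 (S n) n with k1 | k1 <;> rcases hf.1.1.1 (T n) n with k2 | k2 <;>
            rw [k1, k2] at ho h1 <;> omega
        · tauto
      · exact absurd h1 (KK_cross hf.1.1 φ C n hn hc hφ)
    · intro e _ hen
      apply KK_pos hST hf.1.1
      · intro he hs ht
        exact hn1 e he (hCA hs) (hCA ht) hen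
      · intro he
        exact hcr C hCA hxC e he hen (h e)
    · simp
  have kC1 : ∀ C : Set V, C ⊆ A → x ∉ C → ∀ e₀, ¬ (s1 e₀ ∈ C ↔ t1 e₀ ∈ C) →
      (∀ e, e ≠ e₀ → (s1 e ∈ C ↔ t1 e ∈ C)) → S n ∉ C → T n ∉ C → False := by
    intro C hCA hxC e₀ h0 h hS hT
    have h1 := kset G S T hST τ φ hf.1.2 C
    have hc : e₀ ∈ G.edgeSet ∧ S e₀ ∈ A ∧ T e₀ ∈ A ∧ e₀ ≠ n := by
      by_contra hc
      apply h0
      simp only [hs1, ht1, if_neg hc]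
    have h0' : ¬ (S e₀ ∈ C ↔ T e₀ ∈ C) := by
      simpa only [hs1, ht1, if_pos hc] using h0
    rw [sum_eq_single e₀] at h1
    · exact KK_cross hf.1.1 φ C e₀ hc.1 h0' (abs_pos.1 (hf.2 e₀ hc.1).1) h1
    · intro e _ hee
      apply KK_pos hST hf.1.1
      · intro he hs ht
        apply hn1 e he (hCA hs) (hCA ht)
        rintro rfl
        exact hS hs
      · intro he
        by_cases hen : e = n
        · subst hen
          tauto
        · exact hcr C hCA hxC e he hen (h e hee)
    · simp
  have hsA : ∀ e, s1 e ∈ A := by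
    intro e
    simp only [hs1]
    split_ifs with h
    · exact h.2.1
    · exact hx
  have htA : ∀ e, t1 e ∈ A := by
    intro e
    simp only [ht1]
    split_ifs with h
    · exact h.2.2.1
    · exact hx
  have red : ∀ X : Set V, ∃ C : Set V, C ⊆ A ∧ x ∉ C ∧
      (∀ y ∈ A, ∀ z ∈ A, ((y ∈ C ↔ z ∈ C) ↔ (y ∈ X ↔ z ∈ X))) ∧
      (psum (pp (S n) (T n) x) X = 0 ↔ (S n ∉ C ∧ T n ∉ C)) := by
    intro X
    by_cases hxX : x ∈ X
    · refine ⟨A \ X, Set.sdiff_subset, fun h => h.2 hxX, ?_, ?_⟩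
      · intro y hy z hz
        simp only [Set.mem_sdiff, hy, hz, true_and]
        tauto
      · rw [psum_pp]
        simp only [Set.mem_sdiff, hnS, hnT, hxX, true_and, not_not, if_true]
        by_cases k1 : S n ∈ X <;> by_cases k2 : T n ∈ X <;> simp [k1, k2]
    · refine ⟨X ∩ A, Set.inter_subset_right, fun h => hxX h.1, ?_, ?_⟩
      · intro y hy z hz
        simp only [Set.mem_inter_iff, hy, hz, and_true]
      · rw [psum_pp]
        simp only [Set.mem_inter_iff, hnS, hnT, hxX, and_true, if_false]
        by_cases k1 : S n ∈ X <;> by_cases k2 : T n ∈ X <;> simp [k1, k2]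
  have key : ∀ X : Set V, (∀ e, (s1 e ∈ X ↔ t1 e ∈ X)) → psum (pp (S n) (T n) x) X = 0 := by
    intro X h
    obtain ⟨C, hCA, hxC, h1, h2⟩ := red X
    rw [h2]
    exact kC0 C hCA hxC (fun e => (h1 _ (hsA e) _ (htA e)).2 (h e))
  have key1 : ∀ (X : Set V) (e₀), ¬ (s1 e₀ ∈ X ↔ t1 e₀ ∈ X) →
      (∀ e, e ≠ e₀ → (s1 e ∈ X ↔ t1 e ∈ X)) → psum (pp (S n) (T n) x) X ≠ 0 := by
    intro X e₀ h0 h hz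
    obtain ⟨C, hCA, hxC, h1, h2⟩ := red X
    rw [h2] at hz
    exact kC1 C hCA hxC e₀ (fun h' => h0 ((h1 _ (hsA e₀) _ (htA e₀)).1 h'))
      (fun e he => (h1 _ (hsA e) _ (htA e)).2 (h e he)) hz.1 hz.2
  apply mainY _ V (Sym2 V) s1 t1 (S n) (T n) x rfl
  · intro X hX
    apply key
    intro e
    by_contra h
    unfold dd at hX
    rw [card_eq_zero] at hX
    have : e ∈ (univ.filter (fun e => ¬ (s1 e ∈ X ↔ t1 e ∈ X))) := by simp [h]
    rw [hX] at this
    simp at this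
  · intro X hX
    unfold dd at hX
    rw [card_eq_one] at hX
    obtain ⟨e₀, h0⟩ := hX
    have h1 : ∀ e, ¬ (s1 e ∈ X ↔ t1 e ∈ X) ↔ e = e₀ := by
      intro e
      have : e ∈ (univ.filter (fun e => ¬ (s1 e ∈ X ↔ t1 e ∈ X))) ↔ e = e₀ := by
        rw [h0, mem_singleton]
      rw [← this, mem_filter]
      simp only [mem_univ, true_and]
    apply key1 X e₀ ((h1 e₀).2 rfl)
    intro e he
    by_contra h
    exact he ((h1 e).1 h)

theorem sideLemma' {G : SimpleGraph V} {σ : Sym2 V → ℤ} {S T : Sym2 V → V}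
    (hST : ∀ e, e = s(S e, T e)) {τ : V → Sym2 V → ℤ} {φ : Sym2 V → ℤ} {k : ℤ}
    (hf : IsNZFlow G σ k τ φ) (A : Set V) (b : Sym2 V) (x : V) (hx : x ∈ A)
    (hbx : ∀ y, y ∈ b → y ∈ A → y = x)
    (hA : ∀ e ∈ G.edgeSet, ¬ (S e ∈ A ↔ T e ∈ A) → e = b)
    (n : Sym2 V) (hn : n ∈ G.edgeSet) (hnσ : σ n = -1) (hnS : S n ∈ A) (hnT : T n ∈ A)
    (hn1 : ∀ e ∈ G.edgeSet, S e ∈ A → T e ∈ A → e ≠ n → σ e = 1) :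
    ∃ f : Sym2 V → ℤ, (∀ e, f e ≠ 0 ∧ |f e| < 6) ∧
      ∀ v, ∑ e, (if e ∈ G.edgeSet ∧ S e ∈ A ∧ T e ∈ A ∧ e ≠ n then
        ((if S e = v then f e else 0) - (if T e = v then f e else 0)) else 0) =
        (if S n = v then 1 else 0) + (if T n = v then 1 else 0) - (if x = v then 2 else 0) := by
  obtain ⟨f, h1, h2⟩ := sideLemma hST hf A b x hx hbx hA n hn hnσ hnS hnT hn1
  refine ⟨f, h1, fun v => ?_⟩
  have h3 := h2 {v}
  rw [psum_pp] at h3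
  simp only [Set.mem_singleton_iff] at h3
  rw [← h3]
  unfold cs
  apply sum_congr rfl
  intro e _
  by_cases hc : e ∈ G.edgeSet ∧ S e ∈ A ∧ T e ∈ A ∧ e ≠ n
  · simp only [if_pos hc, Set.mem_singleton_iff]
  · simp only [if_neg hc, sub_self]

theorem finalLemma {G : SimpleGraph V} {σ : Sym2 V → ℤ} {S T : Sym2 V → V}
    (hσ : IsSignature G σ)
    (hST : ∀ e, e = s(S e, T e)) {τ : V → Sym2 V → ℤ} {φ : Sym2 V → ℤ} {k : ℤ}
    (hf : IsNZFlow G σ k τ φ) (A : Set V) (x₁ x₂ : V) (hx₁ : x₁ ∈ A) (hx₂ : x₂ ∉ A)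
    (hb : s(x₁, x₂) ∈ G.edgeSet)
    (hA : ∀ e ∈ G.edgeSet, ¬ (S e ∈ A ↔ T e ∈ A) → e = s(x₁, x₂))
    (m₁ m₂ : Sym2 V) (hm₁ : m₁ ∈ G.edgeSet) (hm₂ : m₂ ∈ G.edgeSet)
    (hσ₁ : σ m₁ = -1) (hσ₂ : σ m₂ = -1)
    (hS₁ : S m₁ ∈ A) (hT₁ : T m₁ ∈ A) (hS₂ : S m₂ ∉ A) (hT₂ : T m₂ ∉ A)
    (hneg : ∀ e ∈ G.edgeSet, σ e = -1 → e = m₁ ∨ e = m₂) :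
    ∃ τ φ, IsNZFlow G σ 6 τ φ ∧ φ m₁ = 1 ∧ φ m₂ = 1 := by
  have hpos : ∀ e ∈ G.edgeSet, e ≠ m₁ → e ≠ m₂ → σ e = 1 := by
    intro e he h1 h2
    rcases hσ e he with h | h
    · exact h
    · rcases hneg e he h with h | h
      · exact absurd h h1
      · exact absurd h h2
  obtain ⟨f₁, hf₁, hk₁⟩ := sideLemma' hST hf A s(x₁, x₂) x₁ hx₁
    (by
      intro y hy hyA
      rcases Sym2.mem_iff.1 hy with h | h
      · exact h
      · subst h; exact absurd hyA hx₂) hA m₁ hm₁ hσ₁ hS₁ hT₁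
    (by
      intro e he h1 h2 h3
      apply hpos e he h3
      rintro rfl
      exact hS₂ h1)
  obtain ⟨f₂, hf₂, hk₂⟩ := sideLemma' hST hf Aᶜ s(x₁, x₂) x₂ hx₂
    (by
      intro y hy hyA
      rcases Sym2.mem_iff.1 hy with h | h
      · subst h; exact absurd hx₁ hyA
      · exact h)
    (by
      intro e he h
      apply hA e he
      simp only [Set.mem_compl_iff] at h
      tauto) m₂ hm₂ hσ₂ hS₂ hT₂
    (by
      intro e he h1 h2 h3
      apply hpos e he _ h3
      rintro rfl
      exact h1 hS₁)
  simp only [Set.mem_compl_iff] at hk₂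
  have hm : m₁ ≠ m₂ := by
    rintro rfl
    exact hS₂ hS₁
  obtain ⟨b, hbb⟩ : ∃ b, b = s(x₁, x₂) := ⟨_, rfl⟩
  rw [← hbb] at hb hA
  have hbST : (S b = x₁ ∧ T b = x₂) ∨ (S b = x₂ ∧ T b = x₁) := by
    have := hST b
    conv_lhs at this => rw [hbb]
    rcases Sym2.eq_iff.1 this with h | h
    · exact Or.inl ⟨h.1.symm, h.2.symm⟩
    · exact Or.inr ⟨h.2.symm, h.1.symm⟩
  have hb₁ : b ≠ m₁ := by
    rintro rfl
    rcases hbST with h | h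
    · exact hx₂ (h.2 ▸ hT₁)
    · exact hx₂ (h.1 ▸ hS₁)
  have hb₂ : b ≠ m₂ := by
    rintro rfl
    rcases hbST with h | h
    · exact hS₂ (h.1 ▸ hx₁)
    · exact hT₂ (h.2 ▸ hx₁)
  obtain ⟨φ', hφ'⟩ : ∃ φ' : Sym2 V → ℤ, φ' = fun e => if e = m₁ ∨ e = m₂ then 1 else
    if e = b then 2 else if S e ∈ A then f₁ e else - f₂ e := ⟨_, rfl⟩
  obtain ⟨τ', hτ'⟩ : ∃ τ' : V → Sym2 V → ℤ, τ' = fun w e => if e = m₁ then 1 else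
    if e = m₂ then -1 else if e = b then (if w ∈ A then -1 else 1) else
    if w = S e then -1 else 1 := ⟨_, rfl⟩
  refine ⟨τ', φ', ⟨⟨⟨?_, ?_⟩, ?_⟩, ?_⟩, ?_, ?_⟩
  · intro v e
    simp only [hτ']
    split_ifs <;> simp
  · have h : ∀ e ∈ G.edgeSet, τ' (S e) e * τ' (T e) e = - σ e := by
      intro e he
      by_cases h1 : e = m₁
      · subst h1
        simp [hτ', hσ₁]
      by_cases h2 : e = m₂
      · subst h2
        simp [hτ', hσ₂, h1]
      rw [hpos e he h1 h2]
      by_cases h3 : e = b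
      · subst h3
        rcases hbST with h | h <;> simp [hτ', h1, h2, h.1, h.2, hx₁, hx₂]
      · have hne : T e ≠ S e := by
          have := he
          rw [hST e, mem_edgeSet] at this
          exact this.ne.symm
        simp [hτ', h1, h2, h3, hne]
    intro u v huv
    have h4 := h s(u, v) huv
    have h5 := hST s(u, v)
    rcases Sym2.eq_iff.1 h5 with h6 | h6
    · rwa [← h6.1, ← h6.2] at h4
    · rwa [← h6.1, ← h6.2, mul_comm] at h4
  · intro v
    rw [ksum G S T hST v (fun e => τ' v e * φ' e)]
    have e1 : ∀ e : Sym2 V, (if e ∈ G.edgeSet then ((if S e = v then τ' v e * φ' e else 0) +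
        (if T e = v then τ' v e * φ' e else 0)) else 0) =
        - (if e ∈ G.edgeSet ∧ S e ∈ A ∧ T e ∈ A ∧ e ≠ m₁ then
        ((if S e = v then f₁ e else 0) - (if T e = v then f₁ e else 0)) else 0) +
        (if e ∈ G.edgeSet ∧ S e ∉ A ∧ T e ∉ A ∧ e ≠ m₂ then
        ((if S e = v then f₂ e else 0) - (if T e = v then f₂ e else 0)) else 0) +
        (if e = m₁ then ((if S m₁ = v then 1 else 0) + (if T m₁ = v then 1 else 0)) else 0) -
        (if e = m₂ then ((if S m₂ = v then 1 else 0) + (if T m₂ = v then 1 else 0)) else 0) +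
        (if e = b then (- (if x₁ = v then 2 else 0) + (if x₂ = v then 2 else 0)) else 0) := by
      intro e
      by_cases he : e ∈ G.edgeSet
      swap
      · have h1 : e ≠ m₁ := by rintro rfl; exact he hm₁
        have h2 : e ≠ m₂ := by rintro rfl; exact he hm₂
        have h3 : e ≠ b := by rintro rfl; exact he hb
        simp [he, h1, h2, h3]
      by_cases h1 : e = m₁
      · subst h1
        simp [he, hτ', hφ', hS₁, hm, hb₁.symm]
      by_cases h2 : e = m₂
      · subst h2
        simp [he, hτ', hφ', hS₂, h1, hb₂.symm]
        split_ifs <;> simp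
      by_cases h3 : e = b
      · subst h3
        have hx12 : x₁ ≠ x₂ := by rintro rfl; exact hx₂ hx₁
        by_cases k1 : x₁ = v
        · subst k1
          rcases hbST with h | h <;>
            simp [he, hτ', hφ', h1, h2, h.1, h.2, hx₁, hx₂, hx12.symm]
        · by_cases k2 : x₂ = v
          · subst k2
            rcases hbST with h | h <;>
              simp [he, hτ', hφ', h1, h2, h.1, h.2, hx₁, hx₂, hx12]
          · rcases hbST with h | h <;>
              simp [he, hτ', hφ', h1, h2, h.1, h.2, hx₁, hx₂, k1, k2]
      · have hiff : S e ∈ A ↔ T e ∈ A := by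
          by_contra h
          exact h3 (hA e he h)
        have hne : S e ≠ T e := by
          have := he
          rw [hST e, mem_edgeSet] at this
          exact this.ne
        by_cases hS : S e ∈ A
        · have hT := hiff.1 hS
          by_cases k1 : S e = v
          · have k2 : T e ≠ v := fun h => hne (k1.trans h.symm)
            rw [k1] at hS
            simp [hτ', hφ', he, h1, h2, h3, hS, hT, k1, k2]
          · have k1' : v ≠ S e := fun h => k1 h.symm
            simp [hτ', hφ', he, h1, h2, h3, hS, hT, k1, k1']
        · have hT : T e ∉ A := fun h => hS (hiff.2 h)
          by_cases k1 : S e = v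
          · have k2 : T e ≠ v := fun h => hne (k1.trans h.symm)
            rw [k1] at hS
            simp [hτ', hφ', he, h1, h2, h3, hS, hT, k1, k2]
          · have k1' : v ≠ S e := fun h => k1 h.symm
            simp [hτ', hφ', he, h1, h2, h3, hS, hT, k1, k1']
            try split_ifs <;> simp
    rw [sum_congr rfl (fun e _ => e1 e), sum_add_distrib, sum_sub_distrib, sum_add_distrib,
      sum_add_distrib, sum_neg_distrib, hk₁ v, hk₂ v]
    simp only [sum_ite_eq', mem_univ, if_true]
    ring
  · intro e he
    simp only [hφ', abs_pos]
    split_ifs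
    · norm_num
    · norm_num
    · exact hf₁ e
    · rw [abs_neg, neg_ne_zero]
      exact hf₂ e
  · simp [hφ']
  · simp [hφ']

theorem stmt11_aux (G : SimpleGraph V) (σ : Sym2 V → ℤ)
    (hσ : IsSignature G σ) (hadm : FlowAdmissible G σ)
    (n₁ n₂ : Sym2 V) (hN : NegEdges G σ = {n₁, n₂})
    (b : Sym2 V) (hb : b ∈ G.edgeSet) (hbr : G.IsBridge b) :
    ∃ τ φ, IsNZFlow G σ 6 τ φ ∧ φ n₁ = 1 ∧ φ n₂ = 1 := by
  obtain ⟨k, τ, φ, hf⟩ := hadm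
  have hex : ∀ e : Sym2 V, ∃ p : V × V, e = s(p.1, p.2) := by
    intro e
    induction e with
    | _ a b => exact ⟨(a, b), rfl⟩
  choose P hP using hex
  obtain ⟨S, hS⟩ : ∃ S : Sym2 V → V, S = fun e => (P e).1 := ⟨_, rfl⟩
  obtain ⟨T, hT⟩ : ∃ T : Sym2 V → V, T = fun e => (P e).2 := ⟨_, rfl⟩
  have hST : ∀ e, e = s(S e, T e) := by
    intro e
    rw [hS, hT]
    exact hP e
  have hNeg : ∀ e ∈ G.edgeSet, σ e = -1 → e = n₁ ∨ e = n₂ := by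
    intro e he h
    have : e ∈ NegEdges G σ := ⟨he, h⟩
    rw [hN] at this
    simpa using this
  have hb0 := hST b
  obtain ⟨x₁, hx₁⟩ : ∃ x, x = S b := ⟨_, rfl⟩
  obtain ⟨x₂, hx₂⟩ : ∃ x, x = T b := ⟨_, rfl⟩
  rw [← hx₁, ← hx₂] at hb0
  rw [hb0, isBridge_iff] at hbr
  obtain ⟨A, hAd⟩ : ∃ A : Set V, A = {w | (G.deleteEdges {s(x₁, x₂)}).Reachable x₁ w} := ⟨_, rfl⟩
  have h1 : x₁ ∈ A := by rw [hAd]; exact Reachable.refl _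
  have h2 : x₂ ∉ A := by rw [hAd]; exact hbr
  have hA : ∀ e ∈ G.edgeSet, ¬ (S e ∈ A ↔ T e ∈ A) → e = b := by
    intro e he h
    by_contra hne
    apply h
    have hadj : (G.deleteEdges {s(x₁, x₂)}).Adj (S e) (T e) := by
      rw [deleteEdges_adj]
      refine ⟨?_, ?_⟩
      · rw [← mem_edgeSet, ← hST e]; exact he
      · rw [← hST e, ← hb0]; simpa using hne
    rw [hAd]
    exact ⟨fun h => h.trans hadj.reachable, fun h => h.trans hadj.symm.reachable⟩
  have hcr : ¬ (S b ∈ A ↔ T b ∈ A) := by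
    rw [← hx₁, ← hx₂]
    tauto
  obtain ⟨m₁, hm₁, hσ₁, hS₁, hT₁⟩ := negInside hσ hST hf A b hb hcr hA
  obtain ⟨m₂, hm₂, hσ₂, hS₂, hT₂⟩ := negInside hσ hST hf Aᶜ b hb
    (by simp only [Set.mem_compl_iff]; tauto)
    (by
      intro e he h
      apply hA e he
      simp only [Set.mem_compl_iff] at h
      tauto)
  have hm : m₁ ≠ m₂ := by
    rintro rfl
    exact hS₂ hS₁
  have hc := hNeg m₁ hm₁ hσ₁
  have hd := hNeg m₂ hm₂ hσ₂
  have hneg' : ∀ e ∈ G.edgeSet, σ e = -1 → e = m₁ ∨ e = m₂ := by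
    intro e he h
    have := hNeg e he h
    grind
  obtain ⟨τ', φ', h3, h4, h5⟩ := finalLemma hσ hST hf A x₁ x₂ h1 h2 (hb0 ▸ hb) (hb0 ▸ hA) m₁ m₂
    hm₁ hm₂ hσ₁ hσ₂ hS₁ hT₁ hS₂ hT₂ hneg'
  refine ⟨τ', φ', h3, ?_⟩
  grind

end App


/-- A flow-admissible signed cubic graph with exactly two negative edges
containing a bridge admits a nowhere-zero 6-flow with value 1 on both negative edges. -/
theorem stmt11 [Fintype V] (G : SimpleGraph V) (σ : Sym2 V → ℤ)
    (hσ : IsSignature G σ) (hcubic : CubicGraph G) (hadm : FlowAdmissible G σ)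
    (n₁ n₂ : Sym2 V) (hne : n₁ ≠ n₂) (hN : NegEdges G σ = {n₁, n₂})
    (b : Sym2 V) (hb : b ∈ G.edgeSet) (hbr : G.IsBridge b) :
    ∃ τ φ, IsNZFlow G σ 6 τ φ ∧ φ n₁ = 1 ∧ φ n₂ = 1 := by
  exact stmt11_aux G σ hσ hadm n₁ n₂ hN b hb hbr
end

section
/- Let (G, σ) be a flow-admissible signed cubic graph whose underlying graph G is a critical snark with exactly two negative edges n₁ and n₂. Then (G, σ) admits a nowhere-zero 6-flow (D, φ) with φ(n₁) = φ(n₂) = 1. -/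
open Finset SimpleGraph

attribute [local instance] Classical.propDecidable

variable {V : Type}

namespace SF

def Skew (f : V → V → ℤ) : Prop := ∀ a b, f a b = - f b a

def bd [Fintype V] (f : V → V → ℤ) (v : V) : ℤ := ∑ w, f v w

noncomputable def E (u v a b : V) : ℤ :=
  (if a = u ∧ b = v then 1 else 0) - (if a = v ∧ b = u then 1 else 0)

noncomputable def I (u a : V) : ℤ := if a = u then 1 else 0

lemma E_skew (u v : V) : Skew (E u v) := by
  intro a b; unfold E; simp only [and_comm]; ring

lemma bd_E [Fintype V] (u v a : V) : bd (E u v) a = I u a - I v a := by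
  unfold bd E I
  rw [Finset.sum_sub_distrib]
  congr 1
  · by_cases h : a = u <;> simp [h]
  · by_cases h : a = v <;> simp [h]

lemma bd_add [Fintype V] (f g : V → V → ℤ) (a : V) :
    bd (fun x y => f x y + g x y) a = bd f a + bd g a := by
  simp [bd, Finset.sum_add_distrib]

lemma bd_sub [Fintype V] (f g : V → V → ℤ) (a : V) :
    bd (fun x y => f x y - g x y) a = bd f a - bd g a := by
  simp [bd, Finset.sum_sub_distrib]

lemma bd_mul [Fintype V] (c : ℤ) (f : V → V → ℤ) (a : V) :
    bd (fun x y => c * f x y) a = c * bd f a := by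
  simp [bd, Finset.mul_sum]

/-- cut lemma -/
lemma cut [Fintype V] (f : V → V → ℤ) (hf : Skew f) (S : Finset V) :
    ∑ a ∈ S, bd f a = ∑ a ∈ S, ∑ w ∈ Sᶜ, f a w := by
  have h1 : ∑ a ∈ S, ∑ w ∈ S, f a w = 0 := by
    have h : ∑ a ∈ S, ∑ w ∈ S, f a w = - ∑ a ∈ S, ∑ w ∈ S, f a w := by
      conv_lhs => rw [Finset.sum_comm]
      rw [← Finset.sum_neg_distrib]
      refine Finset.sum_congr rfl fun a _ => ?_
      rw [← Finset.sum_neg_distrib]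
      exact Finset.sum_congr rfl fun b _ => hf b a
    omega
  have h2 : ∀ a ∈ S, bd f a = ∑ w ∈ S, f a w + ∑ w ∈ Sᶜ, f a w := by
    intro a _
    exact (Finset.sum_add_sum_compl S _).symm
  rw [Finset.sum_congr rfl h2, Finset.sum_add_distrib, h1, zero_add]

def Path [Fintype V] (f : V → V → ℤ) (S : Finset V) (s t : V) (p : V → V → ℤ) : Prop :=
  Skew p ∧ (∀ a b, p a b ≤ 1) ∧ (∀ a b, 0 < p a b → 0 < f a b) ∧
    (∀ a b, p a b ≠ 0 → a ∈ S ∧ b ∈ S) ∧ ∀ v, bd p v = I s v - I t v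

lemma augment [Fintype V] (f : V → V → ℤ) (_hf : Skew f) (s : V) :
    ∃ S : Finset V, s ∈ S ∧ (∀ u ∈ S, ∀ t, 0 < f u t → t ∈ S) ∧
      ∀ t ∈ S, ∃ p, Path f S s t p := by
  let P : Finset V → Prop := fun S => s ∈ S ∧ ∀ t ∈ S, ∃ p, Path f S s t p
  have hP : P {s} := by
    refine ⟨by simp, ?_⟩
    intro t ht
    rw [Finset.mem_singleton] at ht
    subst ht
    exact ⟨fun _ _ => 0, fun _ _ => by simp, by simp, by simp, by simp, by simp [bd]⟩
  obtain ⟨S, hS, hmax⟩ := Finset.exists_max_image (Finset.univ.filter P) Finset.card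
    ⟨{s}, by simpa using hP⟩
  simp only [Finset.mem_filter, Finset.mem_univ, true_and] at hS hmax
  refine ⟨S, hS.1, ?_, hS.2⟩
  intro u hu t hut
  by_contra ht
  have hne : u ≠ t := fun h => ht (h ▸ hu)
  have : P (insert t S) := by
    refine ⟨Finset.mem_insert_of_mem hS.1, ?_⟩
    intro r hr
    rw [Finset.mem_insert] at hr
    rcases hr with rfl | hr
    · obtain ⟨p, h1, h2, h3, h4, h5⟩ := hS.2 u hu
      have hz : ∀ a, p a r = 0 := fun a => by
        by_contra h; exact ht (h4 _ _ h).2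
      have hz' : ∀ a, p r a = 0 := fun a => by
        by_contra h; exact ht (h4 _ _ h).1
      have hE : ∀ a b, E u r a b = 0 ∨ (a = u ∧ b = r ∧ E u r a b = 1) ∨
          (a = r ∧ b = u ∧ E u r a b = -1) := by
        intro a b
        unfold E
        by_cases h1 : a = u ∧ b = r
        · right; left
          obtain ⟨rfl, rfl⟩ := h1
          simp [hne]
        · by_cases h2 : a = r ∧ b = u
          · right; right
            obtain ⟨rfl, rfl⟩ := h2
            simp [Ne.symm hne]
          · left; simp [h1, h2]
      refine ⟨fun a b => p a b + E u r a b, ?_, ?_, ?_, ?_, ?_⟩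
      · intro a b
        have := h1 a b; have := E_skew u r a b
        simp only; omega
      · intro a b
        have := h2 a b
        rcases hE a b with h | ⟨rfl, rfl, h⟩ | ⟨rfl, rfl, h⟩
        · simp only; omega
        · simp only [h, hz]; omega
        · simp only [h, hz']; omega
      · intro a b hab
        simp only at hab
        rcases hE a b with h | ⟨rfl, rfl, h⟩ | ⟨rfl, rfl, h⟩
        · exact h3 a b (by omega)
        · exact hut
        · rw [h, hz'] at hab; omega
      · intro a b hab
        simp only at hab
        rcases hE a b with h | ⟨rfl, rfl, h⟩ | ⟨rfl, rfl, h⟩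
        · have := h4 a b (by omega)
          exact ⟨Finset.mem_insert_of_mem this.1, Finset.mem_insert_of_mem this.2⟩
        · exact ⟨Finset.mem_insert_of_mem hu, Finset.mem_insert_self _ _⟩
        · exact ⟨Finset.mem_insert_self _ _, Finset.mem_insert_of_mem hu⟩
      · intro v
        rw [bd_add, bd_E, h5]; ring
    · obtain ⟨p, h1, h2, h3, h4, h5⟩ := hS.2 r hr
      exact ⟨p, h1, h2, h3, fun a b h => ⟨Finset.mem_insert_of_mem (h4 a b h).1,
        Finset.mem_insert_of_mem (h4 a b h).2⟩, h5⟩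
  have := hmax _ this
  rw [Finset.card_insert_of_notMem ht] at this
  omega

/-- integer flow lifts -/
lemma lift2 [Fintype V] : ∀ (n : ℕ) (f : V → V → ℤ), Skew f → (∀ v, bd f v = 0) →
    (∑ a, ∑ b, (|f a b| - 1).toNat) = n →
    ∃ g, Skew g ∧ (∀ v, bd g v = 0) ∧ (∀ a b, |g a b| < 2) ∧ ∀ a b, (2:ℤ) ∣ f a b - g a b := by
  intro n
  induction n using Nat.strong_induction_on with
  | _ n ih =>
  intro f hf hb hn
  by_cases hall : ∀ a b, |f a b| < 2
  · exact ⟨f, hf, hb, hall, by simp⟩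
  push Not at hall
  have : ∃ u v, 2 ≤ f u v := by
    obtain ⟨a, b, h⟩ := hall
    rcases le_abs.mp h with h | h
    · exact ⟨a, b, h⟩
    · exact ⟨b, a, by rw [hf b a]; exact h⟩
  obtain ⟨u, v, huv⟩ := this
  have hne : u ≠ v := by
    rintro rfl
    have := hf u u; omega
  let c := f u v
  let f0 : V → V → ℤ := fun a b => f a b - c * E u v a b
  have hf0 : Skew f0 := by
    intro a b
    have h1 := hf a b; have h2 := E_skew u v a b
    simp only [f0]; rw [h1, h2]; ring
  have hEuv : E u v u v = 1 := by simp [E, hne]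
  have hE : ∀ a b, E u v a b = 0 ∨ (a = u ∧ b = v ∧ E u v a b = 1) ∨
      (a = v ∧ b = u ∧ E u v a b = -1) := by
    intro a b
    unfold E
    by_cases h1 : a = u ∧ b = v
    · right; left
      obtain ⟨rfl, rfl⟩ := h1
      simp [hne]
    · by_cases h2 : a = v ∧ b = u
      · right; right
        obtain ⟨rfl, rfl⟩ := h2
        simp [Ne.symm hne]
      · left; simp [h1, h2]
  obtain ⟨S, hvS, hcl, hp⟩ := augment f0 hf0 v
  have huS : u ∈ S := by
    by_contra hu
    have h1 := cut f0 hf0 S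
    have h2 : ∑ a ∈ S, ∑ w ∈ Sᶜ, f0 a w ≤ 0 := by
      refine Finset.sum_nonpos fun a ha => Finset.sum_nonpos fun w hw => ?_
      by_contra h
      exact (Finset.mem_compl.mp hw) (hcl a ha w (by omega))
    have h3 : ∀ a, bd f0 a = c * I v a - c * I u a := by
      intro a
      simp only [f0]
      rw [bd_sub, bd_mul, bd_E, hb]; ring
    simp only [h3, Finset.sum_sub_distrib, ← Finset.mul_sum, I] at h1
    simp [hvS, hu] at h1
    have : c = f u v := rfl
    omega
  obtain ⟨p, h1, h2, h3, h4, h5⟩ := hp u huS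
  have hf0uv : f0 u v = 0 := by simp only [f0, hEuv]; simp [c]
  have hf0vu : f0 v u = 0 := by rw [hf0, hf0uv]; rfl
  have hpuv : p u v = 0 := by
    have := h3 u v; have := h3 v u; have := h1 u v; omega
  have hpvu : p v u = 0 := by rw [h1, hpuv]; rfl
  let q : V → V → ℤ := fun a b => p a b + E u v a b
  have hq : Skew q := by
    intro a b
    have := h1 a b; have := E_skew u v a b
    simp only [q]; omega
  have hq1 : ∀ a b, q a b ≤ 1 := by
    intro a b
    have := h2 a b
    simp only [q]
    rcases hE a b with h | ⟨rfl, rfl, h⟩ | ⟨rfl, rfl, h⟩ <;> omega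
  have hq2 : ∀ a b, 0 < q a b → 0 < f a b := by
    intro a b hab
    simp only [q] at hab
    rcases hE a b with h | ⟨rfl, rfl, h⟩ | ⟨rfl, rfl, h⟩
    · have := h3 a b (by omega)
      simpa [f0, h] using this
    · omega
    · omega
  let f1 : V → V → ℤ := fun a b => f a b - 2 * q a b
  have hf1 : Skew f1 := by
    intro a b
    have := hf a b; have := hq a b
    simp only [f1]; omega
  have hle : ∀ a b, (|f1 a b| - 1).toNat ≤ (|f a b| - 1).toNat := by
    intro a b
    have e1 := hq1 a b; have e2 := hq2 a b
    have e3 := hq1 b a; have e4 := hq2 b a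
    have e5 := hq a b; have e6 := hf a b
    simp only [f1]
    have : q a b = 0 ∨ q a b = 1 ∨ q a b = -1 := by omega
    rcases this with h | h | h
    · simp [h]
    · have := e2 (by omega)
      rw [h]
      apply Int.toNat_le_toNat
      rw [abs_of_pos this]
      have : |f a b - 2 * 1| ≤ f a b := abs_le.2 (by constructor <;> omega)
      omega
    · have := e4 (by omega)
      rw [h]
      apply Int.toNat_le_toNat
      rw [abs_of_neg (show f a b < 0 by omega)]
      have : |f a b - 2 * -1| ≤ - f a b := abs_le.2 (by constructor <;> omega)
      omega
  have hlt : (|f1 u v| - 1).toNat < (|f u v| - 1).toNat := by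
    have : q u v = 1 := by simp only [q]; omega
    simp only [f1, this]
    rw [abs_of_nonneg (show 0 ≤ f u v - 2 * 1 by omega), abs_of_pos (show 0 < f u v by omega)]
    omega
  have hsum : (∑ a, ∑ b, (|f1 a b| - 1).toNat) < n := by
    rw [← hn]
    refine Finset.sum_lt_sum (fun a _ => Finset.sum_le_sum fun b _ => hle a b)
      ⟨u, Finset.mem_univ _, ?_⟩
    exact Finset.sum_lt_sum (fun b _ => hle u b) ⟨v, Finset.mem_univ _, hlt⟩
  obtain ⟨g, g1, g2, g3, g4⟩ := ih _ hsum f1 hf1 (by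
    intro a
    simp only [f1, q]
    rw [bd_sub, bd_mul, bd_add, bd_E, h5, hb]; ring) rfl
  refine ⟨g, g1, g2, g3, ?_⟩
  intro a b
  have := g4 a b
  simp only [f1] at this
  omega

structure NZ4 [Fintype V] (H : V → V → Prop) (f : V → V → ℤ) : Prop where
  skew : Skew f
  bd : ∀ v, bd f v = 0
  supp : ∀ a b, f a b ≠ 0 ↔ H a b
  lt : ∀ a b, |f a b| < 4

lemma NZ4.of_neg [Fintype V] {H : V → V → Prop} {f : V → V → ℤ} (h : NZ4 H f) :
    NZ4 H (fun a b => - f a b) := by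
  refine ⟨?_, ?_, ?_, ?_⟩
  · intro a b; have := h.skew a b; simp only; omega
  · intro v; have := h.bd v; unfold SF.bd at *; simp [this]
  · intro a b; simpa using h.supp a b
  · intro a b; simpa using h.lt a b

lemma value_one [Fintype V] (H : V → V → Prop) (f : V → V → ℤ) (h : NZ4 H f)
    (x y : V) (hxy : H x y) : ∃ g, NZ4 H g ∧ g x y = 1 := by
  suffices hs : ∃ g, NZ4 H g ∧ (g x y = 1 ∨ g x y = -1) by
    obtain ⟨g, hg, h1 | h1⟩ := hs
    · exact ⟨g, hg, h1⟩
    · exact ⟨_, hg.of_neg, by simp [h1]⟩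
  obtain ⟨g, g1, g2, g3, g4⟩ := lift2 _ f h.skew h.bd rfl
  let ψ : V → V → ℤ := fun a b => (f a b - g a b) / 2
  have hψ : ∀ a b, 2 * ψ a b = f a b - g a b := fun a b => by
    have := g4 a b
    simp only [ψ]; omega
  have hψs : Skew ψ := by
    intro a b
    have := hψ a b; have := hψ b a; have := g1 a b; have := h.skew a b
    omega
  have hψb : ∀ v, bd ψ v = 0 := by
    intro v
    have h1 : bd (fun a b => 2 * ψ a b) v = bd (fun a b => f a b - g a b) v := by
      simp only [hψ]
    rw [bd_mul, bd_sub, g2, h.bd] at h1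
    omega
  obtain ⟨k, k1, k2, k3, k4⟩ := lift2 _ ψ hψs hψb rfl
  have key : ∀ s t : ℤ, ((s = 1 ∧ t = 2) ∨ (s = 1 ∧ t = -2) ∨ (s = 2 ∧ t = 1)) →
      NZ4 H (fun a b => s * g a b + t * k a b) := by
    intro s t hst
    refine ⟨?_, ?_, ?_, ?_⟩
    · intro a b
      simp only
      rw [g1 a b, k1 a b]; ring
    · intro v
      rw [bd_add (fun a b => s * g a b) (fun a b => t * k a b), bd_mul, bd_mul, g2, k2]; simp
    · intro a b
      rw [← h.supp]
      have e1 := g3 a b; have e2 := g4 a b; have e3 := k3 a b; have e4 := k4 a b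
      have e5 := hψ a b; have e6 := h.lt a b
      rw [abs_lt] at *
      rcases hst with ⟨rfl, rfl⟩ | ⟨rfl, rfl⟩ | ⟨rfl, rfl⟩ <;> omega
    · intro a b
      have e1 := g3 a b; have e3 := k3 a b
      rw [abs_lt] at *
      rcases hst with ⟨rfl, rfl⟩ | ⟨rfl, rfl⟩ | ⟨rfl, rfl⟩ <;> omega
  have e1 := g3 x y; have e2 := g4 x y; have e3 := k3 x y; have e4 := k4 x y
  have e5 := hψ x y; have e6 := h.lt x y
  have e7 := (h.supp x y).2 hxy
  rw [abs_lt] at *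
  by_cases hg0 : g x y = 0
  · exact ⟨_, key 2 1 (by simp), by omega⟩
  by_cases hk : g x y + 2 * k x y = 1 ∨ g x y + 2 * k x y = -1
  · exact ⟨_, key 1 2 (by simp), by omega⟩
  · exact ⟨_, key 1 (-2) (by simp), by omega⟩

/-- the switching lemma -/
lemma switch [Fintype V] (g : V → V → ℤ) (hb : ∀ v, bd g v = 0) (ε : V → ℤ) (u v : V)
    (huv : u ≠ v)
    (h : ∀ a b, ε a * g a b + ε b * g b a ≠ 0 → s(a, b) = s(u, v)) :
    ε u * g u v + ε v * g v u = 0 := by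
  let T : V → V → ℤ := fun a b => ε a * g a b + ε b * g b a
  have hT : ∑ a, ∑ b, T a b = 0 := by
    simp only [T, Finset.sum_add_distrib]
    have h1 : ∑ a, ∑ b, ε a * g a b = 0 := by
      refine Finset.sum_eq_zero fun a _ => ?_
      rw [← Finset.mul_sum]
      have := hb a
      unfold bd at this
      rw [this, mul_zero]
    have h2 : ∑ a, ∑ b, ε b * g b a = 0 := by
      rw [Finset.sum_comm]; exact h1
    rw [h1, h2]; rfl
  have hT' : ∀ a b, T a b = T u v * ((if a = u ∧ b = v then 1 else 0)
      + (if a = v ∧ b = u then 1 else 0)) := by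
    intro a b
    by_cases h0 : T a b = 0
    · by_cases h1 : a = u ∧ b = v
      · obtain ⟨rfl, rfl⟩ := h1
        rw [h0]; simp
      · by_cases h2 : a = v ∧ b = u
        · obtain ⟨rfl, rfl⟩ := h2
          have : T b a = 0 := by rw [← h0]; simp only [T]; ring
          rw [h0, this]; simp
        · simp [h0, h1, h2]
    · have := h a b h0
      rw [Sym2.eq_iff] at this
      rcases this with ⟨rfl, rfl⟩ | ⟨rfl, rfl⟩
      · simp [huv]
      · simp [huv.symm]
        simp only [T]; ring
  have hs : ∑ a, ∑ b, T a b = 2 * T u v := by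
    rw [Finset.sum_congr rfl fun a _ => Finset.sum_congr rfl fun b _ => hT' a b]
    simp only [← Finset.mul_sum, Finset.sum_add_distrib, ite_and]
    simp
    ring
  have : T u v = 0 := by omega
  exact this

lemma of_crit [Fintype V] (G : SimpleGraph V) (e : Sym2 V)
    (h : ∃ τ φ, IsNZFlow (G.deleteEdges {e}) allPos 4 τ φ) :
    ∃ f, NZ4 (fun a b => G.Adj a b ∧ s(a, b) ≠ e) f := by
  have hadj : ∀ a b, (G.deleteEdges {e}).Adj a b ↔ (G.Adj a b ∧ s(a, b) ≠ e) := by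
    intro a b; simp [SimpleGraph.deleteEdges_adj]
  generalize G.deleteEdges {e} = H at h hadj
  obtain ⟨τ, φ, ⟨⟨h1, h2⟩, h3⟩, h4⟩ := h
  refine ⟨fun a b => if H.Adj a b then τ a s(a, b) * φ s(a, b) else 0,
    ?_, h3, ?_, ?_⟩
  · intro a b
    simp only
    by_cases hab : H.Adj a b
    · rw [if_pos hab, if_pos hab.symm]
      have := h2 a b hab
      rw [Sym2.eq_swap (a := b) (b := a)]
      simp only [allPos] at this
      rcases h1 a s(a, b) with h | h <;> rcases h1 b s(a, b) with h' | h' <;>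
        rw [h, h'] at this <;> rw [h, h'] <;> simp at this ⊢
    · rw [if_neg hab, if_neg (fun h => hab h.symm)]; rfl
  · intro a b
    rw [← hadj]
    by_cases hab : H.Adj a b
    · simp only [hab, if_true, iff_true]
      have := (h4 s(a, b) hab).1
      rw [abs_pos] at this
      rcases h1 a s(a, b) with h | h <;> simp [h, this]
    · simp [hab]
  · intro a b
    by_cases hab : H.Adj a b
    · simp only [hab, if_true]
      have := (h4 s(a, b) hab).2
      rcases h1 a s(a, b) with h | h <;> simpa [h] using this
    · simp [hab]

lemma sum_neg_one {α : Type*} (s : Finset α) (f : α → ℤ) (h : ∀ a ∈ s, f a ≤ 0)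
    (hs : ∑ a ∈ s, f a = -1) : ∃ a ∈ s, f a = -1 ∧ ∀ b ∈ s, f b ≠ 0 → b = a := by
  have : ∃ a ∈ s, f a ≠ 0 := by
    by_contra hc
    push Not at hc
    rw [Finset.sum_eq_zero hc] at hs
    omega
  obtain ⟨a, ha, hfa⟩ := this
  have h1 := Finset.add_sum_erase s f ha
  have h2 : ∑ x ∈ s.erase a, f x ≤ 0 :=
    Finset.sum_nonpos fun b hb => h b (Finset.mem_of_mem_erase hb)
  have h3 := h a ha
  have h4 : ∑ x ∈ s.erase a, f x = 0 := by omega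
  refine ⟨a, ha, by omega, ?_⟩
  intro b hb hb0
  by_contra hne
  exact hb0 ((Finset.sum_eq_zero_iff_of_nonpos
    fun b hb => h b (Finset.mem_of_mem_erase hb)).1 h4 b (Finset.mem_erase.2 ⟨hne, hb⟩))

/-- the key cut claim: the set reachable from `x₂` contains both ends of `n₁` -/
lemma reach [Fintype V] (G : SimpleGraph V) (σ : Sym2 V → ℤ)
    (hσ : IsSignature G σ)
    (hcrit : ∀ e ∈ G.edgeSet, ∃ f, NZ4 (fun a b => G.Adj a b ∧ s(a, b) ≠ e) f)
    (hadm : FlowAdmissible G σ)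
    (x₁ y₁ x₂ y₂ : V) (hne : s(x₁, y₁) ≠ s(x₂, y₂))
    (hN : NegEdges G σ = {s(x₁, y₁), s(x₂, y₂)})
    (f : V → V → ℤ) (hf : NZ4 (fun a b => G.Adj a b ∧ s(a, b) ≠ s(x₁, y₁)) f)
    (hfx : f x₂ y₂ = 1) (S : Finset V) (hxS : x₂ ∈ S)
    (hcl : ∀ u ∈ S, ∀ t, 0 < f u t - E x₂ y₂ u t → t ∈ S) : x₁ ∈ S ∧ y₁ ∈ S := by
  have hA1 : G.Adj x₁ y₁ := by
    have : s(x₁, y₁) ∈ NegEdges G σ := by rw [hN]; simp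
    exact this.1
  have hA2 : G.Adj x₂ y₂ := by
    have : s(x₂, y₂) ∈ NegEdges G σ := by rw [hN]; simp
    exact this.1
  -- the signed flow
  obtain ⟨g, gb, gs, gneg, gpos⟩ : ∃ g : V → V → ℤ, (∀ v, bd g v = 0) ∧
      (∀ a b, g a b ≠ 0 ↔ G.Adj a b) ∧
      (∀ a b, G.Adj a b → (s(a, b) = s(x₁, y₁) ∨ s(a, b) = s(x₂, y₂)) → g b a = g a b) ∧
      (∀ a b, s(a, b) ≠ s(x₁, y₁) → s(a, b) ≠ s(x₂, y₂) → g b a = - g a b) := by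
    obtain ⟨k, τ, φ, ⟨⟨h1, h2⟩, h3⟩, h4⟩ := hadm
    refine ⟨fun a b => if G.Adj a b then τ a s(a, b) * φ s(a, b) else 0, h3, ?_, ?_, ?_⟩
    · intro a b
      by_cases hab : G.Adj a b
      · simp only [hab, if_true, iff_true]
        have := (h4 s(a, b) hab).1
        rw [abs_pos] at this
        rcases h1 a s(a, b) with h | h <;> simp [h, this]
      · simp [hab]
    · intro a b hab he
      simp only [hab, hab.symm, if_true]
      have : s(a, b) ∈ NegEdges G σ := by rw [hN]; simpa using he
      have h5 := h2 a b hab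
      rw [this.2] at h5
      rw [Sym2.eq_swap (a := b) (b := a)]
      rcases h1 a s(a, b) with h | h <;> rcases h1 b s(a, b) with h' | h' <;>
        rw [h, h'] at h5 <;> rw [h, h'] <;> simp at h5
    · intro a b he1 he2
      by_cases hab : G.Adj a b
      · simp only [hab, hab.symm, if_true]
        have : s(a, b) ∉ NegEdges G σ := by rw [hN]; simp [he1, he2]
        have h6 : σ s(a, b) = 1 := by
          rcases hσ s(a, b) hab with h | h
          · exact h
          · exact absurd ⟨hab, h⟩ this
        have h5 := h2 a b hab
        rw [h6] at h5
        rw [Sym2.eq_swap (a := b) (b := a)]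
        rcases h1 a s(a, b) with h | h <;> rcases h1 b s(a, b) with h' | h' <;>
          rw [h, h'] at h5 <;> rw [h, h'] <;> simp at h5 ⊢
      · have hba : ¬ G.Adj b a := fun h => hab h.symm
        simp [hab, hba]
  let f0 : V → V → ℤ := fun a b => f a b - E x₂ y₂ a b
  have hf0 : Skew f0 := by
    intro a b
    have := hf.skew a b; have := E_skew x₂ y₂ a b
    simp only [f0]; omega
  have hf0s : ∀ a b, G.Adj a b → s(a, b) ≠ s(x₁, y₁) → s(a, b) ≠ s(x₂, y₂) → f0 a b ≠ 0 := by
    intro a b h1 h2 h3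
    have h4 := (hf.supp a b).2 ⟨h1, h2⟩
    have : E x₂ y₂ a b = 0 := by
      rw [Ne, Sym2.eq_iff, not_or] at h3
      simp [E, h3.1, h3.2]
    simpa [f0, this] using h4
  have hc := cut f0 hf0 S
  have hb0 : ∀ a, bd f0 a = I y₂ a - I x₂ a := by
    intro a
    simp only [f0]
    rw [bd_sub, bd_E, hf.bd]; ring
  simp only [hb0, Finset.sum_sub_distrib, I] at hc
  rw [Finset.sum_ite_eq', Finset.sum_ite_eq', if_pos hxS, ← Finset.sum_product'] at hc
  have hnp : ∀ p ∈ S ×ˢ Sᶜ, f0 p.1 p.2 ≤ 0 := by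
    rintro ⟨a, w⟩ hp
    rw [Finset.mem_product] at hp
    by_contra h
    exact (Finset.mem_compl.mp hp.2) (hcl a hp.1 w (by simp only [f0] at h; omega))
  -- indicator
  let ι : V → ℤ := fun a => if a ∈ S then 1 else 0
  have hι1 : ∀ a, a ∈ S → ι a = 1 := fun a h => by simp [ι, h]
  have hι0 : ∀ a, a ∉ S → ι a = 0 := fun a h => by simp [ι, h]
  -- no cut of G has a single edge after deleting an edge
  have one : ∀ e ∈ G.edgeSet, ∀ u v, G.Adj u v → s(u, v) ≠ e → ¬ (u ∈ S ↔ v ∈ S) →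
      ∃ a b, G.Adj a b ∧ a ∈ S ∧ b ∉ S ∧ s(a, b) ≠ e ∧ s(a, b) ≠ s(u, v) := by
    intro e he u v huv hue hS
    by_contra hcon
    push Not at hcon
    obtain ⟨h, hh⟩ := hcrit e he
    have hz := switch h hh.bd ι u v huv.ne (by
      intro a b hab
      rw [hh.skew b a] at hab
      have hab' : (ι a - ι b) * h a b ≠ 0 := by
        intro h0; apply hab; rw [← h0]; ring
      have h0 := (hh.supp a b).1 (right_ne_zero_of_mul hab')
      have h1 := left_ne_zero_of_mul hab'
      by_cases ha : a ∈ S <;> by_cases hb : b ∈ S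
      · rw [hι1 a ha, hι1 b hb] at h1; simp at h1
      · exact hcon a b h0.1 ha hb h0.2
      · have := hcon b a h0.1.symm hb ha (by rw [Sym2.eq_swap]; exact h0.2)
        rw [Sym2.eq_swap]; exact this
      · rw [hι0 a ha, hι0 b hb] at h1; simp at h1)
    have h0 := (hh.supp u v).2 ⟨huv, hue⟩
    rw [hh.skew v u] at hz
    by_cases ha : u ∈ S <;> by_cases hb : v ∈ S
    · simp [ha, hb] at hS
    · rw [hι1 u ha, hι0 v hb] at hz; simp at hz; exact h0 hz
    · rw [hι0 u ha, hι1 v hb] at hz; simp at hz; exact h0 hz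
    · simp [ha, hb] at hS
  by_cases hy : y₂ ∈ S
  · rw [if_pos hy, sub_self] at hc
    have hz := (Finset.sum_eq_zero_iff_of_nonpos hnp).1 hc.symm
    have hcross : ∀ a b, G.Adj a b → a ∈ S → b ∉ S → s(a, b) = s(x₁, y₁) := by
      intro a b hab ha hb
      by_contra h1
      refine hf0s a b hab h1 ?_ (hz (a, b) (by simp [ha, hb]))
      intro h2
      rw [Sym2.eq_iff] at h2
      rcases h2 with ⟨rfl, rfl⟩ | ⟨rfl, rfl⟩
      · exact hb hy
      · exact hb hxS
    by_cases hx : (x₁ ∈ S ↔ y₁ ∈ S)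
    · by_contra hcon
      have hx1 : x₁ ∉ S := by tauto
      have hy1 : y₁ ∉ S := by tauto
      have hcross' : ∀ a b, G.Adj a b → a ∈ S → b ∈ S := by
        intro a b hab ha
        by_contra hb
        have := hcross a b hab ha hb
        rw [Sym2.eq_iff] at this
        rcases this with ⟨rfl, rfl⟩ | ⟨rfl, rfl⟩
        · exact hx1 ha
        · exact hy1 ha
      have hz := switch g gb ι x₂ y₂ hA2.ne (by
        intro a b hab
        by_contra h2
        by_cases hadj : G.Adj a b
        · by_cases h1 : s(a, b) = s(x₁, y₁)
          · have : ι a = 0 ∧ ι b = 0 := by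
              rw [Sym2.eq_iff] at h1
              rcases h1 with ⟨rfl, rfl⟩ | ⟨rfl, rfl⟩
              · exact ⟨hι0 _ hx1, hι0 _ hy1⟩
              · exact ⟨hι0 _ hy1, hι0 _ hx1⟩
            rw [this.1, this.2] at hab; simp at hab
          · rw [gpos a b h1 h2] at hab
            have : ι a = ι b := by
              by_cases ha : a ∈ S
              · rw [hι1 a ha, hι1 b (hcross' a b hadj ha)]
              · rw [hι0 a ha, hι0 b (fun hb => ha (hcross' b a hadj.symm hb))]
            apply hab; rw [this]; ring
        · have e1 : g a b = 0 := by by_contra h; exact hadj ((gs a b).1 h)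
          have e2 : g b a = 0 := by by_contra h; exact hadj ((gs b a).1 h).symm
          rw [e1, e2] at hab; simp at hab)
      rw [gneg x₂ y₂ hA2 (Or.inr rfl), hι1 _ hxS, hι1 _ hy] at hz
      have := (gs x₂ y₂).2 hA2
      omega
    · obtain ⟨a, b, hab, ha, hb, -, h1⟩ := one _ hA2 x₁ y₁ hA1 hne hx
      exact absurd (hcross a b hab ha hb) h1
  · rw [if_neg hy] at hc
    obtain ⟨⟨a0, w0⟩, hm, hv, huniq⟩ := sum_neg_one _ _ hnp (by rw [← hc]; rfl)
    simp only at hv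
    have ha0 : a0 ∈ S := (Finset.mem_product.1 hm).1
    have hw0 : w0 ∉ S := Finset.mem_compl.1 (Finset.mem_product.1 hm).2
    have hcross : ∀ a b, G.Adj a b → a ∈ S → b ∉ S → s(a, b) = s(x₁, y₁) ∨
        s(a, b) = s(x₂, y₂) ∨ (a = a0 ∧ b = w0) := by
      intro a b hab ha hb
      by_contra h
      push Not at h
      have := huniq (a, b) (by simp [ha, hb]) (hf0s a b hab h.1 h.2.1)
      rw [Prod.mk.injEq] at this
      exact h.2.2 this.1 this.2
    have hE0 : f0 x₂ y₂ = 0 := by simp [f0, hfx, E, hA2.ne]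
    have hn2 : s(a0, w0) ≠ s(x₂, y₂) := by
      intro h
      rw [Sym2.eq_iff] at h
      rcases h with ⟨rfl, rfl⟩ | ⟨rfl, rfl⟩
      · omega
      · exact hy ha0
    have hE1 : E x₂ y₂ a0 w0 = 0 := by
      have h3 := hn2
      rw [Ne, Sym2.eq_iff, not_or] at h3
      simp [E, h3.1, h3.2]
    have hadj0 := (hf.supp a0 w0).1 (by simp only [f0, hE1] at hv; omega)
    by_cases hx : (x₁ ∈ S ↔ y₁ ∈ S)
    · by_contra hcon
      have hx1 : x₁ ∉ S := by tauto
      have hy1 : y₁ ∉ S := by tauto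
      obtain ⟨a, b, hab, ha, hb, h1, h2⟩ := one _ hadj0.1 x₂ y₂ hA2 hn2.symm (by tauto)
      rcases hcross a b hab ha hb with h | h | ⟨rfl, rfl⟩
      · rw [Sym2.eq_iff] at h
        rcases h with ⟨rfl, rfl⟩ | ⟨rfl, rfl⟩
        · exact hx1 ha
        · exact hy1 ha
      · exact h2 h
      · exact h1 rfl
    · exfalso
      let ε : V → ℤ := fun a => if a ∈ S then 1 else -1
      have hε1 : ∀ a, a ∈ S → ε a = 1 := fun a h => by simp [ε, h]
      have hε0 : ∀ a, a ∉ S → ε a = -1 := fun a h => by simp [ε, h]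
      have hn : ∀ a b, (s(a, b) = s(x₁, y₁) ∨ s(a, b) = s(x₂, y₂)) → ε a + ε b = 0 := by
        have k1 : ε x₁ + ε y₁ = 0 := by
          by_cases ha : x₁ ∈ S
          · rw [hε1 _ ha, hε0 y₁ (by tauto)]; rfl
          · rw [hε0 _ ha, hε1 y₁ (by tauto)]; rfl
        have k2 : ε x₂ + ε y₂ = 0 := by
          rw [hε1 _ hxS, hε0 _ hy]; rfl
        intro a b h
        rw [Sym2.eq_iff, Sym2.eq_iff] at h
        rcases h with (⟨rfl, rfl⟩ | ⟨rfl, rfl⟩) | (⟨rfl, rfl⟩ | ⟨rfl, rfl⟩)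
        · exact k1
        · rw [add_comm]; exact k1
        · exact k2
        · rw [add_comm]; exact k2
      have hz := switch g gb ε a0 w0 hadj0.1.ne (by
        intro a b hab
        by_contra h0
        by_cases hadj : G.Adj a b
        · by_cases h1 : s(a, b) = s(x₁, y₁) ∨ s(a, b) = s(x₂, y₂)
          · rw [gneg a b hadj h1, ← add_mul, hn a b h1] at hab
            simp at hab
          · have h1' := not_or.1 h1
            rw [gpos a b h1'.1 h1'.2] at hab
            have : ε a = ε b := by
              by_cases ha : a ∈ S <;> by_cases hb : b ∈ S
              · rw [hε1 a ha, hε1 b hb]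
              · rcases hcross a b hadj ha hb with h | h | ⟨rfl, rfl⟩
                · exact absurd h h1'.1
                · exact absurd h h1'.2
                · exact absurd rfl h0
              · rw [Sym2.eq_swap] at h0 h1'
                rcases hcross b a hadj.symm hb ha with h | h | ⟨rfl, rfl⟩
                · exact absurd h h1'.1
                · exact absurd h (by first | exact h1'.2 | (rw [Sym2.eq_swap]; exact h1'.2))
                · exact absurd rfl h0
              · rw [hε0 a ha, hε0 b hb]
            apply hab; rw [this]; ring
        · have e1 : g a b = 0 := by by_contra h; exact hadj ((gs a b).1 h)
          have e2 : g b a = 0 := by by_contra h; exact hadj ((gs b a).1 h).symm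
          rw [e1, e2] at hab; simp at hab)
      rw [gpos a0 w0 hadj0.2 hn2, hε1 _ ha0, hε0 _ hw0] at hz
      have := (gs a0 w0).2 hadj0.1
      omega

end SF

open SF in
/-- A flow-admissible signed cubic graph whose underlying graph is a
critical snark, with exactly two negative edges, admits a nowhere-zero 6-flow with
value 1 on both negative edges. -/
theorem stmt14 [Fintype V] (G : SimpleGraph V) (σ : Sym2 V → ℤ)
    (hσ : IsSignature G σ) (hcubic : CubicGraph G) (hbl : Bridgeless G)
    (hsnark : ¬ ∃ c : Sym2 V → Fin 3, IsProper3EdgeColoring G c)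
    (hcrit : ∀ e ∈ G.edgeSet,
      ∃ τ φ, IsNZFlow (G.deleteEdges {e}) allPos 4 τ φ)
    (hadm : FlowAdmissible G σ)
    (n₁ n₂ : Sym2 V) (hne : n₁ ≠ n₂) (hN : NegEdges G σ = {n₁, n₂}) :
    ∃ τ φ, IsNZFlow G σ 6 τ φ ∧ φ n₁ = 1 ∧ φ n₂ = 1 := by
  induction n₁ using Sym2.ind with | _ x₁ y₁ =>
  induction n₂ using Sym2.ind with | _ x₂ y₂ =>
  have hm1 : s(x₁, y₁) ∈ NegEdges G σ := by rw [hN]; simp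
  have hm2 : s(x₂, y₂) ∈ NegEdges G σ := by rw [hN]; simp
  have hA1 : G.Adj x₁ y₁ := hm1.1
  have hA2 : G.Adj x₂ y₂ := hm2.1
  obtain ⟨f', hf'⟩ := of_crit G _ (hcrit _ hm1.1)
  obtain ⟨f, hf, hfx⟩ := value_one _ f' hf' x₂ y₂ ⟨hA2, hne.symm⟩
  have hE2 : ∀ a b, s(a, b) ≠ s(x₂, y₂) → E x₂ y₂ a b = 0 := by
    intro a b h3
    rw [Ne, Sym2.eq_iff, not_or] at h3
    simp [E, h3.1, h3.2]
  let f0 : V → V → ℤ := fun a b => f a b - E x₂ y₂ a b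
  have hf0 : Skew f0 := by
    intro a b
    have := hf.skew a b; have := E_skew x₂ y₂ a b
    simp only [f0]; omega
  have hf0n : f0 x₂ y₂ = 0 := by simp [f0, hfx, E, hA2.ne]
  have hf0s : ∀ a b, f0 a b ≠ 0 ↔ G.Adj a b ∧ s(a, b) ≠ s(x₁, y₁) ∧ s(a, b) ≠ s(x₂, y₂) := by
    intro a b
    by_cases h : s(a, b) = s(x₂, y₂)
    · have : f0 a b = 0 := by
        rw [Sym2.eq_iff] at h
        rcases h with ⟨rfl, rfl⟩ | ⟨rfl, rfl⟩
        · exact hf0n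
        · rw [hf0, hf0n]; rfl
      simp [this, h]
    · have := hf.supp a b
      simp only [f0, hE2 a b h, sub_zero]
      tauto
  have hf0lt : ∀ a b, |f0 a b| < 4 := by
    intro a b
    by_cases h : f0 a b = 0
    · simp [h]
    · have h' := ((hf0s a b).1 h).2.2
      have := hf.lt a b
      simpa [f0, hE2 a b h'] using this
  obtain ⟨S, hxS, hcl, hp⟩ := augment f0 hf0 x₂
  obtain ⟨hx1, hy1⟩ := reach G σ hσ (fun e he => of_crit G e (hcrit e he)) hadm x₁ y₁ x₂ y₂ hne hN
    f hf hfx S hxS hcl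
  obtain ⟨p, p1, p2, p3, -, p5⟩ := hp x₁ hx1
  obtain ⟨q, q1, q2, q3, -, q5⟩ := hp y₁ hy1
  let F : V → V → ℤ := fun a b => f0 a b + p a b + q a b
  have hFs : Skew F := by
    intro a b
    have := hf0 a b; have := p1 a b; have := q1 a b
    simp only [F]; omega
  have hFb : ∀ v, bd F v = I x₂ v + I y₂ v - I x₁ v - I y₁ v := by
    intro v
    have : bd F v = bd f v - bd (E x₂ y₂) v + bd p v + bd q v := by
      simp [bd, F, f0, Finset.sum_add_distrib, Finset.sum_sub_distrib]
    rw [this, hf.bd, bd_E, p5, q5]; ring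
  have hF : ∀ a b, (f0 a b = 0 → F a b = 0) ∧ (f0 a b ≠ 0 → F a b ≠ 0) ∧ |F a b| < 6 := by
    intro a b
    have e1 := hf0 a b; have e2 := p1 a b; have e3 := q1 a b
    have e4 := p2 a b; have e5 := p2 b a; have e6 := q2 a b; have e7 := q2 b a
    have e8 := p3 a b; have e9 := p3 b a; have e10 := q3 a b; have e11 := q3 b a
    have e12 := hf0lt a b
    rw [abs_lt] at *
    simp only [F]
    refine ⟨?_, ?_, ?_, ?_⟩ <;> omega
  have hFn : ∀ a b, F a b ≠ 0 ↔ G.Adj a b ∧ s(a, b) ≠ s(x₁, y₁) ∧ s(a, b) ≠ s(x₂, y₂) := by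
    intro a b
    rw [← hf0s]
    have := hF a b
    tauto
  let φ : Sym2 V → ℤ := fun e => if e = s(x₁, y₁) then 1 else if e = s(x₂, y₂) then 1 else
    Sym2.lift ⟨fun a b => |F a b|, fun a b => by
      show |F a b| = |F b a|
      rw [hFs a b, abs_neg]⟩ e
  let τ : V → Sym2 V → ℤ := fun v e => if e = s(x₁, y₁) then 1 else if e = s(x₂, y₂) then -1 else
    if ∃ w, e = s(v, w) ∧ 0 < F v w then 1 else -1
  have hφ : ∀ a b, s(a, b) ≠ s(x₁, y₁) → s(a, b) ≠ s(x₂, y₂) → φ s(a, b) = |F a b| := by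
    intro a b h1 h2
    simp only [φ, if_neg h1, if_neg h2, Sym2.lift_mk]
  have hτ : ∀ a b, s(a, b) ≠ s(x₁, y₁) → s(a, b) ≠ s(x₂, y₂) →
      τ a s(a, b) = if 0 < F a b then 1 else -1 := by
    intro a b h1 h2
    simp only [τ, if_neg h1, if_neg h2]
    congr 1
    apply propext
    constructor
    · rintro ⟨w, hw, h⟩
      rw [Sym2.congr_right] at hw
      rw [hw]; exact h
    · intro h; exact ⟨b, rfl, h⟩
  have hφ1 : φ s(x₁, y₁) = 1 := by simp [φ]
  have hφ2 : φ s(x₂, y₂) = 1 := by simp [φ]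
  have hτ1 : ∀ v, τ v s(x₁, y₁) = 1 := fun v => by simp [τ]
  have hτ2 : ∀ v, τ v s(x₂, y₂) = -1 := fun v => by simp [τ, hne.symm]
  refine ⟨τ, φ, ⟨⟨⟨?_, ?_⟩, ?_⟩, ?_⟩, hφ1, hφ2⟩
  · intro v e
    simp only [τ]
    split_ifs <;> simp
  · intro u v huv
    by_cases h1 : s(u, v) = s(x₁, y₁)
    · rw [h1, hτ1, hτ1, hm1.2]; rfl
    by_cases h2 : s(u, v) = s(x₂, y₂)
    · rw [h2, hτ2, hτ2, hm2.2]; rfl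
    have hpos : σ s(u, v) = 1 := by
      rcases hσ s(u, v) huv with h | h
      · exact h
      · have : s(u, v) ∈ NegEdges G σ := ⟨huv, h⟩
        rw [hN] at this
        simp only [Set.mem_insert_iff, Set.mem_singleton_iff] at this
        tauto
    have e1 := hτ u v h1 h2
    have e2 := hτ v u (by rw [Sym2.eq_swap]; exact h1) (by rw [Sym2.eq_swap]; exact h2)
    rw [Sym2.eq_swap] at e2
    rw [e1, e2, hpos]
    have e3 := hFs u v
    have e4 := (hFn u v).2 ⟨huv, h1, h2⟩
    by_cases h : 0 < F u v
    · have : ¬ 0 < F v u := by omega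
      simp [h, this]
    · have : 0 < F v u := by omega
      simp [h, this]
  · intro v
    have hsum : ∀ w, (if G.Adj v w then τ v s(v, w) * φ s(v, w) else 0) =
        F v w + ((if v = x₁ ∧ w = y₁ then 1 else 0) + (if v = y₁ ∧ w = x₁ then 1 else 0))
        - ((if v = x₂ ∧ w = y₂ then 1 else 0) + (if v = y₂ ∧ w = x₂ then 1 else 0)) := by
      have hi : ∀ a b x y : V, x ≠ y → ((if a = x ∧ b = y then (1:ℤ) else 0) +
          (if a = y ∧ b = x then 1 else 0)) = if s(a, b) = s(x, y) then 1 else 0 := by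
        intro a b x y hxy
        simp only [Sym2.eq_iff]
        by_cases h1 : a = x ∧ b = y
        · obtain ⟨rfl, rfl⟩ := h1
          simp [hxy]
        · simp [h1]
      intro w
      rw [hi _ _ _ _ hA1.ne, hi _ _ _ _ hA2.ne]
      have hfn := hFn v w
      by_cases h1 : s(v, w) = s(x₁, y₁)
      · have hadj : G.Adj v w := by
          rw [← SimpleGraph.mem_edgeSet, h1]; exact hA1
        have h0 : F v w = 0 := by tauto
        rw [if_pos hadj, h0, h1, hτ1, hφ1, if_neg hne]; simp
      by_cases h2 : s(v, w) = s(x₂, y₂)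
      · have hadj : G.Adj v w := by
          rw [← SimpleGraph.mem_edgeSet, h2]; exact hA2
        have h0 : F v w = 0 := by tauto
        rw [if_pos hadj, h0, h2, hτ2, hφ2, if_neg hne.symm]; simp
      rw [if_neg h1, if_neg h2]
      by_cases hadj : G.Adj v w
      · rw [if_pos hadj, hτ v w h1 h2, hφ v w h1 h2]
        by_cases h : 0 < F v w
        · rw [if_pos h, abs_of_pos h]; ring
        · rw [if_neg h, abs_of_nonpos (by omega)]; ring
      · have h0 : F v w = 0 := by tauto
        rw [if_neg hadj, h0]; rfl
    rw [Finset.sum_congr rfl fun w _ => hsum w]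
    have hb := hFb v
    unfold bd I at hb
    clear_value F
    rw [Finset.sum_sub_distrib, Finset.sum_add_distrib, Finset.sum_add_distrib,
      Finset.sum_add_distrib, hb]
    have hs : ∀ x y : V, ∑ w : V, (if v = x ∧ w = y then (1:ℤ) else 0) = if v = x then 1 else 0 := by
      intro x y
      by_cases h : v = x <;> simp [h]
    rw [hs, hs, hs, hs]
    ring
  · intro e he
    induction e using Sym2.ind with | _ a b =>
    by_cases h1 : s(a, b) = s(x₁, y₁)
    · rw [h1, hφ1]; norm_num
    by_cases h2 : s(a, b) = s(x₂, y₂)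
    · rw [h2, hφ2]; norm_num
    rw [hφ a b h1 h2, abs_abs]
    exact ⟨abs_pos.2 ((hFn a b).2 ⟨he, h1, h2⟩), (hF a b).2.2⟩
end
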